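/- For a Z-interference channel satisfying Conditions 1 and 2, with side information V1 = h1(U1) (a deterministic letterwise function of the interfering source U1) available at Receiver 2 and no side information at Receiver 1: the sources U1 and U2 can be transmitted reliably if there exists a finite-valued auxiliary random variable W with distribution p(w)p(x1|w), joint law p(u1,v1,u2,w,x1,x2,y1,y2) = p(u1,v1) p(u2) p(w) p(x1|w) p*(x2) p(y1|x1) p(y2|x1,x2), such that H(U1) < I(X1;Y1), H(U2) < I(W,X2;Y2), and H(U1|V1) + H(U2) < I(W,X2;Y2) + I(X1;Y1|W). Conversely, if the sources can be transmitted reliably, then there exists such a W for which the corresponding non-strict inequalities hold. -/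

import Mathlib

open Finset Real Filter
open scoped Classical

namespace Paper

/-- `p` is a probability mass function on the finite type `α`. -/
def IsPMF {α : Type*} [Fintype α] (p : α → ℝ) : Prop :=
  (∀ a, 0 ≤ p a) ∧ ∑ a, p a = 1

/-- `k` is a transition probability (channel) from `α` to the finite type `β`. -/
def IsKernel {α β : Type*} [Fintype β] (k : α → β → ℝ) : Prop :=
  ∀ a, IsPMF (k a)

variable {Ω : Type*} [Fintype Ω]

/-- Probability that the random variable `X` takes the value `x`, under the weight `p`. -/
noncomputable def pr {α : Type*} (p : Ω → ℝ) (X : Ω → α) (x : α) : ℝ :=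
  ∑ ω, if X ω = x then p ω else 0

/-- Shannon entropy (base 2) of the random variable `X` under `p`. -/
noncomputable def ent {α : Type*} [Fintype α] (p : Ω → ℝ) (X : Ω → α) : ℝ :=
  ∑ x, -(pr p X x * Real.logb 2 (pr p X x))

/-- Conditional entropy `H(X|Y) = H(X,Y) - H(Y)`. -/
noncomputable def condEnt {α β : Type*} [Fintype α] [Fintype β]
    (p : Ω → ℝ) (X : Ω → α) (Y : Ω → β) : ℝ :=
  ent p (fun ω => (X ω, Y ω)) - ent p Y

/-- Mutual information `I(X;Y) = H(X) + H(Y) - H(X,Y)`. -/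
noncomputable def mi {α β : Type*} [Fintype α] [Fintype β]
    (p : Ω → ℝ) (X : Ω → α) (Y : Ω → β) : ℝ :=
  ent p X + ent p Y - ent p (fun ω => (X ω, Y ω))

/-- Conditional mutual information `I(X;Y|Z) = H(X,Z) + H(Y,Z) - H(X,Y,Z) - H(Z)`. -/
noncomputable def cmi {α β γ : Type*} [Fintype α] [Fintype β] [Fintype γ]
    (p : Ω → ℝ) (X : Ω → α) (Y : Ω → β) (Z : Ω → γ) : ℝ :=
  ent p (fun ω => (X ω, Z ω)) + ent p (fun ω => (Y ω, Z ω))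
    - ent p (fun ω => (X ω, Y ω, Z ω)) - ent p Z

/-- The Markov chain `A → B → C`: `A` and `C` are conditionally independent given `B`. -/
def MarkovChain {α β γ : Type*} (p : Ω → ℝ) (A : Ω → α) (B : Ω → β) (C : Ω → γ) : Prop :=
  ∀ a b c, pr p (fun ω => (A ω, B ω, C ω)) (a, b, c) * pr p B b =
    pr p (fun ω => (A ω, B ω)) (a, b) * pr p (fun ω => (B ω, C ω)) (b, c)

section ZChannel

variable {X1 X2 Y1 Y2 : Type} [Fintype X1] [Fintype X2] [Fintype Y1] [Fintype Y2]

/-- `H(Y_2^n | X_2^n = x_2^n)`: the output entropy of the `n`-letter channel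
`p(y_2^n|x_1^n, x_2^n)` when `X_1^n ~ μ` and the second input is fixed to `x_2^n`. -/
noncomputable def entY2n (ch2 : X1 × X2 → Y2 → ℝ) (n : ℕ)
    (μ : (Fin n → X1) → ℝ) (x2 : Fin n → X2) : ℝ :=
  ent (fun w : (Fin n → X1) × (Fin n → Y2) => μ w.1 * ∏ i, ch2 (w.1 i, x2 i) (w.2 i)) Prod.snd

/-- Condition 1: for every `n` and every input distribution `p(x_1^n)`,
`H(Y_2^n|X_2^n = x_2^n)` does not depend on `x_2^n`. -/
def Cond1 (ch2 : X1 × X2 → Y2 → ℝ) : Prop :=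
  ∀ (n : ℕ) (μ : (Fin n → X1) → ℝ), IsPMF μ →
    ∀ x2 x2' : Fin n → X2, entY2n ch2 n μ x2 = entY2n ch2 n μ x2'

/-- The single-letter output entropy `H(Y_2)` for independent inputs `p(x_1) p(x_2)`. -/
noncomputable def entY2 (ch2 : X1 × X2 → Y2 → ℝ) (p1 : X1 → ℝ) (p2 : X2 → ℝ) : ℝ :=
  ent (fun w : X1 × X2 × Y2 => p1 w.1 * p2 w.2.1 * ch2 (w.1, w.2.1) w.2.2) (fun w => w.2.2)

/-- `τ = max_{p(x_1) p(x_2)} H(Y_2)`. -/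
noncomputable def tau (ch2 : X1 × X2 → Y2 → ℝ) : ℝ :=
  sSup { t | ∃ p1 p2, IsPMF p1 ∧ IsPMF p2 ∧ t = entY2 ch2 p1 p2 }

/-- Condition 2, with witness `p*`: for every `p(x_1)`, the output entropy `H(Y_2)` under
`p(x_1) p*(x_2)` equals `τ`. -/
def Cond2 (ch2 : X1 × X2 → Y2 → ℝ) (pstar : X2 → ℝ) : Prop :=
  IsPMF pstar ∧ ∀ p1 : X1 → ℝ, IsPMF p1 → entY2 ch2 p1 pstar = tau ch2

end ZChannel

/-! ## Statement 6: necessary and sufficient conditions for reliable transmission over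
a class of Z-interference channels with deterministic side information `V1 = h1(U1)`
at Receiver 2. -/

section Stmt6

variable {U1 V1 U2 X1 X2 Y1 Y2 : Type}
  [Fintype U1] [Fintype V1] [Fintype U2]
  [Fintype X1] [Fintype X2] [Fintype Y1] [Fintype Y2]

/-- Error probability of a length-`n` joint source-channel code for the Z-interference
channel, where Receiver 2 has side information `V_1^n = h1(U_1^n)` (letterwise) and
Receiver 1 has no side information. -/
noncomputable def PerrZDet (ch1 : X1 → Y1 → ℝ) (ch2 : X1 × X2 → Y2 → ℝ)
    (pU1 : U1 → ℝ) (h1 : U1 → V1) (pU2 : U2 → ℝ) (n : ℕ)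
    (f1 : (Fin n → U1) → Fin n → X1) (f2 : (Fin n → U2) → Fin n → X2)
    (g1 : (Fin n → Y1) → Fin n → U1)
    (g2 : (Fin n → Y2) → (Fin n → V1) → Fin n → U2) : ℝ :=
  ∑ u1 : Fin n → U1, ∑ u2 : Fin n → U2, ∑ y1 : Fin n → Y1, ∑ y2 : Fin n → Y2,
    (∏ i, pU1 (u1 i)) * (∏ i, pU2 (u2 i)) *
    (∏ i, ch1 (f1 u1 i) (y1 i)) * (∏ i, ch2 (f1 u1 i, f2 u2 i) (y2 i)) *
    (if g1 y1 = u1 ∧ g2 y2 (fun i => h1 (u1 i)) = u2 then 0 else 1)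

/-- Reliable transmission for the Z-interference channel with deterministic side
information `V1 = h1(U1)` at Receiver 2. -/
def ReliableZDet (ch1 : X1 → Y1 → ℝ) (ch2 : X1 × X2 → Y2 → ℝ)
    (pU1 : U1 → ℝ) (h1 : U1 → V1) (pU2 : U2 → ℝ) : Prop :=
  ∃ (f1 : ∀ n : ℕ, (Fin n → U1) → Fin n → X1)
    (f2 : ∀ n : ℕ, (Fin n → U2) → Fin n → X2)
    (g1 : ∀ n : ℕ, (Fin n → Y1) → Fin n → U1)
    (g2 : ∀ n : ℕ, (Fin n → Y2) → (Fin n → V1) → Fin n → U2),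
    Tendsto (fun n => PerrZDet ch1 ch2 pU1 h1 pU2 n (f1 n) (f2 n) (g1 n) (g2 n))
      atTop (nhds 0)

/-- The single-letter joint law `p(w) p(x_1|w) p*(x_2) p(y_1|x_1) p(y_2|x_1,x_2)`. -/
noncomputable def jointZ (m : ℕ) (pW : Fin m → ℝ) (k : Fin m → X1 → ℝ) (p2 : X2 → ℝ)
    (ch1 : X1 → Y1 → ℝ) (ch2 : X1 × X2 → Y2 → ℝ) :
    Fin m × X1 × X2 × Y1 × Y2 → ℝ :=
  fun (w, x1, x2, y1, y2) => pW w * k w x1 * p2 x2 * ch1 x1 y1 * ch2 (x1, x2) y2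

section PieceP1

noncomputable def Hn {α : Type*} [Fintype α] (q : α → ℝ) : ℝ := ∑ a, Real.negMulLog (q a)

noncomputable def outp {α β : Type*} [Fintype α] (p : α → ℝ) (c : α → β → ℝ) : β → ℝ :=
  fun b => ∑ a, p a * c a b

lemma ent_eq {Ω α : Type*} [Fintype Ω] [Fintype α] (p : Ω → ℝ) (X : Ω → α) :
    ent p X = Hn (pr p X) / Real.log 2 := by
  unfold ent Hn
  rw [Finset.sum_div]
  refine Finset.sum_congr rfl fun x _ => ?_
  rw [Real.negMulLog, Real.logb]; ring

lemma Hn_joint {α β : Type*} [Fintype α] [Fintype β] (p : α → ℝ) (k : α → β → ℝ)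
    (hk : ∀ a, ∑ b, k a b = 1) :
    Hn (fun x : α × β => p x.1 * k x.1 x.2) = Hn p + ∑ a, p a * Hn (k a) := by
  unfold Hn
  rw [Fintype.sum_prod_type, ← Finset.sum_add_distrib]
  refine Finset.sum_congr rfl fun a _ => ?_
  simp only [Real.negMulLog_mul]
  rw [Finset.sum_add_distrib, ← Finset.sum_mul, hk, Finset.mul_sum]
  ring

lemma Hn_equiv {α β : Type*} [Fintype α] [Fintype β] (e : α ≃ β) (q : β → ℝ) :
    Hn (fun a => q (e a)) = Hn q := by
  unfold Hn
  exact Equiv.sum_comp e (fun b => Real.negMulLog (q b))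

lemma sum_pi {ι J : Type*} [Fintype ι] [DecidableEq ι] [Fintype J] (g : ι → J → ℝ) :
    ∑ F : ι → J, ∏ i, g i (F i) = ∏ i, ∑ j, g i j := by
  rw [Finset.prod_univ_sum, Fintype.piFinset_univ]

lemma IsPMF.pi {ι J : Type*} [Fintype ι] [DecidableEq ι] [Fintype J] {p : ι → J → ℝ}
    (hp : ∀ i, IsPMF (p i)) : IsPMF (fun F : ι → J => ∏ i, p i (F i)) := by
  refine ⟨fun F => Finset.prod_nonneg fun i _ => (hp i).1 _, ?_⟩
  rw [sum_pi]
  exact Finset.prod_eq_one fun i _ => (hp i).2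

lemma IsPMF.out {α β : Type*} [Fintype α] [Fintype β] {p : α → ℝ} {c : α → β → ℝ}
    (hp : IsPMF p) (hc : IsKernel c) : IsPMF (outp p c) := by
  refine ⟨fun b => Finset.sum_nonneg fun a _ => mul_nonneg (hp.1 a) ((hc a).1 b), ?_⟩
  unfold outp
  rw [Finset.sum_comm]
  simp only [← Finset.mul_sum, (hc _).2, mul_one, hp.2]

lemma IsPMF.joint {α β : Type*} [Fintype α] [Fintype β] {p : α → ℝ} {c : α → β → ℝ}
    (hp : IsPMF p) (hc : IsKernel c) : IsPMF (fun x : α × β => p x.1 * c x.1 x.2) := by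
  refine ⟨fun b => mul_nonneg (hp.1 _) ((hc _).1 _), ?_⟩
  rw [Fintype.sum_prod_type]
  simp only [← Finset.mul_sum, (hc _).2, mul_one, hp.2]

lemma IsPMF.nonempty {α : Type*} [Fintype α] {p : α → ℝ} (hp : IsPMF p) : Nonempty α := by
  by_contra h
  rw [not_nonempty_iff] at h
  have := hp.2
  simp at this

lemma isPMF_dirac {α : Type*} [Fintype α] (a : α) :
    IsPMF (fun x : α => if x = a then (1 : ℝ) else 0) := by
  refine ⟨fun x => by dsimp only; split_ifs <;> norm_num, by simp⟩

/-- disintegration -/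
lemma disint {α β : Type*} [Fintype β] [Nonempty β] (j : α → β → ℝ)
    (hj : ∀ a b, 0 ≤ j a b) :
    ∃ κ : α → β → ℝ, IsKernel κ ∧ ∀ a b, j a b = (∑ b', j a b') * κ a b := by
  obtain ⟨b0⟩ := ‹Nonempty β›
  refine ⟨fun a b => if (∑ b', j a b') = 0 then (if b = b0 then 1 else 0)
    else j a b / ∑ b', j a b', ?_, ?_⟩
  · intro a
    by_cases h : (∑ b', j a b') = 0
    · simpa [h] using isPMF_dirac b0
    · simp only [h, if_false]
      refine ⟨fun b => div_nonneg (hj a b) (Finset.sum_nonneg fun _ _ => hj _ _), ?_⟩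
      rw [← Finset.sum_div, div_self h]
  · intro a b
    by_cases h : (∑ b', j a b') = 0
    · simp only [h, zero_mul]
      exact (Finset.sum_eq_zero_iff_of_nonneg fun _ _ => hj _ _).1 h b (Finset.mem_univ _)
    · simp only [h, if_false]
      field_simp

lemma sum_pi_one {ι J : Type*} [Fintype ι] [DecidableEq ι] [Fintype J] (p : ι → J → ℝ)
    (hp : ∀ i, ∑ j, p i j = 1) (i0 : ι) (φ : J → ℝ) :
    ∑ F : ι → J, (∏ i, p i (F i)) * φ (F i0) = ∑ j, p i0 j * φ j := by
  have h : ∀ F : ι → J, (∏ i, p i (F i)) * φ (F i0)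
      = ∏ i, (p i (F i) * if i = i0 then φ (F i) else 1) := by
    intro F
    rw [Finset.prod_mul_distrib]
    simp
  simp only [h]
  rw [sum_pi (fun i j => p i j * if i = i0 then φ j else 1), Fintype.prod_eq_single i0]
  · simp
  · intro i hi
    simp [hi, hp]

lemma sum_pi_two {ι J : Type*} [Fintype ι] [DecidableEq ι] [Fintype J] (p : ι → J → ℝ)
    (hp : ∀ i, ∑ j, p i j = 1) (i0 i1 : ι) (hne : i0 ≠ i1) (φ : J → J → ℝ) :
    ∑ F : ι → J, (∏ i, p i (F i)) * φ (F i0) (F i1)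
      = ∑ j, ∑ j', p i0 j * p i1 j' * φ j j' := by
  have h : ∀ F : ι → J, (∏ i, p i (F i)) * φ (F i0) (F i1)
      = ∑ j, ((∏ i, (p i (F i) * if i = i0 then (if F i = j then 1 else 0) else
        if i = i1 then φ j (F i) else 1))) := by
    intro F
    have : ∀ j, (∏ i, (p i (F i) * if i = i0 then (if F i = j then 1 else 0) else
        if i = i1 then φ j (F i) else 1)) = (∏ i, p i (F i)) *
          ((if F i0 = j then 1 else 0) * φ j (F i1)) := by
      intro j
      rw [Finset.prod_mul_distrib]
      congr 1
      rw [Fintype.prod_eq_mul i0 i1 hne]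
      · simp [hne.symm]
      · rintro i ⟨h0, h1⟩
        simp [h0, h1]
    simp only [this]
    rw [← Finset.mul_sum]
    simp
  simp only [h]
  rw [Finset.sum_comm]
  refine Finset.sum_congr rfl fun j _ => ?_
  rw [sum_pi (fun i x => p i x * if i = i0 then (if x = j then 1 else 0) else
        if i = i1 then φ j x else 1), Fintype.prod_eq_mul i0 i1 hne]
  · simp [hne.symm, Finset.mul_sum, mul_assoc]
  · rintro i ⟨h0, h1⟩
    simp [h0, h1, hp]

lemma Hn_pi {ι J : Type*} [Fintype ι] [DecidableEq ι] [Fintype J] (p : ι → J → ℝ)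
    (hp : ∀ i, ∑ j, p i j = 1) :
    Hn (fun F : ι → J => ∏ i, p i (F i)) = ∑ i, Hn (p i) := by
  have h : ∀ F : ι → J, Real.negMulLog (∏ i, p i (F i))
      = ∑ i0, (∏ i, p i (F i)) * (- Real.log (p i0 (F i0))) := by
    intro F
    rw [← Finset.mul_sum, Real.negMulLog]
    by_cases hz : ∃ i, p i (F i) = 0
    · obtain ⟨i, hi⟩ := hz
      rw [Finset.prod_eq_zero (Finset.mem_univ i) hi]; simp
    · push Not at hz
      rw [Real.log_prod (fun i _ => hz i), Finset.sum_neg_distrib]; ring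
  unfold Hn
  simp only [h]
  rw [Finset.sum_comm]
  refine Finset.sum_congr rfl fun i _ => ?_
  rw [sum_pi_one p hp i (fun j => - Real.log (p i j))]
  refine Finset.sum_congr rfl fun j _ => ?_
  rw [Real.negMulLog]; ring

lemma gibbs {α : Type*} [Fintype α] {p q : α → ℝ} (hp : ∀ a, 0 ≤ p a) (hq : ∀ a, 0 ≤ q a)
    (hs : ∑ a, q a ≤ ∑ a, p a) (hpq : ∀ a, p a ≠ 0 → q a ≠ 0) :
    Hn p ≤ ∑ a, p a * (- Real.log (q a)) := by
  have : ∀ a, Real.negMulLog (p a) ≤ p a * (- Real.log (q a)) + (q a - p a) := by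
    intro a
    by_cases h : p a = 0
    · simp [h, hq a]
    · have h1 : 0 < p a := lt_of_le_of_ne (hp a) (Ne.symm h)
      have h2 : 0 < q a := lt_of_le_of_ne (hq a) (Ne.symm (hpq a h))
      have h3 := Real.log_le_sub_one_of_pos (div_pos h2 h1)
      rw [Real.log_div h2.ne' h1.ne'] at h3
      have h4 := mul_le_mul_of_nonneg_left h3 h1.le
      have h5 : p a * (q a / p a - 1) = q a - p a := by field_simp
      rw [Real.negMulLog]
      nlinarith
  calc Hn p ≤ ∑ a, (p a * (- Real.log (q a)) + (q a - p a)) := Finset.sum_le_sum fun a _ => this a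
    _ = ∑ a, p a * (- Real.log (q a)) + (∑ a, q a - ∑ a, p a) := by
      rw [Finset.sum_add_distrib, Finset.sum_sub_distrib]
    _ ≤ _ := by linarith

lemma sum_pr_mul {Ω α : Type*} [Fintype Ω] [Fintype α] (p : Ω → ℝ) (X : Ω → α) (φ : α → ℝ) :
    ∑ a, pr p X a * φ a = ∑ ω, p ω * φ (X ω) := by
  unfold pr
  simp only [Finset.sum_mul]
  rw [Finset.sum_comm]
  refine Finset.sum_congr rfl fun ω _ => ?_
  simp

lemma isPMF_pr {Ω α : Type*} [Fintype Ω] [Fintype α] {p : Ω → ℝ} (hp : IsPMF p) (X : Ω → α) :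
    IsPMF (pr p X) := by
  refine ⟨fun a => Finset.sum_nonneg fun ω _ => ?_, ?_⟩
  · split_ifs
    · exact hp.1 ω
    · exact le_rfl
  · have := sum_pr_mul p X (fun _ => 1)
    simpa [hp.2] using this

lemma le_pr {Ω α : Type*} [Fintype Ω] {p : Ω → ℝ} (hp : ∀ ω, 0 ≤ p ω) (X : Ω → α) (ω : Ω) :
    p ω ≤ pr p X (X ω) := by
  unfold pr
  calc p ω = if X ω = X ω then p ω else 0 := by simp
    _ ≤ _ := Finset.single_le_sum (f := fun ω' => if X ω' = X ω then p ω' else 0)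
      (fun ω' _ => by split_ifs; exacts [hp _, le_rfl]) (Finset.mem_univ ω)

lemma Hn_subadd {ι J : Type*} [Fintype ι] [DecidableEq ι] [Fintype J] {p : (ι → J) → ℝ}
    (hp : IsPMF p) : Hn p ≤ ∑ i, Hn (pr p (fun x => x i)) := by
  have hm : ∀ i, IsPMF (pr p (fun x : ι → J => x i)) := fun i => isPMF_pr hp _
  have hpos : ∀ x : ι → J, p x ≠ 0 → ∀ i, pr p (fun x : ι → J => x i) (x i) ≠ 0 := by
    intro x hx i
    have h1 := le_pr hp.1 (fun x : ι → J => x i) x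
    have h2 : 0 < p x := lt_of_le_of_ne (hp.1 x) (Ne.symm hx)
    exact (lt_of_lt_of_le h2 h1).ne'
  have hpi := IsPMF.pi hm
  have := gibbs hp.1 hpi.1 (by rw [hpi.2, hp.2])
    (fun x hx => Finset.prod_ne_zero_iff.2 fun i _ => hpos x hx i)
  refine this.trans (le_of_eq ?_)
  have h2 : ∀ x : ι → J, p x * (-Real.log (∏ i, pr p (fun x : ι → J => x i) (x i)))
      = ∑ i, p x * (- Real.log (pr p (fun x : ι → J => x i) (x i))) := by
    intro x
    by_cases h : p x = 0
    · simp [h]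
    · rw [Real.log_prod (fun i _ => hpos x h i), ← Finset.mul_sum, Finset.sum_neg_distrib]
  simp only [h2]
  rw [Finset.sum_comm]
  refine Finset.sum_congr rfl fun i _ => ?_
  rw [← sum_pr_mul p (fun x : ι → J => x i) (fun a => -Real.log (pr p (fun x : ι → J => x i) a))]
  unfold Hn
  refine Finset.sum_congr rfl fun j _ => ?_
  rw [Real.negMulLog]; ring

/-- Jensen -/
lemma Hn_concave {ι α : Type*} [Fintype ι] [Fintype α] {p : ι → ℝ} (hp : IsPMF p)
    {q : ι → α → ℝ} (hq : ∀ i a, 0 ≤ q i a) :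
    ∑ i, p i * Hn (q i) ≤ Hn (outp p q) := by
  unfold Hn
  simp only [Finset.mul_sum]
  rw [Finset.sum_comm]
  refine Finset.sum_le_sum fun a _ => ?_
  have := Real.concaveOn_negMulLog.le_map_sum (t := Finset.univ) (w := p) (p := fun i => q i a)
    (fun i _ => hp.1 i) hp.2 (fun i _ => hq i a)
  simpa [outp, smul_eq_mul] using this

/-- Fano -/
lemma fano {A B : Type*} [Fintype A] [Fintype B] {P : A → ℝ} (hP : IsPMF P)
    {c : A → B → ℝ} (hc : IsKernel c) (g : B → A) :
    Hn P ≤ Hn (outp P c) - ∑ a, P a * Hn (c a) + Real.log 2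
      + (∑ a, ∑ b, P a * c a b * (if g b = a then 0 else 1)) * Real.log (Fintype.card A) := by
  have hne : Nonempty A := hP.nonempty
  have hN : (0 : ℝ) < Fintype.card A := by exact_mod_cast Fintype.card_pos
  have hQ := hP.out hc
  have hJ := hP.joint hc
  set r : A × B → ℝ := fun x => outp P c x.2 *
    (if g x.2 = x.1 then (1 / 2 : ℝ) else 1 / (2 * (Fintype.card A : ℝ))) with hr
  have hpos : ∀ x : A × B, P x.1 * c x.1 x.2 ≠ 0 → outp P c x.2 ≠ 0 := by
    intro x hx
    have h1 : 0 < P x.1 * c x.1 x.2 := lt_of_le_of_ne (hJ.1 x) (Ne.symm hx)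
    have h2 : P x.1 * c x.1 x.2 ≤ outp P c x.2 :=
      Finset.single_le_sum (f := fun a => P a * c a x.2)
        (fun a _ => mul_nonneg (hP.1 _) ((hc a).1 _)) (Finset.mem_univ x.1)
    exact (lt_of_lt_of_le h1 h2).ne'
  have hw : ∀ x : A × B, (0 : ℝ) < (if g x.2 = x.1 then (1 / 2 : ℝ) else 1 / (2 * (Fintype.card A : ℝ))) := by
    intro x; split_ifs <;> positivity
  have hG := gibbs (q := r) hJ.1 (fun x => mul_nonneg (hQ.1 _) (hw x).le) ?_
    (fun x hx => mul_ne_zero (hpos x hx) (hw x).ne')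
  · rw [Hn_joint P c (fun a => (hc a).2)] at hG
    have h3 : ∑ x : A × B, P x.1 * c x.1 x.2 * (- Real.log (r x)) ≤
        ∑ x : A × B, (P x.1 * c x.1 x.2 * (- Real.log (outp P c x.2))
          + P x.1 * c x.1 x.2 * Real.log 2
          + P x.1 * c x.1 x.2 * (if g x.2 = x.1 then 0 else 1) * Real.log (Fintype.card A)) := by
      refine Finset.sum_le_sum fun x _ => ?_
      by_cases h : P x.1 * c x.1 x.2 = 0
      · simp [h]
      · rw [hr]; dsimp only
        rw [Real.log_mul (hpos x h) (hw x).ne']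
        split_ifs
        · rw [one_div, Real.log_inv]; apply le_of_eq; ring
        · rw [one_div, Real.log_inv, Real.log_mul (by norm_num) hN.ne']; apply le_of_eq; ring
    rw [Finset.sum_add_distrib, Finset.sum_add_distrib, ← Finset.sum_mul, hJ.2,
      ← Finset.sum_mul] at h3
    have h4 : ∑ x : A × B, (P x.1 * c x.1 x.2 * (- Real.log (outp P c x.2))) = Hn (outp P c) := by
      rw [Fintype.sum_prod_type, Finset.sum_comm]
      unfold Hn
      refine Finset.sum_congr rfl fun b _ => ?_
      dsimp only
      rw [← Finset.sum_mul, Real.negMulLog]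
      unfold outp; ring
    rw [h4, Fintype.sum_prod_type (f := fun x : A × B =>
      P x.1 * c x.1 x.2 * (if g x.2 = x.1 then 0 else 1))] at h3
    dsimp only at h3
    linarith
  · rw [hJ.2, ← hQ.2, Fintype.sum_prod_type, Finset.sum_comm]
    refine Finset.sum_le_sum fun b _ => ?_
    rw [hr]; dsimp only
    rw [← Finset.mul_sum]
    refine mul_le_of_le_one_right (hQ.1 b) ?_
    calc ∑ a, (if g b = a then 1 / 2 else 1 / (2 * (Fintype.card A : ℝ)))
        ≤ ∑ a, ((if g b = a then 1 / 2 else 0) + 1 / (2 * (Fintype.card A : ℝ))) := by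
          refine Finset.sum_le_sum fun a _ => ?_
          split_ifs
          · have : 0 ≤ 1 / (2 * (Fintype.card A : ℝ)) := by positivity
            linarith
          · linarith
      _ = 1 := by
          rw [Finset.sum_add_distrib]
          simp
          field_simp
          norm_num


end PieceP1

section PieceP2

def tens {A B Y Y' : Type*} (c : A → Y → ℝ) (d : B → Y' → ℝ) : A × B → Y × Y' → ℝ :=
  fun x y => c x.1 y.1 * d x.2 y.2

lemma IsKernel.tens {A B Y Y' : Type*} [Fintype Y] [Fintype Y'] {c : A → Y → ℝ} {d : B → Y' → ℝ}
    (hc : IsKernel c) (hd : IsKernel d) : IsKernel (Paper.tens c d) := fun x => by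
  have := IsPMF.joint (hc x.1) (c := fun _ => d x.2) (fun _ => hd x.2)
  exact this

/-- one-sided disintegration through the channel of the first component -/
lemma exists_back {A B Z : Type*} [Fintype A] [Fintype B] [Fintype Z] [Nonempty B]
    {μ : A × B → ℝ} (hμ : IsPMF μ) {c : A → Z → ℝ} (hc : IsKernel c) :
    ∃ (pZ : Z → ℝ) (κ : Z → B → ℝ), IsPMF pZ ∧ IsKernel κ ∧
      (∀ z b, ∑ a, μ (a, b) * c a z = pZ z * κ z b) ∧
      (∀ z, pZ z = ∑ a, ∑ b, μ (a, b) * c a z) ∧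
      (∀ b, ∑ z, pZ z * κ z b = ∑ a, μ (a, b)) := by
  obtain ⟨κ, hκ, hj⟩ := disint (fun z b => ∑ a, μ (a, b) * c a z)
    (fun z b => Finset.sum_nonneg fun a _ => mul_nonneg (hμ.1 _) ((hc a).1 z))
  have hmarg : ∀ b, ∑ z, ∑ a, μ (a, b) * c a z = ∑ a, μ (a, b) := by
    intro b
    rw [Finset.sum_comm]
    simp only [← Finset.mul_sum, (hc _).2, mul_one]
  refine ⟨fun z => ∑ b, ∑ a, μ (a, b) * c a z, κ, ⟨?_, ?_⟩, hκ, hj, ?_, ?_⟩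
  · exact fun z => Finset.sum_nonneg fun b _ => Finset.sum_nonneg fun a _ =>
      mul_nonneg (hμ.1 _) ((hc a).1 z)
  · rw [Finset.sum_comm]
    simp only [hmarg]
    rw [← hμ.2, Fintype.sum_prod_type, Finset.sum_comm]
  · intro z; exact Finset.sum_comm
  · intro b
    rw [← hmarg b]
    exact Finset.sum_congr rfl fun z _ => (hj z b).symm

lemma Hn_tens {A B Z D : Type*} [Fintype A] [Fintype B] [Fintype Z] [Fintype D]
    {μ : A × B → ℝ} {c : A → Z → ℝ} {d : B → D → ℝ} (hd : IsKernel d)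
    {pZ : Z → ℝ} {κ : Z → B → ℝ} (hκ : IsKernel κ)
    (h : ∀ z b, ∑ a, μ (a, b) * c a z = pZ z * κ z b) :
    Hn (outp μ (tens c d)) = Hn pZ + ∑ z, pZ z * Hn (outp (κ z) d) := by
  rw [← Hn_joint pZ (fun z => outp (κ z) d) (fun z => ((hκ z).out hd).2)]
  congr 1
  funext ⟨z, y⟩
  simp only [outp, tens]
  rw [Fintype.sum_prod_type, Finset.sum_comm, Finset.mul_sum]
  refine Finset.sum_congr rfl fun b _ => ?_
  rw [← mul_assoc, ← h, Finset.sum_mul]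
  exact Finset.sum_congr rfl fun a _ => by ring

lemma Hn_tens_swap {A B Z D : Type*} [Fintype A] [Fintype B] [Fintype Z] [Fintype D]
    (μ : A × B → ℝ) (c : A → Z → ℝ) (d : B → D → ℝ) :
    Hn (outp (fun x : B × A => μ (x.2, x.1)) (tens d c)) = Hn (outp μ (tens c d)) := by
  rw [← Hn_equiv (Equiv.prodComm D Z)]
  congr 1
  funext ⟨y, z⟩
  simp only [outp, tens, Equiv.prodComm_apply, Prod.swap]
  rw [Fintype.sum_prod_type, Fintype.sum_prod_type, Finset.sum_comm]
  exact Finset.sum_congr rfl fun a _ => Finset.sum_congr rfl fun b _ => by ring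

lemma two_part {A B Y Z Y' Z' : Type*} [Fintype A] [Fintype B] [Fintype Y] [Fintype Z]
    [Fintype Y'] [Fintype Z'] {μ : A × B → ℝ} (hμ : IsPMF μ)
    {cY : A → Y → ℝ} {cZ : A → Z → ℝ} {dY : B → Y' → ℝ} {dZ : B → Z' → ℝ}
    (hcY : IsKernel cY) (hcZ : IsKernel cZ) (hdY : IsKernel dY) (hdZ : IsKernel dZ) :
    ∃ (q : Y' → ℝ) (κ' : Y' → A → ℝ) (pZ : Z → ℝ) (κ : Z → B → ℝ),
      IsPMF q ∧ IsKernel κ' ∧ IsPMF pZ ∧ IsKernel κ ∧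
      (∀ a, ∑ y, q y * κ' y a = ∑ b, μ (a, b)) ∧
      (∀ b, ∑ z, pZ z * κ z b = ∑ a, μ (a, b)) ∧
      Hn (outp μ (tens cY dY)) - Hn (outp μ (tens cZ dZ)) =
        (∑ y, q y * Hn (outp (κ' y) cY) - ∑ y, q y * Hn (outp (κ' y) cZ)) +
        (∑ z, pZ z * Hn (outp (κ z) dY) - ∑ z, pZ z * Hn (outp (κ z) dZ)) ∧
      ∑ y, q y * Hn (outp (κ' y) cZ) + ∑ z, pZ z * Hn (outp (κ z) dZ)
        ≤ Hn (outp μ (tens cZ dZ)) := by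
  obtain ⟨⟨a0, b0⟩⟩ := hμ.nonempty
  have : Nonempty A := ⟨a0⟩
  have : Nonempty B := ⟨b0⟩
  have hμ' : IsPMF (fun x : B × A => μ (x.2, x.1)) := by
    refine ⟨fun x => hμ.1 _, ?_⟩
    rw [← hμ.2]
    exact Equiv.sum_comp (Equiv.prodComm B A) μ
  obtain ⟨pZ, κ, hpZ, hκ, h1, h1', h1''⟩ := exists_back hμ hcZ
  obtain ⟨q, κ', hq, hκ', h2, h2', h2''⟩ := exists_back hμ' hdY
  refine ⟨q, κ', pZ, κ, hq, hκ', hpZ, hκ, h2'', h1'', ?_, ?_⟩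
  · have e1 := Hn_tens hdY hκ h1
    have e2 := Hn_tens hdZ hκ h1
    have e3 := Hn_tens (μ := fun x : B × A => μ (x.2, x.1)) (c := dY) hcY hκ' h2
    have e4 := Hn_tens (μ := fun x : B × A => μ (x.2, x.1)) (c := dY) hcZ hκ' h2
    rw [Hn_tens_swap μ] at e3 e4
    linarith
  · have e2 := Hn_tens hdZ hκ h1
    have : outp q (fun y => outp (κ' y) cZ) = pZ := by
      funext z
      rw [h1' z]
      simp only [outp, Finset.mul_sum]
      rw [Finset.sum_comm]
      refine Finset.sum_congr rfl fun a _ => ?_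
      rw [← Finset.sum_mul, ← h2'' a, Finset.sum_mul]
      exact Finset.sum_congr rfl fun y _ => by ring
    have hj := Hn_concave hq (q := fun y => outp (κ' y) cZ) (fun y => ((hκ' y).out hcZ).1)
    rw [this] at hj
    linarith

def cn {X Y : Type*} (c : X → Y → ℝ) (n : ℕ) : (Fin n → X) → (Fin n → Y) → ℝ :=
  fun x y => ∏ i, c (x i) (y i)

lemma IsKernel.cn {X Y : Type*} [Fintype Y] {c : X → Y → ℝ} (hc : IsKernel c) (n : ℕ) :
    IsKernel (Paper.cn c n) := fun x => IsPMF.pi (p := fun i => c (x i)) (fun i => hc (x i))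

noncomputable def Phi {X Y Z : Type*} [Fintype X] [Fintype Y] [Fintype Z]
    (cY : X → Y → ℝ) (cZ : X → Z → ℝ) (p : X → ℝ) : (X → ℝ) × ℝ × ℝ :=
  (p, Hn (outp p cY), Hn (outp p cZ))

def CC {X Y Z : Type*} [Fintype X] [Fintype Y] [Fintype Z]
    (cY : X → Y → ℝ) (cZ : X → Z → ℝ) : Set ((X → ℝ) × ℝ × ℝ) :=
  convexHull ℝ (Phi cY cZ '' {p | IsPMF p})

section
variable {X Y Z : Type*} [Fintype X] [Fintype Y] [Fintype Z] {cY : X → Y → ℝ} {cZ : X → Z → ℝ}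

lemma CC_mix {ι : Type*} [Fintype ι] {w : ι → ℝ} (hw : IsPMF w) {c : ι → (X → ℝ) × ℝ × ℝ}
    (hc : ∀ i, c i ∈ CC cY cZ) : ∑ i, w i • c i ∈ CC cY cZ :=
  (convex_convexHull ℝ _).sum_mem (fun i _ => hw.1 i) hw.2 (fun i _ => hc i)

lemma CC_base {p : X → ℝ} (hp : IsPMF p) : Phi cY cZ p ∈ CC cY cZ :=
  subset_convexHull ℝ _ ⟨p, hp, rfl⟩

lemma outp_cons {n : ℕ} (μ : (Fin (n + 1) → X) → ℝ) (c : X → Y → ℝ) :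
    Hn (outp μ (cn c (n + 1))) =
      Hn (outp (fun x : X × (Fin n → X) => μ (Fin.cons x.1 x.2)) (tens c (cn c n))) := by
  rw [← Hn_equiv (Fin.consEquiv (fun _ : Fin (n + 1) => Y)) (outp μ (cn c (n + 1)))]
  congr 1
  funext ⟨y, y'⟩
  simp only [outp, tens]
  rw [← Equiv.sum_comp (Fin.consEquiv (fun _ : Fin (n + 1) => X))]
  refine Finset.sum_congr rfl fun x _ => ?_
  simp [cn, Fin.prod_univ_succ, Fin.consEquiv]

lemma tensorize [Nonempty X] (hcY : IsKernel cY) (hcZ : IsKernel cZ) : ∀ (n : ℕ)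
    (μ : (Fin n → X) → ℝ), IsPMF μ → ∃ c ∈ CC cY cZ,
      (∀ φ : X → ℝ, (n : ℝ) * ∑ a, c.1 a * φ a = ∑ x, μ x * ∑ i, φ (x i)) ∧
      (n : ℝ) * (c.2.1 - c.2.2) = Hn (outp μ (cn cY n)) - Hn (outp μ (cn cZ n)) ∧
      (n : ℝ) * c.2.2 ≤ Hn (outp μ (cn cZ n)) := by
  intro n
  induction n with
  | zero =>
    intro μ hμ
    obtain ⟨x0⟩ := ‹Nonempty X›
    refine ⟨_, CC_base (isPMF_dirac x0), ?_, ?_, ?_⟩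
    · intro φ; simp
    · have := hμ.2
      simp [Hn, outp, cn] at this ⊢
    · have := hμ.2
      simp [Hn, outp, cn] at this ⊢
      simp [this]
  | succ n ih =>
    intro μ hμ
    set ν : X × (Fin n → X) → ℝ := fun x => μ (Fin.cons x.1 x.2) with hν
    have hνp : IsPMF ν := ⟨fun x => hμ.1 _, by
      rw [← hμ.2]; exact Equiv.sum_comp (Fin.consEquiv (fun _ : Fin (n + 1) => X)) μ⟩
    obtain ⟨q, κ', pZ, κ, hq, hκ', hpZ, hκ, hm1, hm2, hd, hle⟩ :=
      two_part hνp hcY hcZ (hcY.cn n) (hcZ.cn n)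
    choose cz hcz h1 h2 h3 using fun z => ih (κ z) (hκ z)
    set c' := ∑ y, q y • Phi cY cZ (κ' y) with hc'
    set c'' := ∑ z, pZ z • cz z with hc''
    have hc'm : c' ∈ CC cY cZ := CC_mix hq (fun y => CC_base (hκ' y))
    have hc''m : c'' ∈ CC cY cZ := CC_mix hpZ hcz
    have hn : (0 : ℝ) < (n : ℝ) + 1 := by positivity
    set c := ((n : ℝ) / (n + 1)) • c'' + ((1 : ℝ) / (n + 1)) • c' with hc
    have hcm : c ∈ CC cY cZ := (convex_convexHull ℝ _) hc''m hc'm (by positivity) (by positivity)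
      (by field_simp)
    have hnc : ((n : ℝ) + 1) • c = (n : ℝ) • c'' + c' := by
      rw [hc, smul_add, smul_smul, smul_smul, mul_div_cancel₀ _ hn.ne', mul_div_cancel₀ _ hn.ne',
        one_smul]
    have e1 : ∀ a, ((n : ℝ) + 1) * c.1 a = n * c''.1 a + c'.1 a := by
      intro a
      have := congrFun (congrArg Prod.fst hnc) a
      simpa using this
    have e2 : ((n : ℝ) + 1) * c.2.1 = n * c''.2.1 + c'.2.1 := by
      have := congrArg (fun x => x.2.1) hnc
      simpa using this
    have e3 : ((n : ℝ) + 1) * c.2.2 = n * c''.2.2 + c'.2.2 := by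
      have := congrArg (fun x => x.2.2) hnc
      simpa using this
    have f1 : ∀ a, c'.1 a = ∑ y, q y * κ' y a := by
      intro a; simp [hc', Phi, Prod.fst_sum]
    have f2 : c'.2.1 = ∑ y, q y * Hn (outp (κ' y) cY) := by
      simp [hc', Phi, Prod.fst_sum, Prod.snd_sum]
    have f3 : c'.2.2 = ∑ y, q y * Hn (outp (κ' y) cZ) := by
      simp [hc', Phi, Prod.snd_sum]
    have g1 : ∀ a, c''.1 a = ∑ z, pZ z * (cz z).1 a := by
      intro a; simp [hc'', Prod.fst_sum]
    have g2 : c''.2.1 = ∑ z, pZ z * (cz z).2.1 := by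
      simp [hc'', Prod.fst_sum, Prod.snd_sum]
    have g3 : c''.2.2 = ∑ z, pZ z * (cz z).2.2 := by
      simp [hc'', Prod.snd_sum]
    have k2 : (n : ℝ) * (c''.2.1 - c''.2.2) =
        ∑ z, pZ z * Hn (outp (κ z) (cn cY n)) - ∑ z, pZ z * Hn (outp (κ z) (cn cZ n)) := by
      rw [g2, g3, ← Finset.sum_sub_distrib, ← Finset.sum_sub_distrib, Finset.mul_sum]
      refine Finset.sum_congr rfl fun z _ => ?_
      have := h2 z
      linear_combination pZ z * this
    have k3 : (n : ℝ) * c''.2.2 ≤ ∑ z, pZ z * Hn (outp (κ z) (cn cZ n)) := by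
      rw [g3, Finset.mul_sum]
      refine Finset.sum_le_sum fun z _ => ?_
      have := mul_le_mul_of_nonneg_left (h3 z) (hpZ.1 z)
      linarith
    refine ⟨c, hcm, ?_, ?_, ?_⟩
    · intro φ
      push_cast
      rw [Finset.mul_sum]
      have : ∀ a, ((n : ℝ) + 1) * (c.1 a * φ a) =
          n * (∑ z, pZ z * (cz z).1 a) * φ a + (∑ y, q y * κ' y a) * φ a := by
        intro a
        rw [← mul_assoc, e1, f1, g1]; ring
      simp only [this]
      rw [Finset.sum_add_distrib]
      have l1 : ∑ a, ↑n * (∑ z, pZ z * (cz z).1 a) * φ a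
          = ∑ a, ∑ b, ν (a, b) * ∑ i, φ (b i) := by
        calc ∑ a, ↑n * (∑ z, pZ z * (cz z).1 a) * φ a
            = ∑ z, pZ z * ((n : ℝ) * ∑ a, (cz z).1 a * φ a) := by
              simp only [Finset.mul_sum, Finset.sum_mul]
              rw [Finset.sum_comm]
              exact Finset.sum_congr rfl fun z _ => Finset.sum_congr rfl fun a _ => by ring
          _ = ∑ z, pZ z * ∑ b, κ z b * ∑ i, φ (b i) := by simp only [h1]
          _ = ∑ b, (∑ z, pZ z * κ z b) * ∑ i, φ (b i) := by
              simp only [Finset.sum_mul]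
              rw [Finset.sum_comm]
              refine Finset.sum_congr rfl fun z _ => ?_
              rw [Finset.mul_sum]
              exact Finset.sum_congr rfl fun a _ => by ring
          _ = _ := by
              simp only [hm2]
              rw [Finset.sum_comm]
              refine Finset.sum_congr rfl fun z _ => ?_
              rw [Finset.sum_mul]
      have l2 : ∑ a, (∑ y, q y * κ' y a) * φ a = ∑ a, ∑ b, ν (a, b) * φ a := by
        simp only [hm1, Finset.sum_mul]
      rw [l1, l2, ← Finset.sum_add_distrib,
        ← Equiv.sum_comp (Fin.consEquiv (fun _ : Fin (n + 1) => X)), Fintype.sum_prod_type]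
      refine Finset.sum_congr rfl fun a _ => ?_
      rw [← Finset.sum_add_distrib]
      refine Finset.sum_congr rfl fun b _ => ?_
      simp [hν, Fin.consEquiv, Fin.sum_univ_succ]
      ring
    · push_cast
      rw [outp_cons μ cY, outp_cons μ cZ]
      rw [f2] at e2
      rw [f3] at e3
      linarith
    · push_cast
      rw [outp_cons μ cZ]
      rw [f3] at e3
      linarith

lemma isCompact_pmf : IsCompact {p : X → ℝ | IsPMF p} := by
  have : {p : X → ℝ | IsPMF p} = stdSimplex ℝ X := by
    ext p; rfl
  rw [this]
  exact isCompact_stdSimplex ℝ X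

lemma continuous_Hn_outp (c : X → Y → ℝ) : Continuous (fun p : X → ℝ => Hn (outp p c)) := by
  unfold Hn outp
  fun_prop

end

lemma isCompact_convexHull' {E : Type*} [NormedAddCommGroup E] [NormedSpace ℝ E]
    [FiniteDimensional ℝ E] {s : Set E} (hs : IsCompact s) : IsCompact (convexHull ℝ s) := by
  set N := Module.finrank ℝ E + 1 with hN
  rcases s.eq_empty_or_nonempty with rfl | ⟨s0, hs0⟩
  · simp
  let f : (Fin N → ℝ) × (Fin N → E) → E := fun x => ∑ i, x.1 i • x.2 i
  have hf : Continuous f := by fun_prop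
  have himg : convexHull ℝ s = f '' (stdSimplex ℝ (Fin N) ×ˢ Set.pi Set.univ (fun _ => s)) := by
    ext x
    constructor
    · intro hx
      obtain ⟨ι, _, z, w, hz, hai, hw, hw1, hsum⟩ := eq_pos_convex_span_of_mem_convexHull hx
      have hcard : Fintype.card ι ≤ N := by
        exact hai.card_le_finrank_succ.trans (by
          have := Submodule.finrank_le (vectorSpan ℝ (Set.range z)); omega)
      let e : ι ↪ Fin N := (Fintype.equivFin ι).toEmbedding.trans (Fin.castLEEmb hcard)
      let w' : Fin N → ℝ := fun j => ∑ i, if e i = j then w i else 0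
      let z' : Fin N → E := fun j => if h : ∃ i, e i = j then z h.choose else s0
      have hz' : ∀ i, z' (e i) = z i := by
        intro i
        have h : ∃ i', e i' = e i := ⟨i, rfl⟩
        simp only [z', h, dif_pos]
        congr 1
        exact e.injective h.choose_spec
      have hred : ∀ {M : Type _} [AddCommGroup M] [Module ℝ M] (g : Fin N → M),
          ∑ j, w' j • g j = ∑ i, w i • g (e i) := by
        intro M _ _ g
        simp only [w', Finset.sum_smul]
        rw [Finset.sum_comm]
        refine Finset.sum_congr rfl fun i _ => ?_
        simp [ite_smul]
      refine ⟨(w', z'), ⟨⟨?_, ?_⟩, ?_⟩, ?_⟩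
      · intro j
        exact Finset.sum_nonneg fun i _ => by split_ifs; exacts [(hw i).le, le_rfl]
      · have : ∑ j, w' j = ∑ i, w i := by
          simp only [w']
          rw [Finset.sum_comm]
          refine Finset.sum_congr rfl fun i _ => ?_
          simp
        rw [← hw1]; exact this
      · intro j _
        by_cases h : ∃ i, e i = j
        · simp only [z', h, dif_pos]; exact hz ⟨_, rfl⟩
        · simp only [z', h, dif_neg, not_false_eq_true]; exact hs0
      · change ∑ j, w' j • z' j = x
        rw [hred z', ← hsum]
        simp only [hz']
    · rintro ⟨⟨w, z⟩, ⟨hw, hz⟩, rfl⟩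
      exact (convex_convexHull ℝ s).sum_mem (fun i _ => hw.1 i) hw.2
        (fun i _ => subset_convexHull ℝ s (hz i (Set.mem_univ _)))
  rw [himg]
  exact ((isCompact_stdSimplex ℝ (Fin N)).prod (isCompact_univ_pi fun _ => hs)).image hf

lemma isCompact_CC {X Y Z : Type*} [Fintype X] [Fintype Y] [Fintype Z] (cY : X → Y → ℝ)
    (cZ : X → Z → ℝ) : IsCompact (CC cY cZ) := by
  refine isCompact_convexHull' (isCompact_pmf.image ?_)
  exact continuous_id.prodMk ((continuous_Hn_outp cY).prodMk (continuous_Hn_outp cZ))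

lemma CC_exists {X Y Z : Type*} [Fintype X] [Fintype Y] [Fintype Z] {cY : X → Y → ℝ}
    {cZ : X → Z → ℝ} {c : (X → ℝ) × ℝ × ℝ} (hc : c ∈ CC cY cZ) :
    ∃ (m : ℕ) (pW : Fin m → ℝ) (k : Fin m → X → ℝ), IsPMF pW ∧ (∀ w, IsPMF (k w)) ∧
      c.1 = outp pW k ∧ c.2.1 = ∑ w, pW w * Hn (outp (k w) cY) ∧
      c.2.2 = ∑ w, pW w * Hn (outp (k w) cZ) := by
  obtain ⟨ι, _, w, z, hw0, hw1, hz, rfl⟩ := mem_convexHull_iff_exists_fintype.1 hc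
  choose k hk hkz using hz
  let e := Fintype.equivFin ι
  refine ⟨Fintype.card ι, fun j => w (e.symm j), fun j => k (e.symm j), ⟨fun j => hw0 _, ?_⟩,
    fun j => hk _, ?_, ?_, ?_⟩
  · rw [← hw1]; exact Equiv.sum_comp e.symm w
  · funext a
    simp only [outp]
    rw [Equiv.sum_comp e.symm (fun i => w i * k i a)]
    simp [← hkz, Phi, Prod.fst_sum]
  · rw [Equiv.sum_comp e.symm (fun i => w i * Hn (outp (k i) cY))]
    simp [← hkz, Phi, Prod.fst_sum, Prod.snd_sum]
  · rw [Equiv.sum_comp e.symm (fun i => w i * Hn (outp (k i) cZ))]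
    simp [← hkz, Phi, Prod.snd_sum]


end PieceP2

section PieceP3

set_option linter.unusedSectionVars false

section
variable {X1 X2 Y1 Y2 : Type} [Fintype X1] [Fintype X2] [Fintype Y1] [Fintype Y2]
  {m : ℕ} {pW : Fin m → ℝ} {k : Fin m → X1 → ℝ} {p2 : X2 → ℝ} {ch1 : X1 → Y1 → ℝ}
  {ch2 : X1 × X2 → Y2 → ℝ}

lemma ite_conv {p q : Prop} {ip : Decidable p} {iq : Decidable q} (h : p ↔ q) (a : ℝ) :
    @ite ℝ p ip a 0 = @ite ℝ q iq a 0 := by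
  by_cases hp : p
  · rw [if_pos hp, if_pos (h.1 hp)]
  · rw [if_neg hp, if_neg (fun hq => hp (h.2 hq))]

lemma jz_drop2 (hp2 : IsPMF p2) (hch2 : IsKernel ch2) (F : Fin m → X1 → Y1 → Prop)
    [∀ w x y, Decidable (F w x y)] :
    (∑ ω : Fin m × X1 × X2 × Y1 × Y2, if F ω.1 ω.2.1 ω.2.2.2.1 then
      jointZ m pW k p2 ch1 ch2 ω else 0)
    = ∑ w, ∑ x1, ∑ y1, if F w x1 y1 then pW w * k w x1 * ch1 x1 y1 else 0 := by
  simp only [Fintype.sum_prod_type, jointZ, Finset.sum_ite_irrel, ← Finset.mul_sum, (hch2 _).2,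
    Finset.sum_const_zero, mul_one]
  refine Finset.sum_congr rfl fun w _ => Finset.sum_congr rfl fun x1 _ => ?_
  rw [Finset.sum_comm]
  refine Finset.sum_congr rfl fun y1 _ => ?_
  rw [Finset.sum_ite_irrel, ← Finset.sum_mul, ← Finset.mul_sum, hp2.2]
  simp

lemma jz_drop1 (hch1 : IsKernel ch1) (F : Fin m → X2 → Y2 → Prop)
    [∀ w x y, Decidable (F w x y)] :
    (∑ ω : Fin m × X1 × X2 × Y1 × Y2, if F ω.1 ω.2.2.1 ω.2.2.2.2 then
      jointZ m pW k p2 ch1 ch2 ω else 0)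
    = ∑ w, ∑ x2, ∑ y2, if F w x2 y2 then pW w * p2 x2 * outp (k w) (fun x1 => ch2 (x1, x2)) y2
      else 0 := by
  simp only [Fintype.sum_prod_type, jointZ]
  refine Finset.sum_congr rfl fun w _ => ?_
  rw [Finset.sum_comm]
  refine Finset.sum_congr rfl fun x2 _ => ?_
  simp only [outp, Finset.mul_sum]
  have : ∀ x1, (∑ y1, ∑ y2, if F w x2 y2 then
      pW w * k w x1 * p2 x2 * ch1 x1 y1 * ch2 (x1, x2) y2 else 0) =
      ∑ y2, if F w x2 y2 then pW w * k w x1 * p2 x2 * ch2 (x1, x2) y2 else 0 := by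
    intro x1
    rw [Finset.sum_comm]
    refine Finset.sum_congr rfl fun y2 _ => ?_
    rw [Finset.sum_ite_irrel, ← Finset.sum_mul, ← Finset.mul_sum, (hch1 x1).2]
    simp
  simp only [this]
  rw [Finset.sum_comm]
  refine Finset.sum_congr rfl fun y2 _ => ?_
  rw [Finset.sum_ite_irrel]
  split_ifs
  · exact Finset.sum_congr rfl fun x1 _ => by ring
  · simp

lemma mi1_eq (hp2 : IsPMF p2) (hk : IsKernel k) (hch1 : IsKernel ch1)
    (hch2 : IsKernel ch2) :
    mi (jointZ m pW k p2 ch1 ch2) (fun ω => ω.2.1) (fun ω => ω.2.2.2.1) =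
      (Hn (outp (outp pW k) ch1) - ∑ x, outp pW k x * Hn (ch1 x)) / Real.log 2 := by
  have a1 : pr (jointZ m pW k p2 ch1 ch2) (fun ω => ω.2.1) = outp pW k := by
    funext a
    unfold pr
    rw [jz_drop2 hp2 hch2 (fun w x1 y1 => x1 = a)]
    simp [outp, Finset.sum_ite_irrel, ← Finset.mul_sum, (hch1 _).2]
  have a2 : pr (jointZ m pW k p2 ch1 ch2) (fun ω => ω.2.2.2.1) = outp (outp pW k) ch1 := by
    funext a
    unfold pr
    rw [jz_drop2 hp2 hch2 (fun w x1 y1 => y1 = a)]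
    simp [outp, Finset.sum_mul]
    rw [Finset.sum_comm]
  have a3 : pr (jointZ m pW k p2 ch1 ch2) (fun ω => (ω.2.1, ω.2.2.2.1)) =
      fun x => outp pW k x.1 * ch1 x.1 x.2 := by
    funext ⟨a, b⟩
    unfold pr
    refine (Finset.sum_congr rfl fun ω _ => ite_conv (by simp) _).trans
      ((jz_drop2 hp2 hch2 (fun w x1 y1 => x1 = a ∧ y1 = b)).trans ?_)
    simp [outp, Finset.sum_mul, ite_and, Finset.sum_ite_irrel]
  unfold mi
  rw [ent_eq, ent_eq, ent_eq, a1, a2, a3, Hn_joint _ _ (fun a => (hch1 a).2)]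
  ring

lemma cmi_eq (hpW : IsPMF pW) (hp2 : IsPMF p2) (hk : IsKernel k) (hch1 : IsKernel ch1)
    (hch2 : IsKernel ch2) :
    cmi (jointZ m pW k p2 ch1 ch2) (fun ω => ω.2.1) (fun ω => ω.2.2.2.1) (fun ω => ω.1) =
      (∑ w, pW w * Hn (outp (k w) ch1) - ∑ x, outp pW k x * Hn (ch1 x)) / Real.log 2 := by
  have a0 : pr (jointZ m pW k p2 ch1 ch2) (fun ω => ω.1) = pW := by
    funext a
    unfold pr
    refine (Finset.sum_congr rfl fun ω _ => ite_conv (by simp) _).trans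
      ((jz_drop2 hp2 hch2 (fun w x1 y1 => w = a)).trans ?_)
    simp [Finset.sum_ite_irrel, ← Finset.mul_sum, (hch1 _).2, (hk _).2]
  have a1 : Hn (pr (jointZ m pW k p2 ch1 ch2) (fun ω => (ω.2.1, ω.1))) =
      Hn (fun x : Fin m × X1 => pW x.1 * k x.1 x.2) := by
    rw [← Hn_equiv (Equiv.prodComm _ _)]
    congr 1
    funext ⟨b, a⟩
    unfold pr
    refine (Finset.sum_congr rfl fun ω _ => ite_conv (by simp) _).trans
      ((jz_drop2 hp2 hch2 (fun w x1 y1 => x1 = a ∧ w = b)).trans ?_)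
    simp [Finset.sum_ite_irrel, ← Finset.mul_sum, (hch1 _).2, ite_and]
  have a2 : Hn (pr (jointZ m pW k p2 ch1 ch2) (fun ω => (ω.2.2.2.1, ω.1))) =
      Hn (fun x : Fin m × Y1 => pW x.1 * outp (k x.1) ch1 x.2) := by
    rw [← Hn_equiv (Equiv.prodComm _ _)]
    congr 1
    funext ⟨b, a⟩
    unfold pr
    refine (Finset.sum_congr rfl fun ω _ => ite_conv (by simp) _).trans
      ((jz_drop2 hp2 hch2 (fun w x1 y1 => y1 = a ∧ w = b)).trans ?_)
    simp [outp, Finset.sum_ite_irrel, Finset.mul_sum, ite_and, mul_assoc]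
  have a3 : Hn (pr (jointZ m pW k p2 ch1 ch2) (fun ω => (ω.2.1, ω.2.2.2.1, ω.1))) =
      Hn (fun x : (Fin m × X1) × Y1 => (fun z : Fin m × X1 => pW z.1 * k z.1 z.2) x.1
        * (fun z : Fin m × X1 => ch1 z.2) x.1 x.2) := by
    rw [← Hn_equiv (⟨fun x => (x.1.2, x.2, x.1.1), fun y => ((y.2.2, y.1), y.2.1),
      fun x => rfl, fun x => rfl⟩ : (Fin m × X1) × Y1 ≃ X1 × Y1 × Fin m)]
    congr 1
    funext ⟨⟨b, a⟩, y⟩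
    unfold pr
    refine (Finset.sum_congr rfl fun ω _ => ite_conv (by simp) _).trans
      ((jz_drop2 hp2 hch2 (fun w x1 y1 => x1 = a ∧ y1 = y ∧ w = b)).trans ?_)
    simp [Finset.sum_ite_irrel, ite_and]
  unfold cmi
  rw [ent_eq, ent_eq, ent_eq, ent_eq, a0, a1, a2, a3,
    Hn_joint (fun z : Fin m × X1 => pW z.1 * k z.1 z.2) (fun z => ch1 z.2) (fun a => (hch1 a.2).2),
    Hn_joint _ _ (fun a => (hk a).2), Hn_joint _ _ (fun a => ((hk a).out hch1).2),
    Fintype.sum_prod_type]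
  have : ∑ x, outp pW k x * Hn (ch1 x) = ∑ w, ∑ x, pW w * k w x * Hn (ch1 x) := by
    simp only [outp, Finset.sum_mul]
    rw [Finset.sum_comm]
  rw [this]
  ring

lemma mi2_eq (hpW : IsPMF pW) (hp2 : IsPMF p2) (hk : IsKernel k) (hch1 : IsKernel ch1)
    (hch2 : IsKernel ch2) :
    mi (jointZ m pW k p2 ch1 ch2) (fun ω => (ω.1, ω.2.2.1)) (fun ω => ω.2.2.2.2) =
      (Hn (outp pW (fun w => outp p2 (fun x2 => outp (k w) (fun x1 => ch2 (x1, x2)))))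
      - ∑ w, ∑ x2, pW w * p2 x2 * Hn (outp (k w) (fun x1 => ch2 (x1, x2)))) / Real.log 2 := by
  have hc : ∀ w x2, IsPMF (outp (k w) (fun x1 => ch2 (x1, x2))) :=
    fun w x2 => (hk w).out (fun x1 => hch2 _)
  have a1 : pr (jointZ m pW k p2 ch1 ch2) (fun ω => (ω.1, ω.2.2.1)) =
      fun x => pW x.1 * p2 x.2 := by
    funext ⟨a, b⟩
    unfold pr
    refine (Finset.sum_congr rfl fun ω _ => ite_conv (by simp) _).trans
      ((jz_drop1 hch1 (fun w x2 y2 => w = a ∧ x2 = b)).trans ?_)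
    simp [ite_and, Finset.sum_ite_irrel, ← Finset.mul_sum, (hc _ _).2]
  have a2 : pr (jointZ m pW k p2 ch1 ch2) (fun ω => ω.2.2.2.2) =
      (outp pW (fun w => outp p2 (fun x2 => outp (k w) (fun x1 => ch2 (x1, x2))))) := by
    funext a
    unfold pr
    rw [jz_drop1 hch1 (fun w x2 y2 => y2 = a)]
    simp [outp, Finset.mul_sum, mul_assoc]
  have a3 : pr (jointZ m pW k p2 ch1 ch2) (fun ω => ((ω.1, ω.2.2.1), ω.2.2.2.2)) =
      fun x => (fun z : Fin m × X2 => pW z.1 * p2 z.2) x.1 *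
        (fun z : Fin m × X2 => outp (k z.1) (fun x1 => ch2 (x1, z.2))) x.1 x.2 := by
    funext ⟨⟨a, b⟩, y⟩
    unfold pr
    refine (Finset.sum_congr rfl fun ω _ => ite_conv (by simp) _).trans
      ((jz_drop1 hch1 (fun w x2 y2 => (w = a ∧ x2 = b) ∧ y2 = y)).trans ?_)
    simp [ite_and, Finset.sum_ite_irrel]
  unfold mi
  rw [ent_eq, ent_eq, ent_eq, a1, a2, a3, Hn_joint (fun z : Fin m × X2 => pW z.1 * p2 z.2)
    (fun z => outp (k z.1) (fun x1 => ch2 (x1, z.2))) (fun a => (hc a.1 a.2).2),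
    Fintype.sum_prod_type]
  ring

lemma entY2_eq (ch2 : X1 × X2 → Y2 → ℝ) (p1 : X1 → ℝ) (p2 : X2 → ℝ) :
    entY2 ch2 p1 p2 = Hn (outp p2 (fun x2 => outp p1 (fun x1 => ch2 (x1, x2)))) / Real.log 2 := by
  unfold entY2
  rw [ent_eq]
  congr 2
  funext y
  simp only [pr, Fintype.sum_prod_type, outp, Finset.mul_sum]
  rw [Finset.sum_comm]
  refine Finset.sum_congr rfl fun x2 _ => Finset.sum_congr rfl fun x1 _ => ?_
  simp
  ring

lemma entY2n_eq (ch2 : X1 × X2 → Y2 → ℝ) (n : ℕ) (μ : (Fin n → X1) → ℝ) (x2 : Fin n → X2) :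
    entY2n ch2 n μ x2 =
      Hn (outp μ (fun x1 (y : Fin n → Y2) => ∏ i, ch2 (x1 i, x2 i) (y i))) / Real.log 2 := by
  unfold entY2n
  rw [ent_eq]
  congr 2
  funext y
  simp [pr, Fintype.sum_prod_type, outp]

lemma log2_pos : 0 < Real.log 2 := Real.log_pos (by norm_num)

lemma cond1_n (hc1 : Cond1 ch2) (n : ℕ) {μ : (Fin n → X1) → ℝ} (hμ : IsPMF μ)
    (x2 x2' : Fin n → X2) :
    Hn (outp μ (fun x1 (y : Fin n → Y2) => ∏ i, ch2 (x1 i, x2 i) (y i))) =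
    Hn (outp μ (fun x1 (y : Fin n → Y2) => ∏ i, ch2 (x1 i, x2' i) (y i))) := by
  have := hc1 n μ hμ x2 x2'
  rw [entY2n_eq, entY2n_eq] at this
  exact (div_left_inj' log2_pos.ne').1 this

lemma cond1_1 (hc1 : Cond1 ch2) {p : X1 → ℝ} (hp : IsPMF p) (x2 x2' : X2) :
    Hn (outp p (fun x1 => ch2 (x1, x2))) = Hn (outp p (fun x1 => ch2 (x1, x2'))) := by
  have key : ∀ x2 : X2, Hn (outp (fun x : Fin 1 → X1 => p (x 0))
      (fun x1 (y : Fin 1 → Y2) => ∏ i, ch2 (x1 i, x2) (y i))) =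
      Hn (outp p (fun x1 => ch2 (x1, x2))) := by
    intro x2
    rw [← Hn_equiv (Equiv.funUnique (Fin 1) Y2) (outp p (fun x1 => ch2 (x1, x2)))]
    congr 1
    funext y
    simp only [outp]
    rw [← Equiv.sum_comp (Equiv.funUnique (Fin 1) X1)]
    simp
  have hμ : IsPMF (fun x : Fin 1 → X1 => p (x 0)) := by
    refine ⟨fun x => hp.1 _, ?_⟩
    rw [← hp.2, ← Equiv.sum_comp (Equiv.funUnique (Fin 1) X1)]
    simp
  have := cond1_n hc1 1 hμ (fun _ => x2) (fun _ => x2')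
  rw [← key x2, ← key x2', this]

lemma cond2_H (hc2 : Cond2 ch2 p2) {p : X1 → ℝ} (hp : IsPMF p) :
    Hn (outp p2 (fun x2 => outp p (fun x1 => ch2 (x1, x2)))) = tau ch2 * Real.log 2 := by
  have := hc2.2 p hp
  rw [entY2_eq] at this
  rw [← this, div_mul_cancel₀ _ log2_pos.ne']

lemma out_mix (pW : Fin m → ℝ) (k : Fin m → X1 → ℝ) (p2 : X2 → ℝ) (ch2 : X1 × X2 → Y2 → ℝ) :
    outp pW (fun w => outp p2 (fun x2 => outp (k w) (fun x1 => ch2 (x1, x2)))) =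
    outp p2 (fun x2 => outp (outp pW k) (fun x1 => ch2 (x1, x2))) := by
  funext y
  simp only [outp, Finset.mul_sum, Finset.sum_mul]
  rw [Finset.sum_comm]
  refine Finset.sum_congr rfl fun x2 _ => ?_
  rw [Finset.sum_comm]
  exact Finset.sum_congr rfl fun x2 _ => Finset.sum_congr rfl fun x2 _ => by ring

lemma le_tau (hch2 : IsKernel ch2) {q1 : X1 → ℝ} {q2 : X2 → ℝ} (h1 : IsPMF q1) (h2 : IsPMF q2) :
    Hn (outp q2 (fun x2 => outp q1 (fun x1 => ch2 (x1, x2)))) ≤ tau ch2 * Real.log 2 := by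
  have hb : BddAbove { t | ∃ p1 p2, IsPMF p1 ∧ IsPMF p2 ∧ t = entY2 ch2 p1 p2 } := by
    refine ⟨Fintype.card Y2 / Real.log 2, ?_⟩
    rintro t ⟨p1, p2, h1, h2, rfl⟩
    rw [entY2_eq]
    refine div_le_div_of_nonneg_right ?_ log2_pos.le
    have hp := h2.out (c := fun x2 => outp p1 (fun x1 => ch2 (x1, x2)))
      (fun x2 => h1.out fun x1 => hch2 _)
    unfold Hn
    calc _ ≤ ∑ _y : Y2, (1 : ℝ) := Finset.sum_le_sum fun y _ => by
            have := Real.negMulLog_le_one_sub_self (hp.1 y)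
            have := hp.1 y
            linarith
      _ = _ := by simp
  have := le_csSup hb ⟨q1, q2, h1, h2, rfl⟩
  rw [entY2_eq, div_le_iff₀ log2_pos] at this
  exact this

end

end PieceP3

section PieceP4a

set_option linter.unusedSectionVars false
set_option linter.unusedVariables false

lemma src_dis {U V : Type*} [Fintype U] [Fintype V] {p : U → ℝ} (hp : IsPMF p) (h : U → V) :
    ∃ ρ : V → U → ℝ, IsKernel ρ ∧
      ∀ v u, (if h u = v then p u else 0) = pr p h v * ρ v u := by
  have := hp.nonempty
  obtain ⟨ρ, h1, h2⟩ := disint (fun v u => if h u = v then p u else 0) (fun v u => by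
    split_ifs
    · exact hp.1 u
    · exact le_rfl)
  exact ⟨ρ, h1, h2⟩

lemma src_condEnt {U V : Type*} [Fintype U] [Fintype V] {p : U → ℝ} (hp : IsPMF p) (h : U → V)
    {ρ : V → U → ℝ} (hρ : IsKernel ρ)
    (hd : ∀ v u, (if h u = v then p u else 0) = pr p h v * ρ v u) :
    condEnt p id h = (∑ v, pr p h v * Hn (ρ v)) / Real.log 2 := by
  unfold condEnt
  rw [ent_eq, ent_eq]
  have : Hn (pr p (fun ω => (id ω, h ω))) = Hn (fun x : V × U => pr p h x.1 * ρ x.1 x.2) := by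
    rw [← Hn_equiv (Equiv.prodComm V U)]
    congr 1
    funext ⟨v, u⟩
    simp only [Equiv.prodComm_apply, Prod.swap_prod_mk]
    rw [← hd, pr]
    refine (Fintype.sum_eq_single u (fun ω hω => if_neg (fun e => hω (congrArg Prod.fst e)))).trans ?_
    exact ite_conv (by simp) _
  rw [this, Hn_joint _ _ (fun v => (hρ v).2)]
  ring

lemma src_id {U : Type*} [Fintype U] (p : U → ℝ) : ent p id = Hn p / Real.log 2 := by
  rw [ent_eq]
  congr 2
  funext u
  simp [pr]

lemma src_avg {U V : Type*} [Fintype U] [Fintype V] {p : U → ℝ} {h : U → V}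
    {ρ : V → U → ℝ}
    (hd : ∀ v u, (if h u = v then p u else 0) = pr p h v * ρ v u) (n : ℕ)
    (φ : (Fin n → V) → (Fin n → U) → ℝ) :
    ∑ v : Fin n → V, (∏ i, pr p h (v i)) * ∑ u : Fin n → U, (∏ i, ρ (v i) (u i)) * φ v u =
    ∑ u : Fin n → U, (∏ i, p (u i)) * φ (fun i => h (u i)) u := by
  simp only [Finset.mul_sum]
  rw [Finset.sum_comm]
  refine Finset.sum_congr rfl fun u _ => ?_
  rw [Finset.sum_eq_single (fun i => h (u i))]
  · rw [← mul_assoc, ← Finset.prod_mul_distrib]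
    congr 1
    refine Finset.prod_congr rfl fun i _ => ?_
    rw [← hd]
    simp
  · intro v _ hv
    rw [← mul_assoc, ← Finset.prod_mul_distrib]
    obtain ⟨i, hi⟩ := Function.ne_iff.1 hv
    rw [Finset.prod_eq_zero (Finset.mem_univ i), zero_mul]
    rw [← hd, if_neg (fun e => hi e.symm)]
  · simp

lemma out_prod_bound {A Y : Type*} [Fintype A] [Fintype Y] {n : ℕ} {P : A → ℝ} (hP : IsPMF P)
    {d : A → Fin n → Y → ℝ} (hd : ∀ a i, IsPMF (d a i)) :
    Hn (outp P fun a (y : Fin n → Y) => ∏ i, d a i (y i)) ≤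
      ∑ i, Hn (outp P fun a => d a i) := by
  have hk : IsKernel (fun a (y : Fin n → Y) => ∏ i, d a i (y i)) :=
    fun a => IsPMF.pi (fun i => hd a i)
  refine (Hn_subadd (hP.out hk)).trans (le_of_eq ?_)
  refine Finset.sum_congr rfl fun i _ => ?_
  congr 1
  funext b
  unfold pr outp
  have : ∀ y : Fin n → Y, (if y i = b then ∑ a, P a * ∏ i, d a i (y i) else 0) =
      ∑ a, P a * ((∏ i, d a i (y i)) * (if y i = b then 1 else 0)) := by
    intro y
    split_ifs <;> simp
  simp only [this]
  rw [Finset.sum_comm]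
  refine Finset.sum_congr rfl fun a _ => ?_
  rw [← Finset.mul_sum, sum_pi_one (d a) (fun i => (hd a i).2) i (fun j => if j = b then 1 else 0)]
  simp

section
variable {X1 X2 Y1 Y2 : Type} [Fintype X1] [Fintype X2] [Fintype Y1] [Fintype Y2]
  {ch1 : X1 → Y1 → ℝ} {ch2 : X1 × X2 → Y2 → ℝ}

lemma outp_pr {A X Y : Type*} [Fintype A] [Fintype X] (P : A → ℝ) (f : A → X) (c : X → Y → ℝ) :
    outp (pr P f) c = outp P (fun a => c (f a)) := by
  funext y
  exact sum_pr_mul P f (fun x => c x y)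

lemma y2_bound (hch2 : IsKernel ch2) {U T : Type*} [Fintype U] [Fintype T] {n : ℕ} {P : U → ℝ}
    (hP : IsPMF P) {S : T → ℝ} (hS : IsPMF S) (f1 : U → Fin n → X1) (f2 : T → Fin n → X2) :
    Hn (outp S fun t => outp P fun u (z : Fin n → Y2) => ∏ i, ch2 (f1 u i, f2 t i) (z i)) ≤
      n * (tau ch2 * Real.log 2) := by
  have h1 : (outp S fun t => outp P fun u (z : Fin n → Y2) => ∏ i, ch2 (f1 u i, f2 t i) (z i)) =
      outp (fun a : T × U => S a.1 * P a.2) (fun a (z : Fin n → Y2) =>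
        ∏ i, ch2 (f1 a.2 i, f2 a.1 i) (z i)) := by
    funext z
    simp only [outp, Fintype.sum_prod_type, Finset.mul_sum, mul_assoc]
  rw [h1]
  refine (out_prod_bound (d := fun a i => ch2 (f1 a.2 i, f2 a.1 i))
    (IsPMF.joint hS (c := fun _ => P) (fun _ => hP)) (fun a i => hch2 _)).trans ?_
  calc _ ≤ ∑ i : Fin n, (tau ch2 * Real.log 2) := Finset.sum_le_sum fun i _ => ?_
    _ = _ := by simp
  have h2 := le_tau hch2 (isPMF_pr hP (fun u => f1 u i)) (isPMF_pr hS (fun t => f2 t i))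
  refine le_trans (le_of_eq ?_) h2
  rw [outp_pr]
  simp only [outp_pr]
  congr 1
  funext z
  simp only [outp, Fintype.sum_prod_type, Finset.mul_sum, mul_assoc]

end

end PieceP4a

section PieceP4b

set_option linter.unusedSectionVars false
set_option linter.unusedVariables false

section
variable {U T Y Z : Type*} [Fintype U] [Fintype T] [Fintype Y] [Fintype Z]
  {P : U → ℝ} {S : T → ℝ} {c1 : U → Y → ℝ} {c2 : U → T → Z → ℝ}

lemma err_eq1 (hS : IsPMF S) (hc2 : ∀ u t, IsPMF (c2 u t)) (e : U → Y → ℝ) :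
    ∑ u, ∑ t, ∑ y, ∑ z, P u * S t * c1 u y * c2 u t z * e u y =
      ∑ u, ∑ y, P u * c1 u y * e u y := by
  refine Finset.sum_congr rfl fun u _ => ?_
  have : ∀ t, ∑ y, ∑ z, P u * S t * c1 u y * c2 u t z * e u y =
      S t * ∑ y, P u * c1 u y * e u y := by
    intro t
    rw [Finset.mul_sum]
    refine Finset.sum_congr rfl fun y _ => ?_
    rw [← Finset.sum_mul, ← Finset.mul_sum, (hc2 u t).2]
    ring
  simp only [this]
  rw [← Finset.sum_mul, hS.2, one_mul]

lemma err_eq2 (hc1 : IsKernel c1) (e : U → T → Z → ℝ) :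
    ∑ u, ∑ t, ∑ y, ∑ z, P u * S t * c1 u y * c2 u t z * e u t z =
      ∑ u, P u * ∑ t, ∑ z, S t * c2 u t z * e u t z := by
  refine Finset.sum_congr rfl fun u _ => ?_
  rw [Finset.mul_sum]
  refine Finset.sum_congr rfl fun t _ => ?_
  rw [Finset.sum_comm, Finset.mul_sum]
  refine Finset.sum_congr rfl fun z _ => ?_
  have : ∀ y, P u * S t * c1 u y * c2 u t z * e u t z =
    c1 u y * (P u * (S t * c2 u t z * e u t z)) := fun y => by ring
  simp only [this]
  rw [← Finset.sum_mul, (hc1 u).2, one_mul]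

lemma err_ge1 (hP : IsPMF P) (hS : IsPMF S) (hc1 : IsKernel c1) (hc2 : ∀ u t, IsPMF (c2 u t))
  (a : U → Y → Prop) (b : U → T → Z → Prop)
    {da : ∀ u y, Decidable (a u y)}
    {dab : ∀ u y t z, Decidable (a u y ∧ b u t z)} : ∑ u, ∑ y, P u * c1 u y * (if a u y then 0 else 1) ≤
    ∑ u, ∑ t, ∑ y, ∑ z, P u * S t * c1 u y * c2 u t z * (if a u y ∧ b u t z then 0 else 1) := by
  rw [← err_eq1 hS hc2]
  refine Finset.sum_le_sum fun u _ => Finset.sum_le_sum fun t _ => Finset.sum_le_sum fun y _ =>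
    Finset.sum_le_sum fun z _ => ?_
  have : 0 ≤ P u * S t * c1 u y * c2 u t z :=
    mul_nonneg (mul_nonneg (mul_nonneg (hP.1 u) (hS.1 t)) ((hc1 u).1 y)) ((hc2 u t).1 z)
  refine mul_le_mul_of_nonneg_left ?_ this
  by_cases h1 : a u y <;> by_cases h2 : b u t z <;> simp [h1, h2]

lemma err_ge2 (hP : IsPMF P) (hS : IsPMF S) (hc1 : IsKernel c1) (hc2 : ∀ u t, IsPMF (c2 u t))
  (a : U → Y → Prop) (b : U → T → Z → Prop)
    {db : ∀ u t z, Decidable (b u t z)}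
    {dab : ∀ u y t z, Decidable (a u y ∧ b u t z)} :
    ∑ u, P u * ∑ t, ∑ z, S t * c2 u t z * (if b u t z then 0 else 1) ≤
    ∑ u, ∑ t, ∑ y, ∑ z, P u * S t * c1 u y * c2 u t z * (if a u y ∧ b u t z then 0 else 1) := by
  rw [← err_eq2 hc1]
  refine Finset.sum_le_sum fun u _ => Finset.sum_le_sum fun t _ => Finset.sum_le_sum fun y _ =>
    Finset.sum_le_sum fun z _ => ?_
  have : 0 ≤ P u * S t * c1 u y * c2 u t z :=
    mul_nonneg (mul_nonneg (mul_nonneg (hP.1 u) (hS.1 t)) ((hc1 u).1 y)) ((hc2 u t).1 z)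
  refine mul_le_mul_of_nonneg_left ?_ this
  by_cases h1 : a u y <;> by_cases h2 : b u t z <;> simp [h1, h2]

lemma err_le (hP : IsPMF P) (hS : IsPMF S) (hc1 : IsKernel c1) (hc2 : ∀ u t, IsPMF (c2 u t))
  (a : U → Y → Prop) (b : U → T → Z → Prop)
    {da : ∀ u y, Decidable (a u y)} {db : ∀ u t z, Decidable (b u t z)}
    {dab : ∀ u y t z, Decidable (a u y ∧ b u t z)} :
    ∑ u, ∑ t, ∑ y, ∑ z, P u * S t * c1 u y * c2 u t z * (if a u y ∧ b u t z then 0 else 1) ≤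
    ∑ u, ∑ y, P u * c1 u y * (if a u y then 0 else 1) +
    ∑ u, P u * ∑ t, ∑ z, S t * c2 u t z * (if b u t z then 0 else 1) := by
  rw [← err_eq2 hc1, ← err_eq1 hS hc2]
  simp only [← Finset.sum_add_distrib]
  refine Finset.sum_le_sum fun u _ => Finset.sum_le_sum fun t _ => Finset.sum_le_sum fun y _ =>
    Finset.sum_le_sum fun z _ => ?_
  have : 0 ≤ P u * S t * c1 u y * c2 u t z :=
    mul_nonneg (mul_nonneg (mul_nonneg (hP.1 u) (hS.1 t)) ((hc1 u).1 y)) ((hc2 u t).1 z)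
  rw [← mul_add]
  refine mul_le_mul_of_nonneg_left ?_ this
  by_cases h1 : a u y <;> by_cases h2 : b u t z <;> simp [h1, h2]

end

section
variable {U1 V1 U2 X1 X2 Y1 Y2 : Type}
  [Fintype U1] [Fintype V1] [Fintype U2]
  [Fintype X1] [Fintype X2] [Fintype Y1] [Fintype Y2]
  {ch1 : X1 → Y1 → ℝ} {ch2 : X1 × X2 → Y2 → ℝ} {pU1 : U1 → ℝ} {h1 : U1 → V1} {pU2 : U2 → ℝ}

lemma perr_ge1 (hch1 : IsKernel ch1) (hch2 : IsKernel ch2) (hpU1 : IsPMF pU1) (hpU2 : IsPMF pU2)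
    (n : ℕ) (f1 : (Fin n → U1) → Fin n → X1) (f2 : (Fin n → U2) → Fin n → X2)
    (g1 : (Fin n → Y1) → Fin n → U1)
    (g2 : (Fin n → Y2) → (Fin n → V1) → Fin n → U2)
    [∀ y u, Decidable (g1 y = u)] :
    ∑ u : Fin n → U1, ∑ y : Fin n → Y1, (∏ i, pU1 (u i)) * (∏ i, ch1 (f1 u i) (y i)) *
      (if g1 y = u then 0 else 1) ≤ PerrZDet ch1 ch2 pU1 h1 pU2 n f1 f2 g1 g2 :=
  err_ge1 (P := fun u : Fin n → U1 => ∏ i, pU1 (u i)) (S := fun u : Fin n → U2 => ∏ i, pU2 (u i))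
    (c1 := fun u (y : Fin n → Y1) => ∏ i, ch1 (f1 u i) (y i))
    (c2 := fun u t (z : Fin n → Y2) => ∏ i, ch2 (f1 u i, f2 t i) (z i))
    (IsPMF.pi fun _ => hpU1) (IsPMF.pi fun _ => hpU2)
    (fun u => IsPMF.pi (p := fun i => ch1 (f1 u i)) fun i => hch1 _)
    (fun u t => IsPMF.pi (p := fun i => ch2 (f1 u i, f2 t i)) fun i => hch2 _)
    (fun u y => g1 y = u) (fun u t z => g2 z (fun i => h1 (u i)) = t)

lemma perr_ge2 (hch1 : IsKernel ch1) (hch2 : IsKernel ch2) (hpU1 : IsPMF pU1) (hpU2 : IsPMF pU2)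
    (n : ℕ) (f1 : (Fin n → U1) → Fin n → X1) (f2 : (Fin n → U2) → Fin n → X2)
    (g1 : (Fin n → Y1) → Fin n → U1)
    (g2 : (Fin n → Y2) → (Fin n → V1) → Fin n → U2)
    [∀ z v t, Decidable (g2 z v = t)] :
    ∑ u : Fin n → U1, (∏ i, pU1 (u i)) * ∑ t : Fin n → U2, ∑ z : Fin n → Y2,
      (∏ i, pU2 (t i)) * (∏ i, ch2 (f1 u i, f2 t i) (z i)) *
      (if g2 z (fun i => h1 (u i)) = t then 0 else 1) ≤
      PerrZDet ch1 ch2 pU1 h1 pU2 n f1 f2 g1 g2 :=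
  err_ge2 (P := fun u : Fin n → U1 => ∏ i, pU1 (u i)) (S := fun u : Fin n → U2 => ∏ i, pU2 (u i))
    (c1 := fun u (y : Fin n → Y1) => ∏ i, ch1 (f1 u i) (y i))
    (c2 := fun u t (z : Fin n → Y2) => ∏ i, ch2 (f1 u i, f2 t i) (z i))
    (IsPMF.pi fun _ => hpU1) (IsPMF.pi fun _ => hpU2)
    (fun u => IsPMF.pi (p := fun i => ch1 (f1 u i)) fun i => hch1 _)
    (fun u t => IsPMF.pi (p := fun i => ch2 (f1 u i, f2 t i)) fun i => hch2 _)
    (fun u y => g1 y = u) (fun u t z => g2 z (fun i => h1 (u i)) = t)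

end

end PieceP4b

section PieceP4c

set_option linter.unusedSectionVars false
set_option linter.unusedVariables false

lemma fanoD {A B : Type*} [Fintype A] [Fintype B] {P : A → ℝ} (hP : IsPMF P)
    {c : A → B → ℝ} (hc : IsKernel c) (g : B → A) [∀ b a, Decidable (g b = a)] :
    Hn P ≤ Hn (outp P c) - ∑ a, P a * Hn (c a) + Real.log 2
      + (∑ a, ∑ b, P a * c a b * (if g b = a then 0 else 1)) * Real.log (Fintype.card A) := by
  convert fano hP hc g

lemma avg_a {ι : Type*} [Fintype ι] {w : ι → ℝ} (hw : IsPMF w) {x y : ι → ℝ} {a b n l m : ℝ}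
    (h : ∀ v, a ≤ b - n * x v + l + y v * m) :
    a ≤ b - n * (∑ v, w v * x v) + l + (∑ v, w v * y v) * m := by
  have h1 := Finset.sum_le_sum fun v (_ : v ∈ Finset.univ) =>
    mul_le_mul_of_nonneg_left (h v) (hw.1 v)
  rw [← Finset.sum_mul, hw.2, one_mul] at h1
  refine h1.trans (le_of_eq ?_)
  have : ∀ v, w v * (b - n * x v + l + y v * m) =
    w v * (b + l) - n * (w v * x v) + (w v * y v) * m := fun v => by ring
  simp only [this, Finset.sum_add_distrib, Finset.sum_sub_distrib, ← Finset.sum_mul, hw.2,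
    ← Finset.mul_sum]
  ring

lemma avg_b {ι : Type*} [Fintype ι] {w : ι → ℝ} (hw : IsPMF w) {s x z d y y' : ι → ℝ}
    {a b n l m m' : ℝ}
    (h : ∀ v, s v + a ≤ b + n * x v - n * z v - n * d v + l + (y v * m + y' v * m')) :
    (∑ v, w v * s v) + a ≤ b + n * (∑ v, w v * x v) - n * (∑ v, w v * z v)
      - n * (∑ v, w v * d v) + l + ((∑ v, w v * y v) * m + (∑ v, w v * y' v) * m') := by
  have h1 := Finset.sum_le_sum fun v (_ : v ∈ Finset.univ) =>
    mul_le_mul_of_nonneg_left (h v) (hw.1 v)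
  have e1 : ∀ v, w v * (s v + a) = w v * s v + w v * a := fun v => by ring
  have e2 : ∀ v, w v * (b + n * x v - n * z v - n * d v + l + (y v * m + y' v * m')) =
    w v * (b + l) + n * (w v * x v) - n * (w v * z v) - n * (w v * d v) +
      ((w v * y v) * m + (w v * y' v) * m') := fun v => by ring
  simp only [e1, e2, Finset.sum_add_distrib, Finset.sum_sub_distrib, ← Finset.sum_mul, hw.2,
    ← Finset.mul_sum] at h1
  linarith

section
variable {U1 V1 U2 X1 X2 Y1 Y2 : Type}
  [Fintype U1] [Fintype V1] [Fintype U2]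
  [Fintype X1] [Fintype X2] [Fintype Y1] [Fintype Y2]
  {ch1 : X1 → Y1 → ℝ} {ch2 : X1 × X2 → Y2 → ℝ} {pU1 : U1 → ℝ} {h1 : U1 → V1} {pU2 : U2 → ℝ}

lemma log_card_fin (n : ℕ) (U : Type*) [Fintype U] :
    Real.log (Fintype.card (Fin n → U)) = n * Real.log (Fintype.card U) := by
  simp

lemma conv_n [Nonempty X1] (hch1 : IsKernel ch1) (hch2 : IsKernel ch2) (hc1 : Cond1 ch2)
    (hpU1 : IsPMF pU1) (hpU2 : IsPMF pU2) (x0 : X2)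
    {ρ : V1 → U1 → ℝ} (hρ : IsKernel ρ)
    (hd : ∀ v u, (if h1 u = v then pU1 u else 0) = pr pU1 h1 v * ρ v u)
    (n : ℕ) (hn : 0 < n) (f1 : (Fin n → U1) → Fin n → X1) (f2 : (Fin n → U2) → Fin n → X2)
    (g1 : (Fin n → Y1) → Fin n → U1)
    (g2 : (Fin n → Y2) → (Fin n → V1) → Fin n → U2) (ε : ℝ)
    (hε : ε = 2 * Real.log 2 / n + PerrZDet ch1 ch2 pU1 h1 pU2 n f1 f2 g1 g2 *
      (Real.log (Fintype.card U1) + Real.log (Fintype.card U2))) :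
    ∃ c ∈ CC ch1 (fun x => ch2 (x, x0)),
      Hn pU1 ≤ Hn (outp c.1 ch1) - ∑ x, c.1 x * Hn (ch1 x) + ε ∧
      Hn pU2 ≤ tau ch2 * Real.log 2 - c.2.2 + ε ∧
      (∑ v, pr pU1 h1 v * Hn (ρ v)) + Hn pU2 ≤
        tau ch2 * Real.log 2 - c.2.2 + c.2.1 - ∑ x, c.1 x * Hn (ch1 x) + ε := by
  have hn' : (0 : ℝ) < n := by exact_mod_cast hn
  have hV : IsPMF (fun v : Fin n → V1 => ∏ i, pr pU1 h1 (v i)) :=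
    IsPMF.pi fun _ => isPMF_pr hpU1 h1
  have hR : ∀ v : Fin n → V1, IsPMF (fun u : Fin n → U1 => ∏ i, ρ (v i) (u i)) :=
    fun v => IsPMF.pi fun i => hρ (v i)
  have hP : IsPMF (fun u : Fin n → U1 => ∏ i, pU1 (u i)) := IsPMF.pi fun _ => hpU1
  have hS : IsPMF (fun u : Fin n → U2 => ∏ i, pU2 (u i)) := IsPMF.pi fun _ => hpU2
  have hK1 : IsKernel (fun (u : Fin n → U1) (y : Fin n → Y1) => ∏ i, ch1 (f1 u i) (y i)) :=
    fun u => IsPMF.pi (p := fun i => ch1 (f1 u i)) fun i => hch1 _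
  have hK2 : ∀ t : Fin n → U2, IsKernel (fun (u : Fin n → U1) (z : Fin n → Y2) =>
      ∏ i, ch2 (f1 u i, f2 t i) (z i)) :=
    fun t u => IsPMF.pi (p := fun i => ch2 (f1 u i, f2 t i)) fun i => hch2 _
  have hHK1 : ∀ u : Fin n → U1, Hn (fun y : Fin n → Y1 => ∏ i, ch1 (f1 u i) (y i)) =
      ∑ i, Hn (ch1 (f1 u i)) := fun u => Hn_pi (fun i => ch1 (f1 u i)) (fun i => (hch1 _).2)
  have hHP : Hn (fun u : Fin n → U1 => ∏ i, pU1 (u i)) = n * Hn pU1 := by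
    rw [Hn_pi (fun _ => pU1) (fun _ => hpU1.2)]; simp
  have hHS : Hn (fun u : Fin n → U2 => ∏ i, pU2 (u i)) = n * Hn pU2 := by
    rw [Hn_pi (fun _ => pU2) (fun _ => hpU2.2)]; simp
  have hHR : ∀ v : Fin n → V1, Hn (fun u : Fin n → U1 => ∏ i, ρ (v i) (u i)) =
      ∑ i, Hn (ρ (v i)) := fun v => Hn_pi (fun i => ρ (v i)) (fun i => (hρ _).2)
  choose c hcC hcφ hcd hcz using fun v : Fin n → V1 =>
    tensorize hch1 (fun x => hch2 (x, x0)) n (pr (fun u : Fin n → U1 => ∏ i, ρ (v i) (u i)) f1)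
      (isPMF_pr (hR v) f1)
  simp only [sum_pr_mul] at hcφ
  -- channel one, conditional on v
  have hB : ∀ v, _ := fun v => fanoD (hR v) hK1 g1
  have hC : ∀ v : Fin n → V1, _ := fun v => fanoD hS
    (c := fun t => outp (fun u : Fin n → U1 => ∏ i, ρ (v i) (u i))
      (fun u (z : Fin n → Y2) => ∏ i, ch2 (f1 u i, f2 t i) (z i)))
    (fun t => (hR v).out (hK2 t)) (fun z => g2 z v)
  have hA := fanoD hP hK1 g1
  simp only [hHK1, hHR, log_card_fin] at hB
  simp only [hHK1, hHP, log_card_fin] at hA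
  simp only [hHS, log_card_fin] at hC
  have hZ : ∀ (v : Fin n → V1) (t : Fin n → U2),
      Hn (outp (fun u : Fin n → U1 => ∏ i, ρ (v i) (u i))
        (fun u (z : Fin n → Y2) => ∏ i, ch2 (f1 u i, f2 t i) (z i))) =
      Hn (outp (pr (fun u : Fin n → U1 => ∏ i, ρ (v i) (u i)) f1)
        (cn (fun x => ch2 (x, x0)) n)) := by
    intro v t
    rw [← outp_pr _ f1 (fun x1 (z : Fin n → Y2) => ∏ i, ch2 (x1 i, f2 t i) (z i))]
    exact cond1_n hc1 n (isPMF_pr (hR v) f1) (f2 t) (fun _ => x0)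
  have hY : ∀ (v : Fin n → V1), outp (fun u : Fin n → U1 => ∏ i, ρ (v i) (u i))
        (fun u (z : Fin n → Y1) => ∏ i, ch1 (f1 u i) (z i)) =
      (outp (pr (fun u : Fin n → U1 => ∏ i, ρ (v i) (u i)) f1) (cn ch1 n)) := by
    intro v
    rw [outp_pr]
    rfl
  simp only [hZ, ← Finset.sum_mul, hS.2, one_mul] at hC
  simp only [hY, ← hcφ _ (fun x => Hn (ch1 x))] at hB
  have hYb := fun v => y2_bound hch2 (hR v) hS f1 f2
  set L1 := Real.log (Fintype.card U1)
  set L2 := Real.log (Fintype.card U2)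
  set τ := tau ch2 * Real.log 2
  set e1 := fun v : Fin n → V1 => ∑ u : Fin n → U1, ∑ y : Fin n → Y1,
    (∏ i, ρ (v i) (u i)) * (∏ i, ch1 (f1 u i) (y i)) * (if g1 y = u then 0 else 1) with he1
  set e2 := fun v : Fin n → V1 => ∑ t : Fin n → U2, ∑ z : Fin n → Y2,
    (∏ i, pU2 (t i)) * (outp (fun u : Fin n → U1 => ∏ i, ρ (v i) (u i))
        (fun u (z : Fin n → Y2) => ∏ i, ch2 (f1 u i, f2 t i) (z i)) z) *
      (if g2 z v = t then 0 else 1) with he2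
  set Pe := PerrZDet ch1 ch2 pU1 h1 pU2 n f1 f2 g1 g2
  have hE1 : ∑ v : Fin n → V1, (∏ i, pr pU1 h1 (v i)) * e1 v ≤ Pe := by
    refine le_trans (le_of_eq ?_) (perr_ge1 (h1 := h1) hch1 hch2 hpU1 hpU2 n f1 f2 g1 g2)
    have := src_avg hd n (fun _ u => ∑ y : Fin n → Y1, (∏ i, ch1 (f1 u i) (y i)) *
      (if g1 y = u then 0 else 1))
    simp only [Finset.mul_sum, ← mul_assoc] at this
    simp only [he1, Finset.mul_sum, ← mul_assoc]
    exact this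
  have hE2 : ∑ v : Fin n → V1, (∏ i, pr pU1 h1 (v i)) * e2 v ≤ Pe := by
    refine le_trans (le_of_eq ?_) (perr_ge2 (h1 := h1) hch1 hch2 hpU1 hpU2 n f1 f2 g1 g2)
    rw [← src_avg hd n (fun v u => ∑ t : Fin n → U2, ∑ z : Fin n → Y2,
      (∏ i, pU2 (t i)) * (∏ i, ch2 (f1 u i, f2 t i) (z i)) *
      (if g2 z v = t then 0 else 1))]
    refine Finset.sum_congr rfl fun v _ => ?_
    congr 1
    simp only [he2, outp, Finset.mul_sum, Finset.sum_mul]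
    refine (Finset.sum_congr rfl fun t _ => Finset.sum_comm).trans ?_
    refine Finset.sum_comm.trans ?_
    refine Finset.sum_congr rfl fun u _ => Finset.sum_congr rfl fun t _ =>
      Finset.sum_congr rfl fun z _ => ?_
    ring
  have hCv : ∀ v, n * Hn pU2 ≤ n * τ - n * (c v).2.2 + Real.log 2 + e2 v * (n * L2) := by
    intro v
    have := hC v
    have := hYb v
    have := hcz v
    linarith
  have hBC : ∀ v : Fin n → V1, ∑ i, Hn (ρ (v i)) + n * Hn pU2 ≤ n * τ + n * (c v).2.1
      - n * (c v).2.2 - n * (∑ x, (c v).1 x * Hn (ch1 x)) + 2 * Real.log 2 +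
        (e1 v * (n * L1) + e2 v * (n * L2)) := by
    intro v
    have := hC v
    have := hYb v
    have := hB v
    have := hcd v
    linarith
  have hCa := avg_a hV hCv
  have hBCa := avg_b hV hBC
  have hs : ∑ v : Fin n → V1, (∏ i, pr pU1 h1 (v i)) * ∑ i, Hn (ρ (v i)) =
      n * ∑ v, pr pU1 h1 v * Hn (ρ v) := by
    simp only [Finset.mul_sum]
    rw [Finset.sum_comm]
    simp only [sum_pi_one (fun _ : Fin n => pr pU1 h1) (fun _ => (isPMF_pr hpU1 h1).2) _
      (fun v => Hn (ρ v))]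
    simp [Finset.mul_sum]
  set cb := ∑ v : Fin n → V1, (∏ i, pr pU1 h1 (v i)) • c v with hcb
  have q1 : ∀ φ : X1 → ℝ, ∑ x, cb.1 x * φ x =
      ∑ v : Fin n → V1, (∏ i, pr pU1 h1 (v i)) * ∑ x, (c v).1 x * φ x := by
    intro φ
    simp only [hcb, Prod.fst_sum, Finset.sum_apply, Prod.smul_fst, Pi.smul_apply, smul_eq_mul,
      Finset.sum_mul, Finset.mul_sum]
    rw [Finset.sum_comm]
    simp only [mul_assoc]
  have q2 : cb.2.1 = ∑ v : Fin n → V1, (∏ i, pr pU1 h1 (v i)) * (c v).2.1 := by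
    simp [hcb, Prod.fst_sum, Prod.snd_sum]
  have q3 : cb.2.2 = ∑ v : Fin n → V1, (∏ i, pr pU1 h1 (v i)) * (c v).2.2 := by
    simp [hcb, Prod.snd_sum]
  have q4 : ∀ φ : X1 → ℝ, n * ∑ x, cb.1 x * φ x =
      ∑ u : Fin n → U1, (∏ i, pU1 (u i)) * ∑ i, φ (f1 u i) := by
    intro φ
    rw [q1, Finset.mul_sum, ← src_avg hd n (fun _ u => ∑ i, φ (f1 u i))]
    refine Finset.sum_congr rfl fun v _ => ?_
    rw [← hcφ]
    ring
  have hA1 : Hn (outp (fun u : Fin n → U1 => ∏ i, pU1 (u i))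
      (fun u (y : Fin n → Y1) => ∏ i, ch1 (f1 u i) (y i))) ≤ n * Hn (outp cb.1 ch1) := by
    refine (out_prod_bound hP (d := fun u i => ch1 (f1 u i)) (fun u i => hch1 _)).trans ?_
    have hw : IsPMF (fun _ : Fin n => (1 : ℝ) / n) := by
      refine ⟨fun _ => by positivity, ?_⟩
      simp
      field_simp
    have := Hn_concave hw (q := fun i => outp (fun u : Fin n → U1 => ∏ i, pU1 (u i))
      (fun u => ch1 (f1 u i))) (fun i a => (hP.out fun u => hch1 _).1 a)
    have e : outp (fun _ : Fin n => (1 : ℝ) / n) (fun i => outp (fun u : Fin n → U1 =>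
        ∏ i, pU1 (u i)) (fun u => ch1 (f1 u i))) = outp cb.1 ch1 := by
      funext b
      have h3 := q4 (fun x => ch1 x b)
      simp only [outp]
      rw [← Finset.mul_sum, Finset.sum_comm]
      simp only [← Finset.mul_sum]
      rw [← h3]
      field_simp
    rw [e, ← Finset.mul_sum] at this
    rw [one_div, inv_mul_le_iff₀ hn'] at this
    exact this
  have hA2 := perr_ge1 (h1 := h1) hch1 hch2 hpU1 hpU2 n f1 f2 g1 g2
  have hl2 := log2_pos
  have hL1 : 0 ≤ L1 := Real.log_natCast_nonneg _
  have hL2 : 0 ≤ L2 := Real.log_natCast_nonneg _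
  have hPe0 : 0 ≤ Pe := by
    refine le_trans ?_ hA2
    refine Finset.sum_nonneg fun u _ => Finset.sum_nonneg fun y _ => ?_
    refine mul_nonneg (mul_nonneg (hP.1 u) ((hK1 u).1 y)) ?_
    split_ifs <;> norm_num
  have hnε : n * ε = 2 * Real.log 2 + Pe * (n * L1) + Pe * (n * L2) := by
    rw [hε]; field_simp; ring
  have p1 : 0 ≤ Pe * (n * L1) := by positivity
  have p2 : 0 ≤ Pe * (n * L2) := by positivity
  have r1 := mul_le_mul_of_nonneg_right hE1 (by positivity : 0 ≤ n * L1)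
  have r2 := mul_le_mul_of_nonneg_right hE2 (by positivity : 0 ≤ n * L2)
  have r3 := mul_le_mul_of_nonneg_right hA2 (by positivity : 0 ≤ n * L1)
  refine ⟨cb, CC_mix hV hcC, ?_, ?_, ?_⟩
  · refine le_of_mul_le_mul_left ?_ hn'
    have := q4 (fun x => Hn (ch1 x))
    rw [mul_add, mul_sub, this, hnε]
    linarith
  · refine le_of_mul_le_mul_left ?_ hn'
    rw [mul_add, mul_sub, hnε, q3]
    linarith
  · refine le_of_mul_le_mul_left ?_ hn'
    rw [hs] at hBCa
    rw [q1, q2, q3, mul_add, mul_add, mul_sub, mul_add, mul_sub, hnε]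
    linarith
end

end PieceP4c

section PieceP4d

set_option linter.unusedSectionVars false
set_option linter.unusedVariables false

section
variable {U1 V1 U2 X1 X2 Y1 Y2 : Type}
  [Fintype U1] [Fintype V1] [Fintype U2]
  [Fintype X1] [Fintype X2] [Fintype Y1] [Fintype Y2]
  {ch1 : X1 → Y1 → ℝ} {ch2 : X1 × X2 → Y2 → ℝ} {pU1 : U1 → ℝ} {h1 : U1 → V1} {pU2 : U2 → ℝ}
  {pstar : X2 → ℝ}

/-- `I(W,X2;Y2)` under Conditions 1 and 2. -/
lemma mi2_cond {m : ℕ} {pW : Fin m → ℝ} {k : Fin m → X1 → ℝ}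
    (hch1 : IsKernel ch1) (hch2 : IsKernel ch2) (hc1 : Cond1 ch2) (hc2 : Cond2 ch2 pstar)
    (hpW : IsPMF pW) (hk : ∀ w, IsPMF (k w)) (x0 : X2) :
    mi (jointZ m pW k pstar ch1 ch2) (fun ω => (ω.1, ω.2.2.1)) (fun ω => ω.2.2.2.2) =
      (tau ch2 * Real.log 2 - ∑ w, pW w * Hn (outp (k w) (fun x1 => ch2 (x1, x0)))) /
        Real.log 2 := by
  rw [mi2_eq hpW hc2.1 hk hch1 hch2, out_mix, cond2_H hc2 (hpW.out hk)]
  congr 2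
  refine Finset.sum_congr rfl fun w _ => ?_
  calc _ = ∑ x2, pstar x2 * (pW w * Hn (outp (k w) (fun x1 => ch2 (x1, x0)))) :=
        Finset.sum_congr rfl fun x2 _ => by
          rw [cond1_1 hc1 (hk w) x2 x0]; ring
    _ = _ := by rw [← Finset.sum_mul, hc2.1.2, one_mul]

lemma converse (hch1 : IsKernel ch1) (hch2 : IsKernel ch2)
    (hc1 : Cond1 ch2) (hc2 : Cond2 ch2 pstar)
    (hpU1 : IsPMF pU1) (hpU2 : IsPMF pU2) (hrel : ReliableZDet ch1 ch2 pU1 h1 pU2) :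
    ∃ (m : ℕ) (pW : Fin m → ℝ) (k : Fin m → X1 → ℝ),
        IsPMF pW ∧ (∀ w, IsPMF (k w)) ∧
        ent pU1 id ≤ mi (jointZ m pW k pstar ch1 ch2) (fun ω => ω.2.1) (fun ω => ω.2.2.2.1) ∧
        ent pU2 id ≤ mi (jointZ m pW k pstar ch1 ch2) (fun ω => (ω.1, ω.2.2.1))
          (fun ω => ω.2.2.2.2) ∧
        condEnt pU1 id h1 + ent pU2 id ≤
          mi (jointZ m pW k pstar ch1 ch2) (fun ω => (ω.1, ω.2.2.1)) (fun ω => ω.2.2.2.2) +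
          cmi (jointZ m pW k pstar ch1 ch2) (fun ω => ω.2.1) (fun ω => ω.2.2.2.1)
            (fun ω => ω.1) := by
  obtain ⟨f1, f2, g1, g2, hPe⟩ := hrel
  obtain ⟨u0⟩ := hpU1.nonempty
  obtain ⟨x0⟩ := hc2.1.nonempty
  have : Nonempty X1 := ⟨f1 1 (fun _ => u0) 0⟩
  obtain ⟨ρ, hρ, hd⟩ := src_dis hpU1 h1
  set L := Real.log (Fintype.card U1) + Real.log (Fintype.card U2)
  set ε : ℕ → ℝ := fun n => 2 * Real.log 2 / ((n + 1 : ℕ) : ℝ) +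
    PerrZDet ch1 ch2 pU1 h1 pU2 (n + 1) (f1 (n + 1)) (f2 (n + 1)) (g1 (n + 1)) (g2 (n + 1)) * L
  have hε : Tendsto ε atTop (nhds 0) := by
    have a1 : Tendsto (fun n : ℕ => 2 * Real.log 2 / ((n + 1 : ℕ) : ℝ)) atTop (nhds 0) :=
      (tendsto_const_div_atTop_nhds_zero_nat (2 * Real.log 2)).comp (tendsto_add_atTop_nat 1)
    have a2 := (hPe.comp (tendsto_add_atTop_nat 1)).mul_const L
    have := a1.add a2
    rw [zero_mul, add_zero] at this
    exact this
  choose c hcC hA hB hC using fun n : ℕ => conv_n hch1 hch2 hc1 hpU1 hpU2 x0 hρ hd (n + 1)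
    (Nat.succ_pos n) (f1 (n + 1)) (f2 (n + 1)) (g1 (n + 1)) (g2 (n + 1)) (ε n) rfl
  obtain ⟨c', hc', φ, hφ, hlim⟩ := (isCompact_CC ch1 (fun x => ch2 (x, x0))).tendsto_subseq hcC
  have hεφ := hε.comp hφ.tendsto_atTop
  have c1 : Continuous fun c : (X1 → ℝ) × ℝ × ℝ =>
      Hn (outp c.1 ch1) - ∑ x, c.1 x * Hn (ch1 x) :=
    ((continuous_Hn_outp ch1).comp continuous_fst).sub (by fun_prop)
  have c2 : Continuous fun c : (X1 → ℝ) × ℝ × ℝ => tau ch2 * Real.log 2 - c.2.2 := by fun_prop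
  have c3 : Continuous fun c : (X1 → ℝ) × ℝ × ℝ =>
      tau ch2 * Real.log 2 - c.2.2 + c.2.1 - ∑ x, c.1 x * Hn (ch1 x) := by fun_prop
  have lA := ge_of_tendsto' (((c1.tendsto c').comp hlim).add hεφ) (fun n => hA (φ n))
  have lB := ge_of_tendsto' (((c2.tendsto c').comp hlim).add hεφ) (fun n => hB (φ n))
  have lC := ge_of_tendsto' (((c3.tendsto c').comp hlim).add hεφ) (fun n => hC (φ n))
  rw [add_zero] at lA lB lC
  obtain ⟨m, pW, k, hpW, hk, e1, e2, e3⟩ := CC_exists hc'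
  refine ⟨m, pW, k, hpW, hk, ?_, ?_, ?_⟩
  · rw [mi1_eq hc2.1 hk hch1 hch2, src_id, ← e1]
    exact div_le_div_of_nonneg_right lA log2_pos.le
  · rw [mi2_cond hch1 hch2 hc1 hc2 hpW hk x0, src_id, ← e3]
    exact div_le_div_of_nonneg_right lB log2_pos.le
  · rw [mi2_cond hch1 hch2 hc1 hc2 hpW hk x0, src_id, src_condEnt hpU1 h1 hρ hd,
      cmi_eq hpW hc2.1 hk hch1 hch2, ← e3, ← e2, ← e1, ← add_div, ← add_div]
    refine div_le_div_of_nonneg_right ?_ log2_pos.le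
    linarith

end

end PieceP4d

section PieceP5a

set_option linter.unusedSectionVars false
set_option linter.unusedVariables false

/-- expectation -/
noncomputable def Ex {α : Type*} [Fintype α] (p : α → ℝ) (f : α → ℝ) : ℝ := ∑ a, p a * f a

/-- indicator -/
noncomputable def ind (p : Prop) : ℝ := if p then 1 else 0

lemma ind_nonneg (p : Prop) : 0 ≤ ind p := by unfold ind; split_ifs <;> norm_num
lemma ind_mono {p q : Prop} (h : p → q) : ind p ≤ ind q := by
  unfold ind
  by_cases hp : p
  · rw [if_pos hp, if_pos (h hp)]
  · rw [if_neg hp]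
    split_ifs <;> norm_num

section
variable {α β : Type*} [Fintype α] [Fintype β] {p : α → ℝ} {q : β → ℝ}

lemma Ex_mono (hp : IsPMF p) {f g : α → ℝ} (h : ∀ a, f a ≤ g a) : Ex p f ≤ Ex p g :=
  Finset.sum_le_sum fun a _ => mul_le_mul_of_nonneg_left (h a) (hp.1 a)

lemma Ex_congr {f g : α → ℝ} (h : ∀ a, f a = g a) : Ex p f = Ex p g := by
  rw [funext h]

lemma Ex_add (f g : α → ℝ) : Ex p (fun a => f a + g a) = Ex p f + Ex p g := by
  simp [Ex, mul_add, Finset.sum_add_distrib]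

lemma Ex_sum {ι : Type*} (s : Finset ι) (f : ι → α → ℝ) :
    Ex p (fun a => ∑ i ∈ s, f i a) = ∑ i ∈ s, Ex p (f i) := by
  simp only [Ex, Finset.mul_sum]
  rw [Finset.sum_comm]

lemma Ex_mul (c : ℝ) (f : α → ℝ) : Ex p (fun a => c * f a) = c * Ex p f := by
  simp only [Ex, Finset.mul_sum]
  exact Finset.sum_congr rfl fun a _ => by ring

lemma Ex_const (hp : IsPMF p) (c : ℝ) : Ex p (fun _ => c) = c := by
  simp only [Ex]
  rw [← Finset.sum_mul, hp.2, one_mul]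

lemma Ex_nonneg (hp : IsPMF p) {f : α → ℝ} (h : ∀ a, 0 ≤ f a) : 0 ≤ Ex p f :=
  Finset.sum_nonneg fun a _ => mul_nonneg (hp.1 a) (h a)

lemma Ex_le (hp : IsPMF p) {f : α → ℝ} {c : ℝ} (h : ∀ a, f a ≤ c) : Ex p f ≤ c :=
  (Ex_mono hp h).trans (Ex_const hp c).le

lemma Ex_comm (p : α → ℝ) (q : β → ℝ) (f : α → β → ℝ) :
    Ex p (fun a => Ex q (fun b => f a b)) = Ex q (fun b => Ex p (fun a => f a b)) := by
  simp only [Ex, Finset.mul_sum]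
  rw [Finset.sum_comm]
  exact Finset.sum_congr rfl fun a _ => Finset.sum_congr rfl fun b _ => by ring

lemma Ex_outp (p : α → ℝ) (c : α → β → ℝ) (f : β → ℝ) :
    Ex (outp p c) f = Ex p (fun a => Ex (c a) f) := by
  simp only [Ex, outp, Finset.mul_sum, Finset.sum_mul]
  rw [Finset.sum_comm]
  exact Finset.sum_congr rfl fun a _ => Finset.sum_congr rfl fun b _ => by ring

lemma Ex_prod (p : α → ℝ) (q : β → ℝ) (f : α × β → ℝ) :
    Ex (fun x : α × β => p x.1 * q x.2) f = Ex p (fun a => Ex q (fun b => f (a, b))) := by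
  simp only [Ex, Fintype.sum_prod_type, Finset.mul_sum]
  exact Finset.sum_congr rfl fun a _ => Finset.sum_congr rfl fun b _ => by ring

lemma Ex_exists (hp : IsPMF p) (f : α → ℝ) : ∃ a, f a ≤ Ex p f := by
  by_contra! hcon
  obtain ⟨a0⟩ := hp.nonempty
  have h1 : ∀ a, p a * Ex p f ≤ p a * f a :=
    fun a => mul_le_mul_of_nonneg_left (hcon a).le (hp.1 a)
  obtain ⟨a, ha⟩ : ∃ a, 0 < p a := by
    by_contra! hz
    have : ∑ a, p a ≤ 0 := Finset.sum_nonpos fun a _ => hz a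
    rw [hp.2] at this
    linarith
  have h2 : ∑ a, p a * Ex p f < ∑ a, p a * f a :=
    Finset.sum_lt_sum (fun a _ => h1 a) ⟨a, Finset.mem_univ _, mul_lt_mul_of_pos_left (hcon a) ha⟩
  rw [← Finset.sum_mul, hp.2, one_mul] at h2
  exact lt_irrefl _ h2

lemma Ex_pi1 {ι J : Type*} [Fintype ι] [DecidableEq ι] [Fintype J] {p : ι → J → ℝ}
    (hp : ∀ i, IsPMF (p i)) (i0 : ι) (φ : J → ℝ) :
    Ex (fun F : ι → J => ∏ i, p i (F i)) (fun F => φ (F i0)) = Ex (p i0) φ :=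
  sum_pi_one p (fun i => (hp i).2) i0 φ

lemma Ex_pi2 {ι J : Type*} [Fintype ι] [DecidableEq ι] [Fintype J] {p : ι → J → ℝ}
    (hp : ∀ i, IsPMF (p i)) {i0 i1 : ι} (hne : i0 ≠ i1) (φ : J → J → ℝ) :
    Ex (fun F : ι → J => ∏ i, p i (F i)) (fun F => φ (F i0) (F i1)) =
      Ex (p i0) (fun j => Ex (p i1) (fun j' => φ j j')) := by
  refine (sum_pi_two p (fun i => (hp i).2) i0 i1 hne φ).trans ?_
  simp only [Ex, Finset.mul_sum, mul_assoc]

end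

lemma dec_exists {U Y : Type*} [Fintype U] [Nonempty U] (G : U → Y → Prop) :
    ∃ g : Y → U, ∀ u y, ind (g y ≠ u) ≤ ind (¬ G u y) + ∑ u', if u' = u then 0 else ind (G u' y) := by
  refine ⟨fun y => if h : ∃ u, G u y then h.choose else Classical.arbitrary U, fun u y => ?_⟩
  have hs : 0 ≤ ∑ u', if u' = u then 0 else ind (G u' y) :=
    Finset.sum_nonneg fun u' _ => by split_ifs; exacts [le_rfl, ind_nonneg _]
  by_cases hG : G u y
  · by_cases he : (if h : ∃ u, G u y then h.choose else Classical.arbitrary U) = u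
    · simp only [ne_eq, he, not_true_eq_false]
      simp only [ind, if_false]
      exact add_nonneg (by split_ifs <;> norm_num) hs
    · have hex : ∃ u, G u y := ⟨u, hG⟩
      rw [dif_pos hex] at he
      have : ind (G hex.choose y) ≤ ∑ u', if u' = u then 0 else ind (G u' y) := by
        have := Finset.single_le_sum (f := fun u' => if u' = u then 0 else ind (G u' y))
          (fun u' _ => by split_ifs; exacts [le_rfl, ind_nonneg _])
          (Finset.mem_univ hex.choose)
        simpa [he] using this
      have h1 : ind (G hex.choose y) = 1 := if_pos hex.choose_spec
      have h2 : ind (¬ G u y) = 0 := if_neg (not_not.2 hG)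
      have h3 : ∀ q, ind q ≤ 1 := fun q => by unfold ind; split_ifs <;> norm_num
      linarith [h3 ((if h : ∃ u, G u y then h.choose else Classical.arbitrary U) ≠ u)]
  · have h2 : ind (¬ G u y) = 1 := if_pos hG
    have h3 : ∀ q, ind q ≤ 1 := fun q => by unfold ind; split_ifs <;> norm_num
    linarith [h3 ((if h : ∃ u, G u y then h.choose else Classical.arbitrary U) ≠ u)]

lemma mk_trick {Y : Type*} [Fintype Y] {q : Y → ℝ} {γ N : ℝ} (hγ : 0 < γ) {X : Type*} [Fintype X]
    {k : X → ℝ} (hk : IsPMF k) {c : X → Y → ℝ} (hc : IsKernel c) (hN : 0 ≤ N) :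
    Ex q (fun y => Ex k (fun x => ind (γ * q y ≤ N * c x y))) ≤ N / γ := by
  rw [Ex_comm]
  refine Ex_le hk fun x => ?_
  unfold Ex
  calc _ ≤ ∑ y, N * c x y / γ := Finset.sum_le_sum fun y _ => by
        show q y * ind (γ * q y ≤ N * c x y) ≤ N * c x y / γ
        unfold ind
        split_ifs with h
        · rw [le_div_iff₀ hγ]; linarith
        · rw [mul_zero]
          exact div_nonneg (mul_nonneg hN ((hc x).1 y)) hγ.le
    _ = N / γ := by rw [← Finset.sum_div, ← Finset.mul_sum, (hc x).2, mul_one]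

lemma pair_bound {I W X Y : Type*} [Fintype I] [DecidableEq I] [Fintype W] [Fintype X] [Fintype Y]
    {pW : W → ℝ} (hpW : IsPMF pW) {k : W → X → ℝ} (hk : IsKernel k) {c : W → X → Y → ℝ}
    (hc : ∀ w, IsKernel (c w)) {γ N1 N2 : ℝ} (hγ : 0 < γ) (h1 : 0 ≤ N1) (h2 : 0 ≤ N2)
    (D : W → X → Y → Prop)
    (hD1 : ∀ w x y, D w x y → γ * outp pW (fun w => outp (k w) (c w)) y ≤ N1 * c w x y)
    (hD2 : ∀ w x y, D w x y → γ * outp (k w) (c w) y ≤ N2 * c w x y) (i i' : I) :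
    Ex (fun w : I → W => ∏ j, pW (w j)) (fun w => Ex (k (w i)) fun x => Ex (k (w i')) fun x' =>
      Ex (c (w i) x) fun y => ind (D (w i') x' y)) ≤ N1 / γ + ind (i = i') * (N2 / γ) := by
  have n1 : 0 ≤ N1 / γ := div_nonneg h1 hγ.le
  by_cases hi : i = i'
  · subst hi
    have e : ind (i = i) = 1 := if_pos rfl
    rw [e, one_mul]
    refine le_trans ?_ (le_add_of_nonneg_left n1)
    rw [Ex_pi1 (p := fun _ => pW) (fun _ => hpW) i (fun w => Ex (k w) fun x => Ex (k w) fun x' =>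
      Ex (c w x) fun y => ind (D w x' y))]
    refine Ex_le hpW fun w => ?_
    calc _ = Ex (outp (k w) (c w)) fun y => Ex (k w) fun x' => ind (D w x' y) := by
          rw [Ex_outp]
          refine Ex_congr fun x => ?_
          exact Ex_comm (k w) (c w x) (fun x' y => ind (D w x' y))
      _ ≤ _ := Ex_mono ((hk w).out (hc w)) fun y => Ex_mono (hk w) fun x' =>
          ind_mono (hD2 w x' y)
      _ ≤ N2 / γ := mk_trick hγ (hk w) (hc w) h2
  · have e : ind (i = i') = 0 := if_neg hi
    rw [e, zero_mul, add_zero]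
    rw [Ex_pi2 (p := fun _ => pW) (fun _ => hpW) hi (fun w w' => Ex (k w) fun x =>
      Ex (k w') fun x' => Ex (c w x) fun y => ind (D w' x' y))]
    have hQ : IsPMF (outp pW (fun w => outp (k w) (c w))) :=
      hpW.out fun w => (hk w).out (hc w)
    calc Ex pW (fun w => Ex pW fun w' => Ex (k w) fun x =>
          Ex (k w') fun x' => Ex (c w x) fun y => ind (D w' x' y))
        = Ex (outp pW (fun w => outp (k w) (c w))) fun y => Ex pW fun w' =>
          Ex (k w') fun x' => ind (D w' x' y) := by
          rw [Ex_outp]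
          refine Ex_congr fun w => ?_
          refine Eq.trans ?_ (Ex_comm pW (outp (k w) (c w))
            (fun w' y => Ex (k w') fun x' => ind (D w' x' y)))
          refine Ex_congr fun w' => ?_
          rw [Ex_outp]
          refine Ex_congr fun x => ?_
          exact Ex_comm (k w') (c w x) (fun x' y => ind (D w' x' y))
      _ ≤ Ex (outp pW (fun w => outp (k w) (c w))) fun y => Ex pW fun w' =>
          Ex (k w') fun x' => ind (γ * outp pW (fun w => outp (k w) (c w)) y ≤ N1 * c w' x' y) :=
          Ex_mono hQ fun y => Ex_mono hpW fun w' => Ex_mono (hk w') fun x' =>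
          ind_mono (hD1 w' x' y)
      _ ≤ N1 / γ := by
          rw [Ex_comm]
          exact Ex_le hpW fun w' => mk_trick hγ (hk w') (hc w') h1


end PieceP5a

section PieceP5b

set_option linter.unusedSectionVars false
set_option linter.unusedVariables false

lemma Ex_comm3 {α β δ : Type*} [Fintype α] [Fintype β] [Fintype δ] (p : α → ℝ) (q : β → ℝ)
    (r : δ → ℝ) (f : α → β → δ → ℝ) :
    Ex p (fun a => Ex q fun b => Ex r fun d => f a b d) =
      Ex r (fun d => Ex p fun a => Ex q fun b => f a b d) := by
  refine Eq.trans ?_ (Ex_comm p r (fun a d => Ex q fun b => f a b d))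
  exact Ex_congr fun a => Ex_comm q r (fun b d => f a b d)

section
variable {U V T W X A Y Z L : Type} [Fintype U] [Fintype V] [Fintype T] [Fintype W] [Fintype X]
  [Fintype A] [Fintype Y] [Fintype Z] [Fintype L]

/-- law of the random satellite maps -/
noncomputable def qxi (U : Type) [Fintype U] (k : W → X → ℝ) : (U → W → X) → ℝ :=
  fun ξ => ∏ u, ∏ w, k w (ξ u w)

/-- iid law -/
noncomputable def qpi (I : Type) [Fintype I] (p : W → ℝ) : (I → W) → ℝ := fun f => ∏ i, p (f i)

lemma qpi_pmf {I : Type} [Fintype I] [DecidableEq I] {p : W → ℝ} (hp : IsPMF p) : IsPMF (qpi I p) :=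
  IsPMF.pi (p := fun _ => p) fun _ => hp

lemma kk_pmf {k : W → X → ℝ} (hk : IsKernel k) : IsPMF (fun f : W → X => ∏ w, k w (f w)) :=
  IsPMF.pi hk

lemma qxi_pmf {k : W → X → ℝ} (hk : IsKernel k) : IsPMF (qxi U k) :=
  IsPMF.pi (p := fun _ => fun f : W → X => ∏ w, k w (f w)) fun _ => kk_pmf hk

lemma xi1 {k : W → X → ℝ} (hk : IsKernel k) (u : U) (w : W) (φ : X → ℝ) :
    Ex (qxi U k) (fun ξ => φ (ξ u w)) = Ex (k w) φ :=
  (Ex_pi1 (p := fun _ => fun f : W → X => ∏ w, k w (f w)) (fun _ => kk_pmf hk) u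
    (fun f => φ (f w))).trans (Ex_pi1 hk w φ)

lemma xi2 {k : W → X → ℝ} (hk : IsKernel k) {u u' : U} (hu : u ≠ u') (w w' : W)
    (φ : X → X → ℝ) :
    Ex (qxi U k) (fun ξ => φ (ξ u w) (ξ u' w')) = Ex (k w) fun x => Ex (k w') fun x' => φ x x' := by
  refine (Ex_pi2 (p := fun _ => fun f : W → X => ∏ w, k w (f w)) (fun _ => kk_pmf hk) hu
    (fun f f' => φ (f w) (f' w'))).trans ?_
  refine (Ex_pi1 hk w (fun x => Ex (fun f : W → X => ∏ w, k w (f w)) fun f' => φ x (f' w'))).trans ?_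
  exact Ex_congr fun x => Ex_pi1 hk w' (fun x' => φ x x')

lemma Ex_ite {α : Type*} [Fintype α] (p : α → ℝ) (c : Prop) [Decidable c] (f : α → ℝ) :
    Ex p (fun a => if c then 0 else f a) = if c then 0 else Ex p f := by
  split_ifs
  · simp [Ex]
  · rfl

lemma rec1 {P : U → ℝ} (hP : IsPMF P) {pW : W → ℝ} (hpW : IsPMF pW) {k : W → X → ℝ}
    (hk : IsKernel k) {c1 : X → Y → ℝ} (hc1 : IsKernel c1) {γ : ℝ} (hγ : 0 < γ)
    {N : U → ℝ} (hN : ∀ u, 0 ≤ N u)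
    (D : U → W → X → Y → Prop)
    (hD1 : ∀ u w x y, D u w x y → γ * outp pW (fun w => outp (k w) c1) y ≤ P u * c1 x y)
    (hD2 : ∀ u w x y, D u w x y → γ * outp (k w) c1 y ≤ N u * c1 x y)
    {I : Type} [Fintype I] [DecidableEq I] (ι : U → I) :
    Ex (qpi I pW) (fun w => Ex (qxi U k) fun ξ => Ex P fun u => Ex (c1 (ξ u (w (ι u)))) fun y =>
      (ind (¬ D u (w (ι u)) (ξ u (w (ι u))) y) +
        ∑ u', if u' = u then 0 else ind (D u' (w (ι u')) (ξ u' (w (ι u'))) y))) ≤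
    Ex P fun u => (Ex pW fun w => Ex (k w) fun x => Ex (c1 x) fun y => ind (¬ D u w x y)) +
      ∑ u', if u' = u then 0 else (P u' / γ + ind (ι u = ι u') * (N u' / γ)) := by
  rw [Ex_comm3]
  refine Ex_mono hP fun u => ?_
  have e1 : ∀ (w : I → W) (ξ : U → W → X), (Ex (c1 (ξ u (w (ι u)))) fun y =>
      (ind (¬ D u (w (ι u)) (ξ u (w (ι u))) y) +
        ∑ u', if u' = u then 0 else ind (D u' (w (ι u')) (ξ u' (w (ι u'))) y))) =
      (Ex (c1 (ξ u (w (ι u)))) fun y => ind (¬ D u (w (ι u)) (ξ u (w (ι u))) y)) +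
       ∑ u', if u' = u then 0 else Ex (c1 (ξ u (w (ι u)))) fun y =>
          ind (D u' (w (ι u')) (ξ u' (w (ι u'))) y) := by
    intro w ξ
    rw [Ex_add, Ex_sum]
    simp only [Ex_ite]
  simp only [e1, Ex_add, Ex_sum, Ex_ite]
  refine add_le_add (le_of_eq ?_) (Finset.sum_le_sum fun u' _ => ?_)
  · refine Eq.trans (Ex_congr fun w => ?_) (Ex_pi1 (p := fun _ => pW) (fun _ => hpW) (ι u)
      (fun w => Ex (k w) fun x => Ex (c1 x) fun y => ind (¬ D u w x y)))
    exact xi1 hk u (w (ι u)) (fun x => Ex (c1 x) fun y => ind (¬ D u (w (ι u)) x y))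
  · split_ifs with hu
    · exact le_rfl
    · refine le_trans (le_of_eq (Ex_congr fun w => ?_)) (pair_bound hpW hk (c := fun _ => c1)
        (fun _ => hc1) hγ (hP.1 u') (hN u') (D u') (hD1 u') (hD2 u') (ι u) (ι u'))
      exact xi2 hk (Ne.symm hu) (w (ι u)) (w (ι u'))
        (fun x x' => Ex (c1 x) fun y => ind (D u' (w (ι u')) x' y))

lemma rec2 {P : U → ℝ} (hP : IsPMF P) {S : T → ℝ} (hS : IsPMF S) {pW : W → ℝ} (hpW : IsPMF pW)
    {k : W → X → ℝ} (hk : IsKernel k) {ps : A → ℝ} (hps : IsPMF ps)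
    {c2 : X → A → Z → ℝ} (hc2 : ∀ x, IsKernel (c2 x)) {c : W → A → Z → ℝ}
    (hcdef : ∀ w α, c w α = outp (k w) (fun x => c2 x α)) {γ : ℝ} (hγ : 0 < γ)
    {M : ℝ} (hM : 0 < M)
    (D : T → W → A → Z → Prop)
    (hD1 : ∀ t w x y, D t w x y → γ * outp pW (fun w => outp ps (c w)) y ≤ S t / M * c w x y)
    (hD2 : ∀ t w x y, D t w x y → γ * outp ps (c w) y ≤ S t * c w x y)
    {I : Type} [Fintype I] [DecidableEq I] (ι : U → I) (κ : U → L → I) :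
    Ex (qpi I pW) (fun w => Ex (qxi U k) fun ξ => Ex (qpi T ps) fun a => Ex P fun u => Ex S fun t =>
      Ex (c2 (ξ u (w (ι u))) (a t)) fun z =>
      (ind (¬ D t (w (ι u)) (a t) z) +
        ∑ t', if t' = t then 0 else ∑ l, ind (D t' (w (κ u l)) (a t') z))) ≤
    Ex P fun u => Ex S fun t => 
      (Ex pW fun w => Ex ps fun α => Ex (c w α) fun z => ind (¬ D t w α z)) +
      ∑ t', if t' = t then 0 else ∑ l, (S t' / M / γ + ind (ι u = κ u l) * (S t' / γ)) := by
  have hck : ∀ w, IsKernel (c w) := fun w α => by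
    rw [hcdef]; exact (hk w).out fun x => hc2 x α
  have e0 : ∀ (w : I → W), (Ex (qxi U k) fun ξ => Ex (qpi T ps) fun a => Ex P fun u => Ex S fun t =>
      Ex (c2 (ξ u (w (ι u))) (a t)) fun z =>
      (ind (¬ D t (w (ι u)) (a t) z) +
        ∑ t', if t' = t then 0 else ∑ l, ind (D t' (w (κ u l)) (a t') z))) =
      Ex P fun u => Ex S fun t => Ex (qpi T ps) fun a => Ex (c (w (ι u)) (a t)) fun z =>
      (ind (¬ D t (w (ι u)) (a t) z) +
        ∑ t', if t' = t then 0 else ∑ l, ind (D t' (w (κ u l)) (a t') z)) := by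
    intro w
    rw [Ex_comm3]
    refine Ex_congr fun u => ?_
    rw [Ex_comm3]
    refine Ex_congr fun t => ?_
    rw [Ex_comm]
    refine Ex_congr fun a => ?_
    rw [hcdef, Ex_outp]
    exact xi1 hk u (w (ι u)) (fun x => Ex (c2 x (a t)) fun z =>
      (ind (¬ D t (w (ι u)) (a t) z) +
        ∑ t', if t' = t then 0 else ∑ l, ind (D t' (w (κ u l)) (a t') z)))
  rw [Ex_congr e0, Ex_comm]
  refine Ex_mono hP fun u => ?_
  rw [Ex_comm]
  refine Ex_mono hS fun t => ?_
  simp only [Ex_add, Ex_sum, Ex_ite]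
  refine add_le_add (le_of_eq ?_) (Finset.sum_le_sum fun t' _ => ?_)
  · refine Eq.trans (Ex_congr fun w => ?_) (Ex_pi1 (p := fun _ => pW) (fun _ => hpW) (ι u)
      (fun w => Ex ps fun α => Ex (c w α) fun z => ind (¬ D t w α z)))
    exact Ex_pi1 (p := fun _ => ps) (fun _ => hps) t
      (fun α => Ex (c (w (ι u)) α) fun z => ind (¬ D t (w (ι u)) α z))
  · split_ifs with ht
    · exact le_rfl
    · refine Finset.sum_le_sum fun l _ => ?_
      refine le_trans (le_of_eq (Ex_congr fun w => ?_)) (pair_bound hpW (k := fun _ => ps)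
        (fun _ => hps) hck hγ (div_nonneg (hS.1 t') hM.le) (hS.1 t') (D t') (hD1 t') (hD2 t')
        (ι u) (κ u l))
      exact Ex_pi2 (p := fun _ => ps) (fun _ => hps) (Ne.symm ht)
        (fun α α' => Ex (c (w (ι u)) α) fun z => ind (D t' (w (κ u l)) α' z))

end

end PieceP5b

section PieceP5c

set_option linter.unusedSectionVars false
set_option linter.unusedVariables false

section
variable {U V T W X A Y Z L : Type} [Fintype U] [Fintype V] [Fintype T] [Fintype W] [Fintype X]
  [Fintype A] [Fintype Y] [Fintype Z] [Fintype L]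

/-- uniform law -/
noncomputable def unif (L : Type) [Fintype L] : L → ℝ := fun _ => 1 / (Fintype.card L : ℝ)

lemma unif_pmf [Nonempty L] : IsPMF (unif L) := by
  refine ⟨fun _ => by unfold unif; positivity, ?_⟩
  unfold unif
  simp

lemma ind_le_one (q : Prop) : ind q ≤ 1 := by unfold ind; split_ifs <;> norm_num

lemma sum_ind_eq [Nonempty L] (l0 : L) (x : ℝ) : ∑ l, ind (l0 = l) * x = x := by
  simp [ind]

lemma avg_bin [Nonempty L] (h : U → V) {u u' : U} (hu : u ≠ u') :
    Ex (qpi U (unif L)) (fun b => ind ((h u, b u) = (h u', b u'))) ≤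
      ind (h u' = h u) * (1 / (Fintype.card L : ℝ)) := by
  refine le_of_eq_of_le (Ex_pi2 (p := fun _ => unif L) (fun _ => unif_pmf) hu
    (fun l l' => ind ((h u, l) = (h u', l')))) ?_
  refine Ex_le unif_pmf fun l => ?_
  unfold Ex unif
  by_cases hh : h u' = h u
  · have : ind (h u' = h u) = 1 := if_pos hh
    rw [this, ← Finset.mul_sum]
    have h2 : ∀ l', ind ((h u, l) = (h u', l')) = ind (l = l') * 1 := by
      intro l'; simp [ind, hh]
    rw [Finset.sum_congr rfl fun l' _ => h2 l', sum_ind_eq]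
    linarith
  · have h2 : ∀ l', ind ((h u, l) = (h u', l')) = 0 := by
      intro l'; simp [ind, Ne.symm hh]
    simp only [h2, mul_zero, Finset.sum_const_zero]
    exact mul_nonneg (ind_nonneg _) (by positivity)

theorem oneshot [Nonempty L] {P : U → ℝ} (hP : IsPMF P) (h : U → V) {ρ : V → U → ℝ}
    (hρ : IsKernel ρ) {S : T → ℝ} (hS : IsPMF S)
    {pW : W → ℝ} (hpW : IsPMF pW)
    {k : W → X → ℝ} (hk : IsKernel k) {ps : A → ℝ} (hps : IsPMF ps)
    {c1 : X → Y → ℝ} (hc1 : IsKernel c1)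
    {c2 : X → A → Z → ℝ} (hc2 : ∀ x, IsKernel (c2 x)) {c : W → A → Z → ℝ}
    (hcdef : ∀ w α, c w α = outp (k w) (fun x => c2 x α)) {γ : ℝ} (hγ : 0 < γ)
    (D1 : U → W → X → Y → Prop)
    (hD11 : ∀ u w x y, D1 u w x y → γ * outp pW (fun w => outp (k w) c1) y ≤ P u * c1 x y)
    (hD12 : ∀ u w x y, D1 u w x y →
      γ * outp (k w) c1 y ≤ (Fintype.card L * ρ (h u) u) * c1 x y)
    (D2 : T → W → A → Z → Prop)
    (hD21 : ∀ t w x y, D2 t w x y →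
      γ * outp pW (fun w => outp ps (c w)) y ≤ S t / Fintype.card L * c w x y)
    (hD22 : ∀ t w x y, D2 t w x y → γ * outp ps (c w) y ≤ S t * c w x y) :
    ∃ (x : U → X) (a : T → A) (g1 : Y → U) (g2 : Z → V → T),
      (Ex P fun u => Ex (c1 (x u)) fun y => ind (g1 y ≠ u)) +
      (Ex P fun u => Ex S fun t => Ex (c2 (x u) (a t)) fun z => ind (g2 z (h u) ≠ t)) ≤
      (Ex P fun u => Ex pW fun w => Ex (k w) fun x => Ex (c1 x) fun y => ind (¬ D1 u w x y)) +
      (Ex S fun t => Ex pW fun w => Ex ps fun α => Ex (c w α) fun z => ind (¬ D2 t w α z)) +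
      4 / γ := by
  have hMpos : (0 : ℝ) < Fintype.card L := by exact_mod_cast Fintype.card_pos
  have := hP.nonempty
  have := hS.nonempty
  set E1 : (U → L) → (V × L → W) → (U → W → X) → ℝ := fun b w ξ => Ex P fun u =>
      Ex (c1 (ξ u (w (h u, b u)))) fun y =>
      (ind (¬ D1 u (w (h u, b u)) (ξ u (w (h u, b u))) y) +
        ∑ u', if u' = u then 0 else ind (D1 u' (w (h u', b u')) (ξ u' (w (h u', b u'))) y)) with hE1
  set E2 : (U → L) → (V × L → W) → (U → W → X) → (T → A) → ℝ := fun b w ξ a =>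
      Ex P fun u => Ex S fun t =>
      Ex (c2 (ξ u (w (h u, b u))) (a t)) fun z =>
      (ind (¬ D2 t (w (h u, b u)) (a t) z) +
        ∑ t', if t' = t then 0 else ∑ l, ind (D2 t' (w (h u, l)) (a t') z)) with hE2
  have hb := qpi_pmf (I := U) (unif_pmf (L := L))
  have hw := qpi_pmf (I := V × L) hpW
  have hξ := qxi_pmf (U := U) hk
  have ha := qpi_pmf (I := T) hps
  have B1 : Ex (qpi U (unif L)) (fun b => Ex (qpi (V × L) pW) fun w => Ex (qxi U k) fun ξ =>
      E1 b w ξ) ≤ (Ex P fun u => Ex pW fun w => Ex (k w) fun x => Ex (c1 x) fun y =>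
        ind (¬ D1 u w x y)) + 2 / γ := by
    refine (Ex_mono hb fun b => rec1 hP hpW hk hc1 hγ (N := fun u => Fintype.card L * ρ (h u) u)
      (fun u => mul_nonneg hMpos.le ((hρ _).1 u)) D1 hD11 hD12 (fun u => (h u, b u))).trans ?_
    rw [Ex_comm]
    have : ∀ x : ℝ, x + 2 / γ = x + Ex P (fun _ => 2 / γ) := fun x => by rw [Ex_const hP]
    rw [this, ← Ex_add]
    refine Ex_mono hP fun u => ?_
    rw [Ex_add, Ex_const hb, Ex_sum]
    refine add_le_add le_rfl ?_
    calc _ ≤ ∑ u', (P u' / γ + ρ (h u) u' / γ) := by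
          refine Finset.sum_le_sum fun u' _ => ?_
          rw [Ex_ite]
          split_ifs with hu
          · exact add_nonneg (div_nonneg (hP.1 _) hγ.le) (div_nonneg ((hρ _).1 _) hγ.le)
          · rw [Ex_add, Ex_const hb]
            refine add_le_add le_rfl ?_
            have hc : ∀ b : U → L, ind ((h u, b u) = (h u', b u')) *
              (Fintype.card L * ρ (h u') u' / γ) = (Fintype.card L * ρ (h u') u' / γ) *
                ind ((h u, b u) = (h u', b u')) := fun b => mul_comm _ _
            rw [Ex_congr hc, Ex_mul]
            have hnn : 0 ≤ Fintype.card L * ρ (h u') u' / γ :=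
              div_nonneg (mul_nonneg hMpos.le ((hρ _).1 _)) hγ.le
            refine (mul_le_mul_of_nonneg_left (avg_bin (L := L) h (Ne.symm hu)) hnn).trans ?_
            by_cases hh : h u' = h u
            · rw [hh]
              have : ind (h u = h u) = 1 := if_pos rfl
              rw [this]
              refine le_of_eq ?_
              field_simp
            · have : ind (h u' = h u) = 0 := if_neg hh
              rw [this, zero_mul, mul_zero]
              exact div_nonneg ((hρ _).1 _) hγ.le
      _ = 2 / γ := by
          rw [Finset.sum_add_distrib, ← Finset.sum_div, ← Finset.sum_div, hP.2, (hρ _).2]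
          ring
  have B2 : Ex (qpi U (unif L)) (fun b => Ex (qpi (V × L) pW) fun w => Ex (qxi U k) fun ξ =>
      Ex (qpi T ps) fun a => E2 b w ξ a) ≤
      (Ex S fun t => Ex pW fun w => Ex ps fun α => Ex (c w α) fun z =>
        ind (¬ D2 t w α z)) + 2 / γ := by
    refine Ex_le hb fun b => ?_
    refine (rec2 hP hS hpW hk hps hc2 hcdef hγ hMpos D2 hD21 hD22 (L := L)
      (fun u => (h u, b u)) (fun u l => (h u, l))).trans ?_
    refine Ex_le hP fun u => ?_
    have : ∀ x : ℝ, x + 2 / γ = x + Ex S (fun _ => 2 / γ) := fun x => by rw [Ex_const hS]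
    rw [this, ← Ex_add]
    refine Ex_mono hS fun t => ?_
    refine add_le_add le_rfl ?_
    calc _ ≤ ∑ t', (S t' / γ + S t' / γ) := by
          refine Finset.sum_le_sum fun t' _ => ?_
          have hnn := div_nonneg (hS.1 t') hγ.le
          split_ifs with ht
          · exact add_nonneg hnn hnn
          · rw [Finset.sum_add_distrib]
            refine add_le_add (le_of_eq ?_) (le_of_eq ?_)
            · rw [Finset.sum_const, Finset.card_univ, nsmul_eq_mul]
              field_simp
            · have h2 : ∀ l, ind ((h u, b u) = (h u, l)) = ind (b u = l) := by
                intro l; simp [ind]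
              simp only [h2]
              exact sum_ind_eq _ _
      _ = 2 / γ := by
          rw [Finset.sum_add_distrib, ← Finset.sum_div, hS.2]
          ring
  -- choose a code
  have B3 : Ex (qpi U (unif L)) (fun b => Ex (qpi (V × L) pW) fun w => Ex (qxi U k) fun ξ =>
      Ex (qpi T ps) fun a => E1 b w ξ + E2 b w ξ a) ≤
      (Ex P fun u => Ex pW fun w => Ex (k w) fun x => Ex (c1 x) fun y => ind (¬ D1 u w x y)) +
      (Ex S fun t => Ex pW fun w => Ex ps fun α => Ex (c w α) fun z => ind (¬ D2 t w α z)) +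
      4 / γ := by
    have : ∀ b w ξ, (Ex (qpi T ps) fun a => E1 b w ξ + E2 b w ξ a) =
        E1 b w ξ + Ex (qpi T ps) fun a => E2 b w ξ a := fun b w ξ => by
      rw [Ex_add, Ex_const ha]
    simp only [this, Ex_add]
    refine (add_le_add B1 B2).trans (le_of_eq ?_)
    ring
  obtain ⟨b, hb1⟩ := Ex_exists hb (fun b => Ex (qpi (V × L) pW) fun w => Ex (qxi U k) fun ξ =>
      Ex (qpi T ps) fun a => E1 b w ξ + E2 b w ξ a)
  obtain ⟨w, hw1⟩ := Ex_exists hw (fun w => Ex (qxi U k) fun ξ =>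
      Ex (qpi T ps) fun a => E1 b w ξ + E2 b w ξ a)
  obtain ⟨ξ, hξ1⟩ := Ex_exists hξ (fun ξ => Ex (qpi T ps) fun a => E1 b w ξ + E2 b w ξ a)
  obtain ⟨a, ha1⟩ := Ex_exists ha (fun a => E1 b w ξ + E2 b w ξ a)
  have hfin := ha1.trans (hξ1.trans (hw1.trans (hb1.trans B3)))
  obtain ⟨g1, hg1⟩ := dec_exists (fun u (y : Y) => D1 u (w (h u, b u)) (ξ u (w (h u, b u))) y)
  have hg2 : ∀ v : V, ∃ g : Z → T, ∀ t z, ind (g z ≠ t) ≤ ind (¬ ∃ l, D2 t (w (v, l)) (a t) z) +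
      ∑ t', if t' = t then 0 else ind (∃ l, D2 t' (w (v, l)) (a t') z) := fun v =>
    dec_exists (fun t z => ∃ l, D2 t (w (v, l)) (a t) z)
  choose g2 hg2 using hg2
  refine ⟨fun u => ξ u (w (h u, b u)), a, g1, fun z v => g2 v z, le_trans (add_le_add ?_ ?_) hfin⟩
  · exact Ex_mono hP fun u => Ex_mono (hc1 _) fun y => hg1 u y
  · refine Ex_mono hP fun u => Ex_mono hS fun t => Ex_mono (hc2 _ _) fun z => ?_
    refine (hg2 (h u) t z).trans (add_le_add (ind_mono fun hn hd => hn ⟨_, hd⟩)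
      (Finset.sum_le_sum fun t' _ => ?_))
    split_ifs
    · exact le_rfl
    · by_cases hex : ∃ l, D2 t' (w (h u, l)) (a t') z
      · obtain ⟨l, hl⟩ := hex
        refine le_trans (ind_le_one _) ?_
        have := Finset.single_le_sum (f := fun l => ind (D2 t' (w (h u, l)) (a t') z))
          (fun l _ => ind_nonneg _) (Finset.mem_univ l)
        refine le_trans (le_of_eq ?_) this
        exact (if_pos hl).symm
      · have : ind (∃ l, D2 t' (w (h u, l)) (a t') z) = 0 := if_neg hex
        rw [this]
        exact Finset.sum_nonneg fun l _ => ind_nonneg _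

end

end PieceP5c

section PieceP5d

set_option linter.unusedSectionVars false
set_option linter.unusedVariables false

lemma Ex_mono' {α : Type*} [Fintype α] {p : α → ℝ} (hp : IsPMF p) {f g : α → ℝ}
    (h : ∀ a, 0 < p a → f a ≤ g a) : Ex p f ≤ Ex p g := by
  refine Finset.sum_le_sum fun a _ => ?_
  rcases (hp.1 a).eq_or_lt with h0 | h0
  · rw [← h0, zero_mul, zero_mul]
  · exact mul_le_mul_of_nonneg_left (h a h0) h0.le

lemma Ex_pi_prod {ι J : Type*} [Fintype ι] [DecidableEq ι] [Fintype J] (s g : ι → J → ℝ) :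
    Ex (fun F : ι → J => ∏ i, s i (F i)) (fun F => ∏ i, g i (F i)) = ∏ i, Ex (s i) (g i) := by
  unfold Ex
  simp only [← Finset.prod_mul_distrib]
  exact sum_pi (fun i j => s i j * g i j)

lemma outp_pi {ι J K : Type*} [Fintype ι] [DecidableEq ι] [Fintype J] (p : ι → J → ℝ)
    (q : ι → J → K → ℝ) (y : ι → K) :
    outp (fun x : ι → J => ∏ i, p i (x i)) (fun x y => ∏ i, q i (x i) (y i)) y =
      ∏ i, outp (p i) (q i) (y i) := by
  unfold outp
  simp only [← Finset.prod_mul_distrib]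
  exact sum_pi (fun i j => p i j * q i j (y i))

lemma outp_pos {α β : Type*} [Fintype α] {p : α → ℝ} {c : α → β → ℝ} (hp : ∀ a, 0 ≤ p a)
    (hc : ∀ a b, 0 ≤ c a b) {a : α} {b : β} (h1 : 0 < p a) (h2 : 0 < c a b) : 0 < outp p c b :=
  lt_of_lt_of_le (mul_pos h1 h2) (Finset.single_le_sum (f := fun a => p a * c a b)
    (fun a _ => mul_nonneg (hp a) (hc a b)) (Finset.mem_univ a))

lemma fac_pos {ι J : Type*} [Fintype ι] {p : ι → J → ℝ} (hp : ∀ i j, 0 ≤ p i j) {x : ι → J}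
    (h : 0 < ∏ i, p i (x i)) (i : ι) : 0 < p i (x i) := by
  refine lt_of_le_of_ne (hp _ _) fun h0 => ?_
  rw [Finset.prod_eq_zero (Finset.mem_univ i) h0.symm] at h
  exact lt_irrefl _ h

section
variable {α β χ ε : Type} [Fintype α] [Fintype β] [Fintype χ] [Fintype ε]

lemma chern4 {p : α → ℝ} (hp : IsPMF p) {q : β → ℝ} (hq : IsPMF q) {r : β → χ → ℝ}
    (hr : IsKernel r) {s : β → χ → ε → ℝ} (hs : ∀ b, IsKernel (s b))
    (ℓ N D : α → β → χ → ε → ℝ) (hD : ∀ a b x y, 0 ≤ D a b x y)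
    (hN : ∀ a b x y, 0 < p a → 0 < q b → 0 < r b x → 0 < s b x y →
      D a b x y * Real.exp (ℓ a b x y) ≤ N a b x y) {δ : ℝ}
    (hδ : δ < Ex p fun a => Ex q fun b => Ex (r b) fun x => Ex (s b x) fun y => ℓ a b x y) :
    ∃ t : ℝ, 0 ≤ t ∧ t < 1 ∧ ∀ n : ℕ,
      (Ex (fun u : Fin n → α => ∏ i, p (u i)) fun u => Ex (fun w : Fin n → β => ∏ i, q (w i)) fun w =>
        Ex (fun x : Fin n → χ => ∏ i, r (w i) (x i)) fun x =>
        Ex (fun y : Fin n → ε => ∏ i, s (w i) (x i) (y i)) fun y =>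
        ind (¬ (Real.exp (n * δ) * ∏ i, D (u i) (w i) (x i) (y i) ≤
          ∏ i, N (u i) (w i) (x i) (y i)))) ≤ t ^ n := by
  set m := (Ex p fun a => Ex q fun b => Ex (r b) fun x => Ex (s b x) fun y => ℓ a b x y) - δ with hm
  have hmpos : 0 < m := by rw [hm]; linarith
  obtain ⟨B, hB1, hBm, hB⟩ : ∃ B : ℝ, 1 ≤ B ∧ m ≤ B ∧ ∀ a b x y, |ℓ a b x y - δ| ≤ B := by
    refine ⟨1 + m + ∑ z : α × β × χ × ε, |ℓ z.1 z.2.1 z.2.2.1 z.2.2.2 - δ|, ?_, ?_, ?_⟩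
    · have : 0 ≤ ∑ z : α × β × χ × ε, |ℓ z.1 z.2.1 z.2.2.1 z.2.2.2 - δ| :=
        Finset.sum_nonneg fun _ _ => abs_nonneg _
      linarith
    · have : 0 ≤ ∑ z : α × β × χ × ε, |ℓ z.1 z.2.1 z.2.2.1 z.2.2.2 - δ| :=
        Finset.sum_nonneg fun _ _ => abs_nonneg _
      linarith
    · intro a b x y
      have := Finset.single_le_sum (f := fun z : α × β × χ × ε => |ℓ z.1 z.2.1 z.2.2.1 z.2.2.2 - δ|)
        (fun _ _ => abs_nonneg _) (Finset.mem_univ (a, b, x, y))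
      dsimp only at this
      linarith
  set σ := m / (2 * B ^ 2) with hσ
  have hσpos : 0 < σ := by positivity
  have hσB : σ * B ≤ 1 := by
    rw [hσ, div_mul_eq_mul_div, div_le_one (by positivity)]
    nlinarith
  set g : α → β → χ → ε → ℝ := fun a b x y => Real.exp (-(σ * (ℓ a b x y - δ))) with hg
  set t := Ex p fun a => Ex q fun b => Ex (r b) fun x => Ex (s b x) fun y => g a b x y with ht
  have ht1 : t < 1 := by
    have hpt : ∀ a b x y, g a b x y ≤ (1 + σ * δ + σ ^ 2 * B ^ 2) + (-σ) * ℓ a b x y := by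
      intro a b x y
      have hb := hB a b x y
      have h1 : |-(σ * (ℓ a b x y - δ))| ≤ σ * B := by
        rw [abs_neg, abs_mul, abs_of_pos hσpos]
        exact mul_le_mul_of_nonneg_left hb hσpos.le
      have h2 := Real.abs_exp_sub_one_sub_id_le (h1.trans hσB)
      have h3 := (abs_le.1 h2).2
      have h4 : (-(σ * (ℓ a b x y - δ))) ^ 2 ≤ σ ^ 2 * B ^ 2 := by
        rw [← mul_pow, ← sq_abs]
        exact pow_le_pow_left₀ (abs_nonneg _) h1 2
      simp only [hg]
      linarith
    have h5 : t ≤ Ex p fun a => Ex q fun b => Ex (r b) fun x => Ex (s b x) fun y =>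
        (1 + σ * δ + σ ^ 2 * B ^ 2) + (-σ) * ℓ a b x y :=
      Ex_mono hp fun a => Ex_mono hq fun b => Ex_mono (hr b) fun x => Ex_mono (hs b x) fun y =>
        hpt a b x y
    simp only [Ex_add, Ex_mul, Ex_const hp, Ex_const hq, Ex_const (hr _), Ex_const (hs _ _)] at h5
    have h6 : t ≤ 1 - σ * m + σ ^ 2 * B ^ 2 := by rw [hm]; linarith
    have h7 : σ * m - σ ^ 2 * B ^ 2 = m ^ 2 / (4 * B ^ 2) := by
      rw [hσ]; field_simp; ring
    have h8 : 0 < m ^ 2 / (4 * B ^ 2) := by positivity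
    linarith
  have ht0 : 0 ≤ t := Ex_nonneg hp fun a => Ex_nonneg hq fun b => Ex_nonneg (hr b) fun x =>
    Ex_nonneg (hs b x) fun y => (Real.exp_pos _).le
  refine ⟨t, ht0, ht1, fun n => ?_⟩
  have hprod : (Ex (fun u : Fin n → α => ∏ i, p (u i)) fun u =>
        Ex (fun w : Fin n → β => ∏ i, q (w i)) fun w =>
        Ex (fun x : Fin n → χ => ∏ i, r (w i) (x i)) fun x =>
        Ex (fun y : Fin n → ε => ∏ i, s (w i) (x i) (y i)) fun y =>
        ∏ i, g (u i) (w i) (x i) (y i)) = t ^ n := by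
    have e1 : ∀ (u : Fin n → α) (w : Fin n → β) (x : Fin n → χ),
        (Ex (fun y : Fin n → ε => ∏ i, s (w i) (x i) (y i)) fun y =>
        ∏ i, g (u i) (w i) (x i) (y i)) = ∏ i, Ex (s (w i) (x i)) (g (u i) (w i) (x i)) :=
      fun u w x => Ex_pi_prod (fun i => s (w i) (x i)) (fun i => g (u i) (w i) (x i))
    have e2 : ∀ (u : Fin n → α) (w : Fin n → β),
        (Ex (fun x : Fin n → χ => ∏ i, r (w i) (x i)) fun x =>
          ∏ i, Ex (s (w i) (x i)) (g (u i) (w i) (x i))) =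
          ∏ i, Ex (r (w i)) fun x => Ex (s (w i) x) (g (u i) (w i) x) :=
      fun u w => Ex_pi_prod (fun i => r (w i)) (fun i x => Ex (s (w i) x) (g (u i) (w i) x))
    have e3 : ∀ (u : Fin n → α),
        (Ex (fun w : Fin n → β => ∏ i, q (w i)) fun w =>
          ∏ i, Ex (r (w i)) fun x => Ex (s (w i) x) (g (u i) (w i) x)) =
          ∏ i, Ex q fun w => Ex (r w) fun x => Ex (s w x) (g (u i) w x) :=
      fun u => Ex_pi_prod (fun i => q) (fun i w => Ex (r w) fun x => Ex (s w x) (g (u i) w x))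
    simp only [e1, e2, e3]
    refine (Ex_pi_prod (fun _ : Fin n => p) (fun i a => Ex q fun w => Ex (r w) fun x =>
      Ex (s w x) (g a w x))).trans ?_
    rw [Finset.prod_const, Finset.card_univ, Fintype.card_fin]
  rw [← hprod]
  refine Ex_mono' (IsPMF.pi fun _ => hp) fun u hu => Ex_mono' (IsPMF.pi fun _ => hq) fun w hw =>
    Ex_mono' (IsPMF.pi (p := fun i => r (w i)) fun _ => hr _) fun x hx =>
    Ex_mono' (IsPMF.pi (p := fun i => s (w i) (x i)) fun _ => hs _ _) fun y hy => ?_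
  have hu' := fac_pos (p := fun _ => p) (fun _ => hp.1) hu
  have hw' := fac_pos (p := fun _ => q) (fun _ => hq.1) hw
  have hx' := fac_pos (p := fun i => r (w i)) (fun _ => (hr _).1) hx
  have hy' := fac_pos (p := fun i => s (w i) (x i)) (fun _ => (hs _ _).1) hy
  have hDN : (∏ i, D (u i) (w i) (x i) (y i)) * Real.exp (∑ i, ℓ (u i) (w i) (x i) (y i)) ≤
      ∏ i, N (u i) (w i) (x i) (y i) := by
    rw [Real.exp_sum, ← Finset.prod_mul_distrib]
    exact Finset.prod_le_prod (fun i _ => mul_nonneg (hD _ _ _ _) (Real.exp_pos _).le)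
      fun i _ => hN _ _ _ _ (hu' i) (hw' i) (hx' i) (hy' i)
  have hDn : 0 ≤ ∏ i, D (u i) (w i) (x i) (y i) := Finset.prod_nonneg fun _ _ => hD _ _ _ _
  have hgp : ∏ i, g (u i) (w i) (x i) (y i) =
      Real.exp (-(σ * (∑ i, ℓ (u i) (w i) (x i) (y i) - n * δ))) := by
    simp only [hg]
    rw [← Real.exp_sum]
    congr 1
    rw [Finset.sum_neg_distrib, ← Finset.mul_sum, Finset.sum_sub_distrib]
    simp
  rw [hgp]
  by_cases hc : n * δ ≤ ∑ i, ℓ (u i) (w i) (x i) (y i)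
  · have : ind (¬ (Real.exp (n * δ) * ∏ i, D (u i) (w i) (x i) (y i) ≤
          ∏ i, N (u i) (w i) (x i) (y i))) = 0 := if_neg (not_not.2 (by
      refine le_trans ?_ hDN
      rw [mul_comm]
      exact mul_le_mul_of_nonneg_left (Real.exp_le_exp.2 hc) hDn))
    rw [this]
    exact (Real.exp_pos _).le
  · push Not at hc
    refine (ind_le_one _).trans (Real.one_le_exp ?_)
    have := mul_pos hσpos (sub_pos.2 hc)
    linarith

end

end PieceP5d

section PieceP5e

set_option linter.unusedSectionVars false
set_option linter.unusedVariables false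

lemma outp_assoc {α β χ : Type*} [Fintype α] [Fintype β] (p : α → ℝ) (k : α → β → ℝ)
    (c : β → χ → ℝ) : outp (outp p k) c = outp p (fun a => outp (k a) c) := by
  funext y
  simp only [outp, Finset.mul_sum, Finset.sum_mul]
  rw [Finset.sum_comm]
  exact Finset.sum_congr rfl fun a _ => Finset.sum_congr rfl fun b _ => by ring

lemma Ex_log {α : Type*} [Fintype α] (p : α → ℝ) : Ex p (fun a => Real.log (p a)) = - Hn p := by
  unfold Ex Hn Real.negMulLog
  rw [← Finset.sum_neg_distrib]
  exact Finset.sum_congr rfl fun a _ => by ring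

section
variable {α β χ ε : Type} [Fintype α] [Fintype β] [Fintype χ] [Fintype ε]

lemma mean4 {p : α → ℝ} (hp : IsPMF p) {q : β → ℝ} (hq : IsPMF q) {r : β → χ → ℝ}
    (hr : IsKernel r) {s : β → χ → ε → ℝ} (hs : ∀ b, IsKernel (s b)) (A : α → ℝ) (B : β → ε → ℝ) :
    (Ex p fun a => Ex q fun b => Ex (r b) fun x => Ex (s b x) fun y =>
      A a + (Real.log (s b x y) + (-1) * B b y)) =
    Ex p A - (Ex q fun b => Ex (r b) fun x => Hn (s b x)) -
      Ex q fun b => Ex (outp (r b) (s b)) (B b) := by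
  simp only [Ex_add, Ex_mul, Ex_const hp, Ex_const hq, Ex_const (hr _), Ex_const (hs _ _), Ex_log]
  have h1 : ∀ b, Ex (r b) (fun x => - Hn (s b x)) = (-1) * Ex (r b) fun x => Hn (s b x) := by
    intro b
    rw [← Ex_mul]
    exact Ex_congr fun x => by ring
  simp only [h1, Ex_mul, ← Ex_outp]
  ring

lemma chernW {p : α → ℝ} (hp : IsPMF p) {q : β → ℝ} (hq : IsPMF q) {r : β → χ → ℝ}
    (hr : IsKernel r) {s : β → χ → ε → ℝ} (hs : ∀ b, IsKernel (s b)) (A N0 : α → ℝ)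
    (hA : ∀ a, 0 < p a → Real.exp (A a) ≤ N0 a) {δ : ℝ}
    (hδ : δ < Ex p A - (Ex q fun b => Ex (r b) fun x => Hn (s b x)) +
      Ex q fun b => Hn (outp (r b) (s b))) :
    ∃ t : ℝ, 0 ≤ t ∧ t < 1 ∧ ∀ n : ℕ,
      (Ex (fun u : Fin n → α => ∏ i, p (u i)) fun u => Ex (fun w : Fin n → β => ∏ i, q (w i)) fun w =>
        Ex (fun x : Fin n → χ => ∏ i, r (w i) (x i)) fun x =>
        Ex (fun y : Fin n → ε => ∏ i, s (w i) (x i) (y i)) fun y =>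
        ind (¬ (Real.exp (n * δ) * ∏ i, outp (r (w i)) (s (w i)) (y i) ≤
          ∏ i, (N0 (u i) * s (w i) (x i) (y i))))) ≤ t ^ n := by
  refine chern4 hp hq hr hs (fun a b x y => A a + (Real.log (s b x y) +
      (-1) * Real.log (outp (r b) (s b) y))) (fun a b x y => N0 a * s b x y)
    (fun a b x y => outp (r b) (s b) y) (fun a b x y => ((hr b).out (hs b)).1 y) ?_ ?_
  · intro a b x y h1 h2 h3 h4
    have hQ : 0 < outp (r b) (s b) y := outp_pos (hr b).1 (fun x => (hs b x).1) h3 h4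
    rw [Real.exp_add, Real.exp_add, Real.exp_log h4, neg_one_mul, Real.exp_neg, Real.exp_log hQ]
    have := mul_le_mul_of_nonneg_right (hA a h1) h4.le
    refine le_of_eq_of_le ?_ this
    field_simp
  · refine hδ.trans_eq ?_
    rw [mean4 hp hq hr hs A (fun b y => Real.log (outp (r b) (s b) y))]
    simp only [Ex_log]
    have : Ex q (fun b => - Hn (outp (r b) (s b))) = (-1) * Ex q fun b => Hn (outp (r b) (s b)) := by
      rw [← Ex_mul]
      exact Ex_congr fun x => by ring
    rw [this]
    ring

lemma chernQ {p : α → ℝ} (hp : IsPMF p) {q : β → ℝ} (hq : IsPMF q) {r : β → χ → ℝ}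
    (hr : IsKernel r) {s : β → χ → ε → ℝ} (hs : ∀ b, IsKernel (s b)) (A N0 : α → ℝ)
    (hA : ∀ a, 0 < p a → Real.exp (A a) ≤ N0 a) {δ : ℝ}
    (hδ : δ < Ex p A - (Ex q fun b => Ex (r b) fun x => Hn (s b x)) +
      Hn (outp q fun b => outp (r b) (s b))) :
    ∃ t : ℝ, 0 ≤ t ∧ t < 1 ∧ ∀ n : ℕ,
      (Ex (fun u : Fin n → α => ∏ i, p (u i)) fun u => Ex (fun w : Fin n → β => ∏ i, q (w i)) fun w =>
        Ex (fun x : Fin n → χ => ∏ i, r (w i) (x i)) fun x =>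
        Ex (fun y : Fin n → ε => ∏ i, s (w i) (x i) (y i)) fun y =>
        ind (¬ (Real.exp (n * δ) * ∏ i, outp q (fun b => outp (r b) (s b)) (y i) ≤
          ∏ i, (N0 (u i) * s (w i) (x i) (y i))))) ≤ t ^ n := by
  have hk : IsKernel (fun b => outp (r b) (s b)) := fun b => (hr b).out (hs b)
  refine chern4 hp hq hr hs (fun a b x y => A a + (Real.log (s b x y) +
      (-1) * Real.log (outp q (fun b => outp (r b) (s b)) y))) (fun a b x y => N0 a * s b x y)
    (fun a b x y => outp q (fun b => outp (r b) (s b)) y) (fun a b x y => (hq.out hk).1 y) ?_ ?_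
  · intro a b x y h1 h2 h3 h4
    have hQ0 : 0 < outp (r b) (s b) y := outp_pos (hr b).1 (fun x => (hs b x).1) h3 h4
    have hQ : 0 < outp q (fun b => outp (r b) (s b)) y := outp_pos hq.1 (fun b => (hk b).1) h2 hQ0
    rw [Real.exp_add, Real.exp_add, Real.exp_log h4, neg_one_mul, Real.exp_neg, Real.exp_log hQ]
    have := mul_le_mul_of_nonneg_right (hA a h1) h4.le
    refine le_of_eq_of_le ?_ this
    field_simp
  · refine hδ.trans_eq ?_
    rw [mean4 hp hq hr hs A (fun b y => Real.log (outp q (fun b => outp (r b) (s b)) y))]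
    have : (Ex q fun b => Ex (outp (r b) (s b)) fun y =>
        Real.log (outp q (fun b => outp (r b) (s b)) y)) = - Hn (outp q fun b => outp (r b) (s b)) := by
      rw [← Ex_log, Ex_outp q]
    rw [this]
    ring

end

section
variable {U1 V1 U2 X1 X2 Y1 Y2 : Type}
  [Fintype U1] [Fintype V1] [Fintype U2]
  [Fintype X1] [Fintype X2] [Fintype Y1] [Fintype Y2]
  {ch1 : X1 → Y1 → ℝ} {ch2 : X1 × X2 → Y2 → ℝ} {pstar : X2 → ℝ}
  {pU1 : U1 → ℝ} {h1 : U1 → V1} {pU2 : U2 → ℝ}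

lemma perr_le (hch1 : IsKernel ch1) (hch2 : IsKernel ch2) (hpU1 : IsPMF pU1) (hpU2 : IsPMF pU2)
    (n : ℕ) (f1 : (Fin n → U1) → Fin n → X1) (f2 : (Fin n → U2) → Fin n → X2)
    (g1 : (Fin n → Y1) → Fin n → U1)
    (g2 : (Fin n → Y2) → (Fin n → V1) → Fin n → U2) :
    PerrZDet ch1 ch2 pU1 h1 pU2 n f1 f2 g1 g2 ≤
    (Ex (fun u : Fin n → U1 => ∏ i, pU1 (u i)) fun u =>
      Ex (fun y : Fin n → Y1 => ∏ i, ch1 (f1 u i) (y i)) fun y => ind (g1 y ≠ u)) +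
    (Ex (fun u : Fin n → U1 => ∏ i, pU1 (u i)) fun u =>
      Ex (fun t : Fin n → U2 => ∏ i, pU2 (t i)) fun t =>
      Ex (fun z : Fin n → Y2 => ∏ i, ch2 (f1 u i, f2 t i) (z i)) fun z =>
        ind (g2 z (fun i => h1 (u i)) ≠ t)) := by
  refine (err_le (P := fun u : Fin n → U1 => ∏ i, pU1 (u i))
    (S := fun u : Fin n → U2 => ∏ i, pU2 (u i))
    (c1 := fun u (y : Fin n → Y1) => ∏ i, ch1 (f1 u i) (y i))
    (c2 := fun u t (z : Fin n → Y2) => ∏ i, ch2 (f1 u i, f2 t i) (z i))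
    (IsPMF.pi fun _ => hpU1) (IsPMF.pi fun _ => hpU2)
    (fun u => IsPMF.pi (p := fun i => ch1 (f1 u i)) fun i => hch1 _)
    (fun u t => IsPMF.pi (p := fun i => ch2 (f1 u i, f2 t i)) fun i => hch2 _)
    (fun u y => g1 y = u) (fun u t z => g2 z (fun i => h1 (u i)) = t)
    (da := fun _ _ => Classical.propDecidable _) (db := fun _ _ _ => Classical.propDecidable _)
    ).trans (le_of_eq ?_)
  have hi : ∀ p : Prop, (if p then (0 : ℝ) else 1) = ind (¬ p) := fun p => by
    unfold ind; split_ifs <;> tauto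
  simp only [hi, Ex, Finset.mul_sum, mul_assoc, ne_eq]

lemma perr_nonneg (hch1 : IsKernel ch1) (hch2 : IsKernel ch2) (hpU1 : IsPMF pU1) (hpU2 : IsPMF pU2)
    (n : ℕ) (f1 : (Fin n → U1) → Fin n → X1) (f2 : (Fin n → U2) → Fin n → X2)
    (g1 : (Fin n → Y1) → Fin n → U1)
    (g2 : (Fin n → Y2) → (Fin n → V1) → Fin n → U2) :
    0 ≤ PerrZDet ch1 ch2 pU1 h1 pU2 n f1 f2 g1 g2 := by
  unfold PerrZDet
  refine Finset.sum_nonneg fun u _ => Finset.sum_nonneg fun t _ => Finset.sum_nonneg fun y _ =>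
    Finset.sum_nonneg fun z _ => ?_
  refine mul_nonneg (mul_nonneg (mul_nonneg (mul_nonneg ?_ ?_) ?_) ?_) ?_
  · exact Finset.prod_nonneg fun _ _ => hpU1.1 _
  · exact Finset.prod_nonneg fun _ _ => hpU2.1 _
  · exact Finset.prod_nonneg fun _ _ => (hch1 _).1 _
  · exact Finset.prod_nonneg fun _ _ => (hch2 _).1 _
  · split_ifs <;> norm_num

end

end PieceP5e

section PieceP5f

set_option linter.unusedSectionVars false
set_option linter.unusedVariables false

section
variable {U1 V1 U2 X1 X2 Y1 Y2 : Type}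
  [Fintype U1] [Fintype V1] [Fintype U2]
  [Fintype X1] [Fintype X2] [Fintype Y1] [Fintype Y2]
  {ch1 : X1 → Y1 → ℝ} {ch2 : X1 × X2 → Y2 → ℝ} {pstar : X2 → ℝ}
  {pU1 : U1 → ℝ} {h1 : U1 → V1} {pU2 : U2 → ℝ}

lemma ind_not_and (a b : Prop) : ind (¬ (a ∧ b)) ≤ ind (¬ a) + ind (¬ b) := by
  unfold ind
  by_cases ha : a <;> by_cases hb : b <;> simp [ha, hb]

lemma src_Ex {ρ : V1 → U1 → ℝ}
    (hd : ∀ v u, (if h1 u = v then pU1 u else 0) = pr pU1 h1 v * ρ v u) :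
    Ex pU1 (fun u => Real.log (ρ (h1 u) u)) = - ∑ v, pr pU1 h1 v * Hn (ρ v) := by
  have e : ∀ v, pr pU1 h1 v * Hn (ρ v) = - ∑ u, (if h1 u = v then pU1 u else 0) *
      Real.log (ρ v u) := by
    intro v
    simp only [hd]
    unfold Hn Real.negMulLog
    rw [Finset.mul_sum, ← Finset.sum_neg_distrib]
    exact Finset.sum_congr rfl fun u _ => by ring
  rw [Finset.sum_congr rfl fun v _ => e v, Finset.sum_neg_distrib, neg_neg, Finset.sum_comm]
  refine Finset.sum_congr rfl fun u _ => ?_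
  simp [ite_mul]

lemma src_pos {ρ : V1 → U1 → ℝ} (hp : IsPMF pU1) (hρ : IsKernel ρ)
    (hd : ∀ v u, (if h1 u = v then pU1 u else 0) = pr pU1 h1 v * ρ v u) (u : U1)
    (hu : 0 < pU1 u) : 0 < ρ (h1 u) u := by
  have := hd (h1 u) u
  rw [if_pos rfl] at this
  rw [this] at hu
  refine lt_of_le_of_ne ((hρ _).1 u) fun h0 => ?_
  rw [← h0, mul_zero] at hu
  exact lt_irrefl _ hu

lemma achiev_n (hch1 : IsKernel ch1) (hch2 : IsKernel ch2) (hps : IsPMF pstar)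
    (hpU1 : IsPMF pU1) (hpU2 : IsPMF pU2) {ρ : V1 → U1 → ℝ} (hρ : IsKernel ρ)
    {m : ℕ} {pW : Fin m → ℝ} {k : Fin m → X1 → ℝ} (hpW : IsPMF pW) (hk : ∀ w, IsPMF (k w))
    {c : Fin m → X2 → Y2 → ℝ} (hc : ∀ w α, c w α = outp (k w) fun x => ch2 (x, α))
    {R δ : ℝ} (hR : 0 ≤ R) (n : ℕ) {e1 e2 e3 e4 : ℝ}
    (he1 : (Ex (fun u : Fin n → U1 => ∏ i, pU1 (u i)) fun u =>
        Ex (fun w : Fin n → Fin m => ∏ i, pW (w i)) fun w =>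
        Ex (fun x : Fin n → X1 => ∏ i, k (w i) (x i)) fun x =>
        Ex (fun y : Fin n → Y1 => ∏ i, ch1 (x i) (y i)) fun y =>
        ind (¬ (Real.exp (n * δ) * ∏ i, outp pW (fun b => outp (k b) ch1) (y i) ≤
          ∏ i, (pU1 (u i) * ch1 (x i) (y i))))) ≤ e1)
    (he2 : (Ex (fun u : Fin n → U1 => ∏ i, pU1 (u i)) fun u =>
        Ex (fun w : Fin n → Fin m => ∏ i, pW (w i)) fun w =>
        Ex (fun x : Fin n → X1 => ∏ i, k (w i) (x i)) fun x =>
        Ex (fun y : Fin n → Y1 => ∏ i, ch1 (x i) (y i)) fun y =>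
        ind (¬ (Real.exp (n * δ) * ∏ i, outp (k (w i)) ch1 (y i) ≤
          ∏ i, ((Real.exp R * ρ (h1 (u i)) (u i)) * ch1 (x i) (y i))))) ≤ e2)
    (he3 : (Ex (fun u : Fin n → U2 => ∏ i, pU2 (u i)) fun u =>
        Ex (fun w : Fin n → Fin m => ∏ i, pW (w i)) fun w =>
        Ex (fun x : Fin n → X2 => ∏ i, pstar (x i)) fun x =>
        Ex (fun y : Fin n → Y2 => ∏ i, c (w i) (x i) (y i)) fun y =>
        ind (¬ (Real.exp (n * δ) * ∏ i, outp pW (fun b => outp pstar (c b)) (y i) ≤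
          ∏ i, ((Real.exp (-R) * pU2 (u i)) * c (w i) (x i) (y i))))) ≤ e3)
    (he4 : (Ex (fun u : Fin n → U2 => ∏ i, pU2 (u i)) fun u =>
        Ex (fun w : Fin n → Fin m => ∏ i, pW (w i)) fun w =>
        Ex (fun x : Fin n → X2 => ∏ i, pstar (x i)) fun x =>
        Ex (fun y : Fin n → Y2 => ∏ i, c (w i) (x i) (y i)) fun y =>
        ind (¬ (Real.exp (n * δ) * ∏ i, outp pstar (c (w i)) (y i) ≤
          ∏ i, (pU2 (u i) * c (w i) (x i) (y i))))) ≤ e4) :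
    ∃ (f1 : (Fin n → U1) → Fin n → X1) (f2 : (Fin n → U2) → Fin n → X2)
    (g1 : (Fin n → Y1) → Fin n → U1)
    (g2 : (Fin n → Y2) → (Fin n → V1) → Fin n → U2),
      PerrZDet ch1 ch2 pU1 h1 pU2 n f1 f2 g1 g2 ≤ (e1 + e2) + (e3 + e4) + 8 * Real.exp (-(n * δ)) := by
  have hck : ∀ w, IsKernel (c w) := fun w α => by
    rw [hc]; exact (hk w).out fun x => hch2 _
  set M := ⌈Real.exp (n * R)⌉₊ with hM
  have hx1 : 1 ≤ Real.exp (n * R) := Real.one_le_exp (by positivity)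
  have hM1 : Real.exp (n * R) ≤ M := Nat.le_ceil _
  have hM2 : (M : ℝ) ≤ 2 * Real.exp (n * R) := by
    have := Nat.ceil_lt_add_one (Real.exp_pos (n * R)).le
    linarith
  have hMpos : 0 < M := by
    have : (0 : ℝ) < M := lt_of_lt_of_le (Real.exp_pos _) hM1
    exact_mod_cast this
  have hMposR : (0 : ℝ) < M := by exact_mod_cast hMpos
  have : Nonempty (Fin M) := ⟨⟨0, hMpos⟩⟩
  have hcard : (Fintype.card (Fin M) : ℝ) = M := by simp
  have hexpR : ∏ i : Fin n, Real.exp R = Real.exp (n * R) := by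
    rw [Finset.prod_const, Finset.card_univ, Fintype.card_fin, ← Real.exp_nat_mul]
  have hexpR' : ∏ i : Fin n, Real.exp (-R) = Real.exp (-(n * R)) := by
    rw [Finset.prod_const, Finset.card_univ, Fintype.card_fin, ← Real.exp_nat_mul]
    congr 1; ring
  have hEpos := Real.exp_pos (n * δ)
  have hγ : 0 < Real.exp (n * δ) / 2 := by positivity
  have hQw : ∀ w : Fin n → Fin m, outp (fun x : Fin n → X1 => ∏ i, k (w i) (x i))
      (fun x (y : Fin n → Y1) => ∏ i, ch1 (x i) (y i)) = fun y => ∏ i, outp (k (w i)) ch1 (y i) :=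
    fun w => funext fun y => outp_pi (fun i => k (w i)) (fun _ => ch1) y
  have hRw : ∀ w : Fin n → Fin m, outp (fun x : Fin n → X2 => ∏ i, pstar (x i))
      (fun x (y : Fin n → Y2) => ∏ i, c (w i) (x i) (y i)) =
      fun y => ∏ i, outp pstar (c (w i)) (y i) :=
    fun w => funext fun y => outp_pi (fun i => pstar) (fun i => c (w i)) y
  obtain ⟨x, a, g1, g2, hle⟩ := oneshot (L := Fin M)
    (P := fun u : Fin n → U1 => ∏ i, pU1 (u i)) (IsPMF.pi fun _ => hpU1)
    (fun u i => h1 (u i)) (ρ := fun (v : Fin n → V1) u => ∏ i, ρ (v i) (u i))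
    (fun v => IsPMF.pi (p := fun i => ρ (v i)) fun _ => hρ _)
    (S := fun u : Fin n → U2 => ∏ i, pU2 (u i)) (IsPMF.pi fun _ => hpU2)
    (pW := fun w : Fin n → Fin m => ∏ i, pW (w i)) (IsPMF.pi fun _ => hpW)
    (k := fun (w : Fin n → Fin m) (x : Fin n → X1) => ∏ i, k (w i) (x i))
    (fun w => IsPMF.pi (p := fun i => k (w i)) fun _ => hk _)
    (ps := fun x : Fin n → X2 => ∏ i, pstar (x i)) (IsPMF.pi fun _ => hps)
    (c1 := fun (x : Fin n → X1) (y : Fin n → Y1) => ∏ i, ch1 (x i) (y i))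
    (fun x => IsPMF.pi (p := fun i => ch1 (x i)) fun _ => hch1 _)
    (c2 := fun (x : Fin n → X1) (α : Fin n → X2) (z : Fin n → Y2) => ∏ i, ch2 (x i, α i) (z i))
    (fun x α => IsPMF.pi (p := fun i => ch2 (x i, α i)) fun _ => hch2 _)
    (c := fun (w : Fin n → Fin m) (α : Fin n → X2) (z : Fin n → Y2) => ∏ i, c (w i) (α i) (z i))
    (fun w α => by
      funext z
      simp only [hc]
      exact (outp_pi (fun i => k (w i)) (fun i x => ch2 (x, α i)) z).symm)
    hγ
    (fun u w x y => (Real.exp (n * δ) * ∏ i, outp pW (fun b => outp (k b) ch1) (y i) ≤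
          ∏ i, (pU1 (u i) * ch1 (x i) (y i))) ∧
      (Real.exp (n * δ) * ∏ i, outp (k (w i)) ch1 (y i) ≤
          ∏ i, ((Real.exp R * ρ (h1 (u i)) (u i)) * ch1 (x i) (y i))))
    (by
      rintro u w x y ⟨hh, -⟩
      simp only [hQw]
      rw [outp_pi (fun _ => pW) (fun _ w y => outp (k w) ch1 y) y, ← Finset.prod_mul_distrib]
      refine le_trans ?_ hh
      refine mul_le_mul_of_nonneg_right (by linarith) (Finset.prod_nonneg fun i _ => ?_)
      exact (hpW.out fun w => (hk w).out hch1).1 _)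
    (by
      rintro u w x y ⟨-, hh⟩
      simp only [hQw]
      have hnn : 0 ≤ (∏ i, ρ (h1 (u i)) (u i)) * ∏ i, ch1 (x i) (y i) :=
        mul_nonneg (Finset.prod_nonneg fun i _ => (hρ _).1 _)
          (Finset.prod_nonneg fun i _ => (hch1 _).1 _)
      rw [Finset.prod_mul_distrib, Finset.prod_mul_distrib, hexpR] at hh
      have hq : 0 ≤ ∏ i, outp (k (w i)) ch1 (y i) :=
        Finset.prod_nonneg fun i _ => ((hk _).out hch1).1 _
      have h3 := mul_le_mul_of_nonneg_right hM1 hnn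
      rw [hcard]
      nlinarith [mul_nonneg hEpos.le hq])
    (fun t w x y => (Real.exp (n * δ) * ∏ i, outp pW (fun b => outp pstar (c b)) (y i) ≤
          ∏ i, ((Real.exp (-R) * pU2 (t i)) * c (w i) (x i) (y i))) ∧
      (Real.exp (n * δ) * ∏ i, outp pstar (c (w i)) (y i) ≤
          ∏ i, (pU2 (t i) * c (w i) (x i) (y i))))
    (by
      rintro t w x y ⟨hh, -⟩
      simp only [hRw]
      rw [outp_pi (fun _ => pW) (fun _ w y => outp pstar (c w) y) y]
      rw [Finset.prod_mul_distrib, Finset.prod_mul_distrib, hexpR'] at hh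
      have hnn : 0 ≤ (∏ i, pU2 (t i)) * ∏ i, c (w i) (x i) (y i) :=
        mul_nonneg (Finset.prod_nonneg fun i _ => hpU2.1 _)
          (Finset.prod_nonneg fun i _ => (hck _ _).1 _)
      rw [hcard]
      have h4 : Real.exp (-(n * R)) / 2 ≤ 1 / M := by
        rw [Real.exp_neg, div_le_div_iff₀ (by norm_num) hMposR, inv_mul_eq_div,
          div_le_iff₀ (Real.exp_pos _)]
        linarith
      have h5 := mul_le_mul_of_nonneg_right h4 hnn
      have h6 : (∏ i, pU2 (t i)) / (M : ℝ) * ∏ i, c (w i) (x i) (y i) =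
          1 / M * ((∏ i, pU2 (t i)) * ∏ i, c (w i) (x i) (y i)) := by ring
      rw [h6]
      refine le_trans ?_ h5
      linarith)
    (by
      rintro t w x y ⟨-, hh⟩
      simp only [hRw]
      rw [← Finset.prod_mul_distrib]
      refine le_trans ?_ hh
      refine mul_le_mul_of_nonneg_right (by linarith) (Finset.prod_nonneg fun i _ => ?_)
      exact (hps.out (hck _)).1 _)
  refine ⟨x, a, g1, g2, (perr_le hch1 hch2 hpU1 hpU2 n x a g1 g2).trans (hle.trans ?_)⟩
  refine add_le_add (add_le_add ?_ ?_) (le_of_eq ?_)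
  · refine le_trans ?_ (add_le_add he1 he2)
    simp only [← Ex_add]
    exact Ex_mono (IsPMF.pi fun _ => hpU1) fun u => Ex_mono (IsPMF.pi fun _ => hpW) fun w =>
      Ex_mono (IsPMF.pi (p := fun i => k (w i)) fun _ => hk _) fun x =>
      Ex_mono (IsPMF.pi (p := fun i => ch1 (x i)) fun _ => hch1 _) fun y => ind_not_and _ _
  · refine le_trans ?_ (add_le_add he3 he4)
    simp only [← Ex_add]
    exact Ex_mono (IsPMF.pi fun _ => hpU2) fun u => Ex_mono (IsPMF.pi fun _ => hpW) fun w =>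
      Ex_mono (IsPMF.pi fun _ => hps) fun x =>
      Ex_mono (IsPMF.pi (p := fun i => c (w i) (x i)) fun _ => hck _ _) fun y => ind_not_and _ _
  · rw [Real.exp_neg]
    field_simp
    norm_num

lemma achiev {m : ℕ} {pW : Fin m → ℝ} {k : Fin m → X1 → ℝ}
    (hch1 : IsKernel ch1) (hch2 : IsKernel ch2) (hc1 : Cond1 ch2) (hc2 : Cond2 ch2 pstar)
    (hpU1 : IsPMF pU1) (hpU2 : IsPMF pU2) (hpW : IsPMF pW) (hk : ∀ w, IsPMF (k w))
    (a1 : ent pU1 id < mi (jointZ m pW k pstar ch1 ch2) (fun ω => ω.2.1) (fun ω => ω.2.2.2.1))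
    (a2 : ent pU2 id < mi (jointZ m pW k pstar ch1 ch2) (fun ω => (ω.1, ω.2.2.1))
          (fun ω => ω.2.2.2.2))
    (a3 : condEnt pU1 id h1 + ent pU2 id <
          mi (jointZ m pW k pstar ch1 ch2) (fun ω => (ω.1, ω.2.2.1)) (fun ω => ω.2.2.2.2) +
          cmi (jointZ m pW k pstar ch1 ch2) (fun ω => ω.2.1) (fun ω => ω.2.2.2.1)
            (fun ω => ω.1)) : ReliableZDet ch1 ch2 pU1 h1 pU2 := by
  obtain ⟨x0⟩ := hc2.1.nonempty
  obtain ⟨ρ, hρ, hd⟩ := src_dis hpU1 h1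
  rw [mi1_eq hc2.1 hk hch1 hch2, src_id, div_lt_div_iff_of_pos_right log2_pos] at a1
  rw [mi2_cond hch1 hch2 hc1 hc2 hpW hk x0, src_id, div_lt_div_iff_of_pos_right log2_pos] at a2
  rw [mi2_cond hch1 hch2 hc1 hc2 hpW hk x0, src_id, src_condEnt hpU1 h1 hρ hd,
      cmi_eq hpW hc2.1 hk hch1 hch2, ← add_div, ← add_div,
      div_lt_div_iff_of_pos_right log2_pos] at a3
  rw [outp_assoc] at a1
  set c : Fin m → X2 → Y2 → ℝ := fun w α => outp (k w) fun x => ch2 (x, α) with hc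
  have hck : ∀ w, IsKernel (c w) := fun w α => (hk w).out fun x => hch2 _
  set τ := tau ch2 * Real.log 2 with hτ
  set HV := ∑ v, pr pU1 h1 v * Hn (ρ v) with hHV
  set HX := ∑ x, outp pW k x * Hn (ch1 x) with hHX
  set HQ := ∑ w, pW w * Hn (outp (k w) ch1) with hHQ
  set HC := ∑ w, pW w * Hn (outp (k w) fun x => ch2 (x, x0)) with hHC
  set HY := Hn (outp pW fun w => outp (k w) ch1) with hHY
  -- single-letter identities
  have i1 : (Ex pW fun w => Ex (k w) fun x => Hn (ch1 x)) = HX := by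
    rw [← Ex_outp]; rfl
  have i2 : (Ex pW fun w => Hn (outp (k w) ch1)) = HQ := rfl
  have i3 : (Ex pW fun w => Ex pstar fun α => Hn (c w α)) = HC := by
    refine Ex_congr fun w => ?_
    have : ∀ α, Hn (c w α) = Hn (outp (k w) fun x => ch2 (x, x0)) := fun α => cond1_1 hc1 (hk w) α x0
    simp only [this]
    exact Ex_const hc2.1 _
  have i4 : (Ex pW fun w => Hn (outp pstar (c w))) = τ := by
    have : ∀ w, Hn (outp pstar (c w)) = τ := fun w => cond2_H hc2 (hk w)
    simp only [this]
    exact Ex_const hpW _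
  have i5 : Hn (outp pW fun w => outp pstar (c w)) = τ := by
    rw [hc, out_mix]
    exact cond2_H hc2 (hpW.out hk)
  obtain ⟨R, hR0, hR1, hR2⟩ : ∃ R : ℝ, 0 ≤ R ∧ HV - (HQ - HX) < R ∧ R < τ - HC - Hn pU2 := by
    have hm1 := le_max_left 0 (HV - (HQ - HX))
    have hm2 := le_max_right 0 (HV - (HQ - HX))
    have hm3 : max 0 (HV - (HQ - HX)) < τ - HC - Hn pU2 := max_lt (by linarith) (by linarith)
    exact ⟨(max 0 (HV - (HQ - HX)) + (τ - HC - Hn pU2)) / 2, by linarith, by linarith, by linarith⟩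
  obtain ⟨δ, hδ0, hδ1, hδ2, hδ3⟩ : ∃ δ : ℝ, 0 < δ ∧ δ < HY - HX - Hn pU1 ∧
      δ < R - (HV - (HQ - HX)) ∧ δ < τ - HC - Hn pU2 - R := by
    obtain ⟨δ, h0, h⟩ := _root_.exists_between (a₁ := (0 : ℝ)) (a₂ := min (HY - HX - Hn pU1)
      (min (R - (HV - (HQ - HX))) (τ - HC - Hn pU2 - R)))
      (lt_min (by linarith) (lt_min (by linarith) (by linarith)))
    rw [lt_min_iff, lt_min_iff] at h
    exact ⟨δ, h0, h.1, h.2.1, h.2.2⟩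
  obtain ⟨t1, p1, q1, b1⟩ := chernQ hpU1 hpW hk (s := fun _ => ch1) (fun _ => hch1)
    (fun u => Real.log (pU1 u)) pU1 (fun a ha => (Real.exp_log ha).le) (δ := δ) (by
      rw [Ex_log, i1]; linarith)
  obtain ⟨t2, p2, q2, b2⟩ := chernW hpU1 hpW hk (s := fun _ => ch1) (fun _ => hch1)
    (fun u => R + Real.log (ρ (h1 u) u)) (fun u => Real.exp R * ρ (h1 u) u) (fun a ha => by
      rw [Real.exp_add, Real.exp_log (src_pos hpU1 hρ hd a ha)]) (δ := δ) (by
      rw [Ex_add, Ex_const hpU1, src_Ex hd, i1, i2]; linarith)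
  obtain ⟨t3, p3, q3, b3⟩ := chernQ hpU2 hpW (r := fun _ => pstar) (fun _ => hc2.1) (s := c) hck
    (fun u => -R + Real.log (pU2 u)) (fun u => Real.exp (-R) * pU2 u) (fun a ha => by
      rw [Real.exp_add, Real.exp_log ha]) (δ := δ) (by
      rw [Ex_add, Ex_const hpU2, Ex_log, i3, i5]; linarith)
  obtain ⟨t4, p4, q4, b4⟩ := chernW hpU2 hpW (r := fun _ => pstar) (fun _ => hc2.1) (s := c) hck
    (fun u => Real.log (pU2 u)) pU2 (fun a ha => (Real.exp_log ha).le) (δ := δ) (by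
      rw [Ex_log, i3, i4]; linarith)
  have key := fun n : ℕ => achiev_n (h1 := h1) hch1 hch2 hc2.1 hpU1 hpU2 hρ hpW hk
    (fun w α => rfl) hR0 n (b1 n) (b2 n) (b3 n) (b4 n)
  choose f1 f2 g1 g2 hf using key
  refine ⟨f1, f2, g1, g2, squeeze_zero (fun n => perr_nonneg hch1 hch2 hpU1 hpU2 n _ _ _ _) hf ?_⟩
  have T1 := tendsto_pow_atTop_nhds_zero_of_lt_one p1 q1
  have T2 := tendsto_pow_atTop_nhds_zero_of_lt_one p2 q2
  have T3 := tendsto_pow_atTop_nhds_zero_of_lt_one p3 q3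
  have T4 := tendsto_pow_atTop_nhds_zero_of_lt_one p4 q4
  have T5 : Tendsto (fun n : ℕ => Real.exp (-(n * δ))) atTop (nhds 0) :=
    Real.tendsto_exp_neg_atTop_nhds_zero.comp
      (tendsto_natCast_atTop_atTop.atTop_mul_const hδ0)
  have := ((T1.add T2).add (T3.add T4)).add (T5.const_mul 8)
  simpa using this

theorem main6 (hch1 : IsKernel ch1) (hch2 : IsKernel ch2)
    (hc1 : Cond1 ch2) (hc2 : Cond2 ch2 pstar)
    (hpU1 : IsPMF pU1) (hpU2 : IsPMF pU2) :
    ((∃ (m : ℕ) (pW : Fin m → ℝ) (k : Fin m → X1 → ℝ),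
        IsPMF pW ∧ (∀ w, IsPMF (k w)) ∧
        (let p := jointZ m pW k pstar ch1 ch2
         let vW := fun (ω : Fin m × X1 × X2 × Y1 × Y2) => ω.1
         let vX1 := fun (ω : Fin m × X1 × X2 × Y1 × Y2) => ω.2.1
         let vX2 := fun (ω : Fin m × X1 × X2 × Y1 × Y2) => ω.2.2.1
         let vY1 := fun (ω : Fin m × X1 × X2 × Y1 × Y2) => ω.2.2.2.1
         let vY2 := fun (ω : Fin m × X1 × X2 × Y1 × Y2) => ω.2.2.2.2
         ent pU1 id < mi p vX1 vY1 ∧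
         ent pU2 id < mi p (fun ω => (vW ω, vX2 ω)) vY2 ∧
         condEnt pU1 id h1 + ent pU2 id <
           mi p (fun ω => (vW ω, vX2 ω)) vY2 + cmi p vX1 vY1 vW)) →
      ReliableZDet ch1 ch2 pU1 h1 pU2) ∧
    (ReliableZDet ch1 ch2 pU1 h1 pU2 →
      ∃ (m : ℕ) (pW : Fin m → ℝ) (k : Fin m → X1 → ℝ),
        IsPMF pW ∧ (∀ w, IsPMF (k w)) ∧
        (let p := jointZ m pW k pstar ch1 ch2
         let vW := fun (ω : Fin m × X1 × X2 × Y1 × Y2) => ω.1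
         let vX1 := fun (ω : Fin m × X1 × X2 × Y1 × Y2) => ω.2.1
         let vX2 := fun (ω : Fin m × X1 × X2 × Y1 × Y2) => ω.2.2.1
         let vY1 := fun (ω : Fin m × X1 × X2 × Y1 × Y2) => ω.2.2.2.1
         let vY2 := fun (ω : Fin m × X1 × X2 × Y1 × Y2) => ω.2.2.2.2
         ent pU1 id ≤ mi p vX1 vY1 ∧
         ent pU2 id ≤ mi p (fun ω => (vW ω, vX2 ω)) vY2 ∧
         condEnt pU1 id h1 + ent pU2 id ≤
           mi p (fun ω => (vW ω, vX2 ω)) vY2 + cmi p vX1 vY1 vW)) := by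
  constructor
  · rintro ⟨m, pW, k, hpW, hk, a1, a2, a3⟩
    exact achiev hch1 hch2 hc1 hc2 hpU1 hpU2 hpW hk a1 a2 a3
  · intro hrel
    exact converse hch1 hch2 hc1 hc2 hpU1 hpU2 hrel

end

end PieceP5f

theorem stmt6 (ch1 : X1 → Y1 → ℝ) (ch2 : X1 × X2 → Y2 → ℝ) (pstar : X2 → ℝ)
    (pU1 : U1 → ℝ) (h1 : U1 → V1) (pU2 : U2 → ℝ)
    (hch1 : IsKernel ch1) (hch2 : IsKernel ch2)
    (hc1 : Cond1 ch2) (hc2 : Cond2 ch2 pstar)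
    (hpU1 : IsPMF pU1) (hpU2 : IsPMF pU2) :
    ((∃ (m : ℕ) (pW : Fin m → ℝ) (k : Fin m → X1 → ℝ),
        IsPMF pW ∧ (∀ w, IsPMF (k w)) ∧
        (let p := jointZ m pW k pstar ch1 ch2
         let vW := fun (ω : Fin m × X1 × X2 × Y1 × Y2) => ω.1
         let vX1 := fun (ω : Fin m × X1 × X2 × Y1 × Y2) => ω.2.1
         let vX2 := fun (ω : Fin m × X1 × X2 × Y1 × Y2) => ω.2.2.1
         let vY1 := fun (ω : Fin m × X1 × X2 × Y1 × Y2) => ω.2.2.2.1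
         let vY2 := fun (ω : Fin m × X1 × X2 × Y1 × Y2) => ω.2.2.2.2
         ent pU1 id < mi p vX1 vY1 ∧
         ent pU2 id < mi p (fun ω => (vW ω, vX2 ω)) vY2 ∧
         condEnt pU1 id h1 + ent pU2 id <
           mi p (fun ω => (vW ω, vX2 ω)) vY2 + cmi p vX1 vY1 vW)) →
      ReliableZDet ch1 ch2 pU1 h1 pU2) ∧
    (ReliableZDet ch1 ch2 pU1 h1 pU2 →
      ∃ (m : ℕ) (pW : Fin m → ℝ) (k : Fin m → X1 → ℝ),
        IsPMF pW ∧ (∀ w, IsPMF (k w)) ∧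
        (let p := jointZ m pW k pstar ch1 ch2
         let vW := fun (ω : Fin m × X1 × X2 × Y1 × Y2) => ω.1
         let vX1 := fun (ω : Fin m × X1 × X2 × Y1 × Y2) => ω.2.1
         let vX2 := fun (ω : Fin m × X1 × X2 × Y1 × Y2) => ω.2.2.1
         let vY1 := fun (ω : Fin m × X1 × X2 × Y1 × Y2) => ω.2.2.2.1
         let vY2 := fun (ω : Fin m × X1 × X2 × Y1 × Y2) => ω.2.2.2.2
         ent pU1 id ≤ mi p vX1 vY1 ∧
         ent pU2 id ≤ mi p (fun ω => (vW ω, vX2 ω)) vY2 ∧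
         condEnt pU1 id h1 + ent pU2 id ≤
           mi p (fun ω => (vW ω, vX2 ω)) vY2 + cmi p vX1 vY1 vW)) := by
  exact main6 hch1 hch2 hc1 hc2 hpU1 hpU2

end Stmt6

end Paper
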